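/- Let α be a real number with |α − 1/3| ≤ 2·10⁻⁶. Then liminf_{N→∞} #{p ≤ N : p prime and L(α,p) ≥ 0} / #{p ≤ N : p prime} ≥ 1/2; that is, the inequality L(α,p) ≥ 0 holds for a set of primes of lower density at least 1/2. -/

import Mathlib

open scoped Classical

/-- `L α p = ∑_{n=1}^{⌊α p⌋} (n/p)`, the sum of the first `⌊α p⌋` values of
the Legendre symbol modulo `p` (defined to be `0` when `p` is not prime). -/
noncomputable def legendreSum (α : ℝ) (p : ℕ) : ℤ :=
  if h : p.Prime then
    haveI : Fact p.Prime := ⟨h⟩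
    ∑ n ∈ Finset.Icc 1 ⌊α * (p : ℝ)⌋₊, legendreSym p (n : ℤ)
  else 0

/-!
By the quadratic Gauss sum, `π L(α, p) / √p` is formally `∑ s_n(α) / n * (n/p)`, where `s_n` is
`sin(2πnα)` for `p ≡ 1 (mod 4)` and `1 - cos(2πnα)` for `p ≡ 3 (mod 4)`. At `α = 1/3` the numerator
`s_n` depends only on `n` modulo `3` and satisfies `s_{2n} = ± s_n`, so after multiplication by the
Euler factor at `2` only the `n` prime to `6` contribute: the squares among them give a fixed
positive main term `c`, the non-squares a linear form in Legendre symbols that must be close to `-c`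
when `L(α, p) < 0`. Its mean square over the primes is computed by Selberg's sieve together with the
Pólya–Vinogradov inequality, as are those of the tail of the series and of the difference between
`α` and `1/3`. By Chebyshev's inequality the primes with `L(α, p) < 0` number at most
`0.17 N / log N` in either class modulo `4`, in total less than half of the primes up to `N`,
because `0.34 < (log 2) / 2`.
-/

namespace LegendreSum

/-! ### The Pólya–Vinogradov inequality -/

section PolyaVinogradov

open Finset ZMod

/-- The right-hand side of the Pólya–Vinogradov inequality for an arbitrary, possibly imprimitive,
character modulo `q`; imprimitivity is what costs the number of divisors of `q`. -/
noncomputable def polyaVinogradovBound (q : ℕ) : ℝ := √q * (#q.divisors * (1 + Real.log q))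

lemma polyaVinogradovBound_nonneg (q : ℕ) : 0 ≤ polyaVinogradovBound q := by
  have := Real.log_natCast_nonneg q
  unfold polyaVinogradovBound
  positivity

lemma sum_Icc_one_div_le_one_add_log (n : ℕ) : ∑ k ∈ Icc 1 n, (1 : ℝ) / k ≤ 1 + Real.log n := by
  have h := harmonic_le_one_add_log n
  rw [harmonic_eq_sum_Icc] at h
  push_cast at h
  simpa only [one_div] using h

lemma sum_Ico_sqrt_gcd_div_le {q : ℕ} (hq : 0 < q) :
    ∑ k ∈ Ico 1 q, √(Nat.gcd k q) / k ≤ #q.divisors * (1 + Real.log q) := by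
  have gcd_term_le : ∀ k ∈ Ico 1 q,
      √(Nat.gcd k q) / k ≤ ∑ g ∈ q.divisors, if g ∣ k then √g / k else 0 := by
    intro k _
    have hg : Nat.gcd k q ∈ q.divisors := Nat.mem_divisors.mpr ⟨Nat.gcd_dvd_right _ _, hq.ne'⟩
    refine le_trans ?_ (single_le_sum (f := fun g ↦ if g ∣ k then √(g : ℝ) / k else 0) ?_ hg)
    · simp [Nat.gcd_dvd_left]
    · intro g _
      split_ifs <;> positivity
  have multiples_le : ∀ g ∈ q.divisors,
      (∑ k ∈ Ico 1 q, if g ∣ k then √(g : ℝ) / k else 0) ≤ 1 + Real.log q := by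
    intro g hg
    have hg0 : 0 < g := Nat.pos_of_mem_divisors hg
    calc (∑ k ∈ Ico 1 q, if g ∣ k then √(g : ℝ) / k else 0)
        = ∑ k ∈ Ico 1 q with g ∣ k, √(g : ℝ) / k := (sum_filter _ _).symm
      _ ≤ ∑ k ∈ (Icc 1 q).image (g * ·), √(g : ℝ) / k := by
          refine sum_le_sum_of_subset_of_nonneg ?_ fun _ _ _ ↦ by positivity
          intro k hk
          obtain ⟨hk, b, rfl⟩ := mem_filter.mp hk
          obtain ⟨hb, hbq⟩ := mem_Ico.mp hk
          exact mem_image.mpr ⟨b, mem_Icc.mpr ⟨Nat.pos_of_mul_pos_left hb, by nlinarith⟩, rfl⟩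
      _ = ∑ b ∈ Icc 1 q, √(g : ℝ) / (g * b : ℕ) :=
          sum_image fun _ _ _ _ h ↦ Nat.eq_of_mul_eq_mul_left hg0 h
      _ ≤ ∑ b ∈ Icc 1 q, (1 : ℝ) / b := by
          refine sum_le_sum fun b hb ↦ ?_
          have hb0 : (0 : ℝ) < b := mod_cast (mem_Icc.mp hb).1
          have hg1 : (1 : ℝ) ≤ g := mod_cast hg0
          have hsqrt : √(g : ℝ) ≤ g := Real.sqrt_le_iff.mpr ⟨by positivity, by nlinarith⟩
          push_cast
          rw [div_le_div_iff₀ (by positivity) hb0]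
          nlinarith
      _ ≤ 1 + Real.log q := sum_Icc_one_div_le_one_add_log q
  calc ∑ k ∈ Ico 1 q, √(Nat.gcd k q) / k
      ≤ ∑ k ∈ Ico 1 q, ∑ g ∈ q.divisors, (if g ∣ k then √g / k else 0) := sum_le_sum gcd_term_le
    _ = ∑ g ∈ q.divisors, ∑ k ∈ Ico 1 q, (if g ∣ k then √g / k else 0) := sum_comm
    _ ≤ ∑ _g ∈ q.divisors, (1 + Real.log q) := sum_le_sum multiples_le
    _ = #q.divisors * (1 + Real.log q) := by rw [sum_const, nsmul_eq_mul]

lemma two_mul_min_le_sin_pi_mul {t : ℝ} (h0 : 0 ≤ t) (h1 : t ≤ 1) :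
    2 * min t (1 - t) ≤ Real.sin (Real.pi * t) := by
  have left_half : ∀ s : ℝ, 0 ≤ s → s ≤ 1 / 2 → 2 * s ≤ Real.sin (Real.pi * s) := by
    intro s hs0 hs
    have h := Real.mul_le_sin (x := Real.pi * s) (by positivity) (by nlinarith [Real.pi_pos])
    rwa [← mul_assoc, div_mul_cancel₀ _ Real.pi_ne_zero] at h
  rcases le_total t (1 - t) with h | h
  · rw [min_eq_left h]
    exact left_half t h0 (by linarith)
  · rw [min_eq_right h, ← Real.sin_pi_sub, show Real.pi - Real.pi * t = Real.pi * (1 - t) by ring]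
    exact left_half (1 - t) (by linarith) (by linarith)

lemma norm_geom_sum_le {z : ℂ} (hz : ‖z‖ = 1) (hz1 : z ≠ 1) (n : ℕ) :
    ‖∑ m ∈ range n, z ^ m‖ ≤ 2 / ‖z - 1‖ := by
  rw [geom_sum_eq hz1, norm_div]
  gcongr
  calc ‖z ^ n - 1‖ ≤ ‖z ^ n‖ + ‖(1 : ℂ)‖ := norm_sub_le _ _
    _ = 2 := by rw [norm_pow, hz]; norm_num

variable {q : ℕ} [NeZero q]

lemma stdAddChar_natCast (n : ℕ) :
    stdAddChar (n : ZMod q) = Complex.exp (2 * Real.pi * Complex.I * n / q) := by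
  simpa using ZMod.stdAddChar_coe (N := q) n

lemma norm_stdAddChar_natCast_sub_one {k : ℕ} (hk : k ≤ q) :
    ‖stdAddChar (k : ZMod q) - 1‖ = 2 * Real.sin (Real.pi * (k / q)) := by
  have hq : (0 : ℝ) < q := mod_cast NeZero.pos q
  have hexp : stdAddChar (k : ZMod q)
      = Complex.exp (Complex.I * ((2 * (Real.pi * (k / q)) : ℝ) : ℂ)) := by
    rw [stdAddChar_natCast]
    push_cast
    ring_nf
  have hle : (k : ℝ) / q ≤ 1 := div_le_one_of_le₀ (mod_cast hk) hq.le
  have hsin : 0 ≤ Real.sin (Real.pi * (k / q)) :=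
    Real.sin_nonneg_of_nonneg_of_le_pi (by positivity) (by nlinarith [Real.pi_pos])
  rw [hexp, Complex.norm_exp_I_mul_ofReal_sub_one, mul_div_cancel_left₀ _ two_ne_zero,
    Real.norm_of_nonneg (by positivity)]

lemma norm_sum_range_stdAddChar_mul_le {k : ℕ} (hk0 : 0 < k) (hkq : k < q) (x : ℕ) :
    ‖∑ m ∈ range x, stdAddChar (k * m : ZMod q)‖ ≤ q / 2 * (1 / k + 1 / (q - k : ℕ)) := by
  have hq : (0 : ℝ) < q := mod_cast NeZero.pos q
  have hk : (0 : ℝ) < k := mod_cast hk0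
  have hcast : ((q - k : ℕ) : ℝ) = q - k := Nat.cast_sub hkq.le
  have hqk : (0 : ℝ) < q - k := sub_pos.mpr (mod_cast hkq)
  set μ : ℝ := min (k : ℝ) (q - k) with hμ
  have hμ0 : 0 < μ := lt_min hk hqk
  have hsub : 4 * μ / q ≤ ‖stdAddChar (k : ZMod q) - 1‖ := by
    have h := two_mul_min_le_sin_pi_mul (t := k / q) (by positivity)
      (div_le_one_of_le₀ (mod_cast hkq.le) hq.le)
    rw [one_sub_div hq.ne', min_div_div_right hq.le, ← hμ] at h
    rw [norm_stdAddChar_natCast_sub_one hkq.le]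
    linear_combination 2 * h
  have hne : stdAddChar (k : ZMod q) ≠ 1 := fun h ↦ by
    rw [h, sub_self, norm_zero] at hsub
    exact absurd hsub (not_le.mpr (by positivity))
  have hpow : ∀ m : ℕ, stdAddChar (k * m : ZMod q) = stdAddChar (k : ZMod q) ^ m := fun m ↦ by
    rw [mul_comm, ← nsmul_eq_mul, AddChar.map_nsmul_eq_pow]
  calc ‖∑ m ∈ range x, stdAddChar (k * m : ZMod q)‖
      = ‖∑ m ∈ range x, stdAddChar (k : ZMod q) ^ m‖ := by simp only [hpow]
    _ ≤ 2 / ‖stdAddChar (k : ZMod q) - 1‖ :=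
        norm_geom_sum_le (AddChar.norm_apply _ _) hne x
    _ ≤ 2 / (4 * μ / q) := by gcongr
    _ = q / 2 * (1 / μ) := by field_simp; norm_num
    _ ≤ q / 2 * (1 / k + 1 / (q - k : ℕ)) := by
        gcongr
        rw [hcast, hμ]
        rcases min_choice (k : ℝ) (q - k) with h | h <;> rw [h]
        · exact le_add_of_nonneg_right (by positivity)
        · exact le_add_of_nonneg_left (by positivity)

lemma sum_eq_sum_range_natCast {M : Type*} [AddCommMonoid M] (f : ZMod q → M) :
    ∑ a, f a = ∑ k ∈ range q, f k := by
  refine sum_bij' (fun a _ ↦ a.val) (fun k _ ↦ (k : ZMod q)) ?_ ?_ ?_ ?_ ?_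
  · exact fun a _ ↦ mem_range.mpr (ZMod.val_lt a)
  · exact fun _ _ ↦ mem_univ _
  · exact fun a _ ↦ ZMod.natCast_zmod_val a
  · exact fun k hk ↦ ZMod.val_cast_of_lt (mem_range.mp hk)
  · exact fun a _ ↦ by rw [ZMod.natCast_zmod_val]

lemma card_filter_mul_eq_zero_le (a : ZMod q) : #{t : ZMod q | t * a = 0} ≤ Nat.gcd a.val q := by
  have hgcd : 0 < Nat.gcd a.val q := Nat.gcd_pos_of_pos_right _ (NeZero.pos q)
  refine le_trans (card_le_card fun t ht ↦ ?_) (IsAddCyclic.card_nsmul_eq_zero_le hgcd)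
  rw [mem_filter_univ] at ht ⊢
  have bezout : ((Nat.gcd a.val q : ℤ) : ZMod q) * t = 0 := by
    rw [Nat.gcd_eq_gcd_ab]
    push_cast
    rw [ZMod.natCast_zmod_val, CharP.cast_eq_zero, zero_mul, add_zero, mul_right_comm, mul_comm a,
      ht, zero_mul]
  rw [nsmul_eq_mul]
  exact_mod_cast bezout

lemma card_filter_isUnit : #{x : ZMod q | IsUnit x} = q.totient := by
  rw [← ZMod.card_units_eq_totient, ← card_univ, ← card_map ⟨_, Units.val_injective⟩]
  congr 1
  ext x
  exact mem_filter_univ x |>.trans (by simp [IsUnit])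

lemma sum_norm_dft_mul_sq (Φ : ZMod q → ℂ) (a : ZMod q) :
    ((∑ x, ‖𝓕 Φ (x * a)‖ ^ 2 : ℝ) : ℂ) =
      ∑ j, ∑ k, Φ j * (starRingEnd ℂ) (Φ k) * if (k - j) * a = 0 then (q : ℂ) else 0 := by
  have expand : ∀ x : ZMod q, (‖𝓕 Φ (x * a)‖ : ℂ) ^ 2 =
      ∑ j, ∑ k, Φ j * (starRingEnd ℂ) (Φ k) * stdAddChar (x * ((k - j) * a)) := by
    intro x
    rw [← Complex.mul_conj', dft_apply, map_sum, sum_mul_sum]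
    refine sum_congr rfl fun j _ ↦ sum_congr rfl fun k _ ↦ ?_
    rw [smul_eq_mul, smul_eq_mul, map_mul (starRingEnd ℂ), ← AddChar.map_neg_eq_conj, neg_neg,
      show x * ((k - j) * a) = -(j * (x * a)) + k * (x * a) by ring, AddChar.map_add_eq_mul]
    ring
  push_cast
  simp_rw [expand]
  rw [sum_comm]
  refine sum_congr rfl fun j _ ↦ ?_
  rw [sum_comm]
  refine sum_congr rfl fun k _ ↦ ?_
  rw [← mul_sum, AddChar.sum_mulShift _ (isPrimitive_stdAddChar q), ZMod.card, Nat.cast_ite,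
    Nat.cast_zero]

lemma sum_norm_dft_mul_sq_le (χ : DirichletCharacter ℂ q) (a : ZMod q) :
    ∑ x, ‖𝓕 χ (x * a)‖ ^ 2 ≤ q.totient * (q * Nat.gcd a.val q) := by
  have hχ : ∀ j, ‖χ j‖ ≤ if IsUnit j then (1 : ℝ) else 0 := fun j ↦ by
    split_ifs with hj
    · exact DirichletCharacter.norm_le_one χ j
    · rw [MulChar.map_nonunit χ hj, norm_zero]
  have term_le : ∀ j k : ZMod q,
      ‖χ j * (starRingEnd ℂ) (χ k) * if (k - j) * a = 0 then (q : ℂ) else 0‖ ≤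
        (if IsUnit j then 1 else 0) * if (k - j) * a = 0 then (q : ℝ) else 0 := by
    intro j k
    rw [norm_mul, norm_mul, RCLike.norm_conj, apply_ite norm, norm_zero, Complex.norm_natCast]
    gcongr
    exact (mul_le_of_le_one_right (norm_nonneg _) (DirichletCharacter.norm_le_one χ k)).trans (hχ j)
  have inner_le : ∀ j : ZMod q,
      (∑ k : ZMod q, if (k - j) * a = 0 then (q : ℝ) else 0) ≤ q * Nat.gcd a.val q := by
    intro j
    rw [← Equiv.sum_comp (Equiv.addRight j)]
    simp only [Equiv.coe_addRight, add_sub_cancel_right]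
    rw [← sum_filter, sum_const, nsmul_eq_mul, mul_comm]
    gcongr
    exact card_filter_mul_eq_zero_le a
  calc ∑ x, ‖𝓕 χ (x * a)‖ ^ 2 = ‖((∑ x, ‖𝓕 χ (x * a)‖ ^ 2 : ℝ) : ℂ)‖ := by
        rw [Complex.norm_real, Real.norm_of_nonneg (by positivity)]
    _ ≤ ∑ j : ZMod q, ∑ k, (if IsUnit j then 1 else 0) *
          if (k - j) * a = 0 then (q : ℝ) else 0 := by
        rw [sum_norm_dft_mul_sq]
        exact (norm_sum_le _ _).trans <| sum_le_sum fun j _ ↦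
          (norm_sum_le _ _).trans <| sum_le_sum fun k _ ↦ term_le j k
    _ ≤ ∑ j : ZMod q, (if IsUnit j then 1 else 0) * (q * Nat.gcd a.val q : ℝ) := by
        gcongr with j
        rw [← mul_sum]
        gcongr
        exact inner_le j
    _ = q.totient * (q * Nat.gcd a.val q) := by rw [← sum_mul, sum_boole, card_filter_isUnit]

lemma norm_dft_unit_mul (χ : DirichletCharacter ℂ q) (u : (ZMod q)ˣ) (a : ZMod q) :
    ‖𝓕 χ (u * a)‖ = ‖𝓕 χ a‖ := by
  have h : 𝓕 (fun j ↦ χ (u⁻¹.val * j)) a = 𝓕 χ (u * a) := by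
    rw [dft_comp_unitMul, inv_inv]
  rw [← h]
  simp only [map_mul]
  rw [dft_const_mul, norm_mul, DirichletCharacter.unit_norm_eq_one, one_mul]

-- Averaging over the units: all `‖𝓕 χ (u * a)‖` agree, so each is at most the mean square.
lemma norm_dft_le (χ : DirichletCharacter ℂ q) (a : ZMod q) :
    ‖𝓕 χ a‖ ≤ √(q * Nat.gcd a.val q) := by
  apply Real.le_sqrt_of_sq_le
  have hφ : (0 : ℝ) < q.totient := mod_cast Nat.totient_pos.mpr (NeZero.pos q)
  refine le_of_mul_le_mul_left ?_ hφ
  calc (q.totient : ℝ) * ‖𝓕 χ a‖ ^ 2 = ∑ u : (ZMod q)ˣ, ‖𝓕 χ (u * a)‖ ^ 2 := by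
        simp only [norm_dft_unit_mul, sum_const, card_univ, ZMod.card_units_eq_totient,
          nsmul_eq_mul]
    _ = ∑ x ∈ univ.map ⟨((↑) : (ZMod q)ˣ → ZMod q), Units.val_injective⟩, ‖𝓕 χ (x * a)‖ ^ 2 := by
        rw [sum_map, Function.Embedding.coeFn_mk]
    _ ≤ ∑ x, ‖𝓕 χ (x * a)‖ ^ 2 :=
        sum_le_sum_of_subset_of_nonneg (subset_univ _) fun _ _ _ ↦ by positivity
    _ ≤ q.totient * (q * Nat.gcd a.val q) := sum_norm_dft_mul_sq_le χ a

lemma mul_sum_range_character_eq {χ : DirichletCharacter ℂ q} (hχ : χ ≠ 1) (x : ℕ) :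
    q * ∑ m ∈ range x, χ m =
      ∑ k ∈ Ico 1 q, 𝓕 χ (k : ZMod q) * ∑ m ∈ range x, stdAddChar (k * m : ZMod q) := by
  have inversion : ∀ m : ZMod q, q * χ m = ∑ k : ZMod q, 𝓕 χ k * stdAddChar (k * m) := fun m ↦ by
    have h := congrFun (dft_dft (N := q) χ) (-m)
    rw [neg_neg, smul_eq_mul, dft_apply] at h
    simp only [mul_neg, neg_neg, smul_eq_mul] at h
    simp only [← h, mul_comm]
  have dft_zero : 𝓕 χ (0 : ZMod q) = 0 := by
    rw [dft_apply_zero, MulChar.sum_eq_zero_of_ne_one hχ]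
  simp_rw [mul_sum, inversion]
  rw [sum_comm, sum_eq_sum_range_natCast, range_eq_Ico q, sum_eq_sum_Ico_succ_bot (NeZero.pos q)]
  simp only [Nat.cast_zero, dft_zero, zero_mul, sum_const_zero, zero_add]

theorem polya_vinogradov {χ : DirichletCharacter ℂ q} (hχ : χ ≠ 1) (x : ℕ) :
    ‖∑ m ∈ range x, χ m‖ ≤ polyaVinogradovBound q := by
  have hq : (0 : ℝ) < q := mod_cast NeZero.pos q
  have reflect : ∑ k ∈ Ico 1 q, √(Nat.gcd k q) / ((q - k : ℕ) : ℝ) =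
      ∑ k ∈ Ico 1 q, √(Nat.gcd k q) / k := by
    refine sum_bij' (fun k _ ↦ q - k) (fun k _ ↦ q - k) ?_ ?_ ?_ ?_ ?_ <;> intro k hk <;>
      rw [mem_Ico] at hk
    · exact mem_Ico.mpr (by omega)
    · exact mem_Ico.mpr (by omega)
    · omega
    · omega
    · rw [Nat.gcd_comm (q - k), Nat.gcd_self_sub_right hk.2.le, Nat.gcd_comm]
  refine le_of_mul_le_mul_left ?_ hq
  calc q * ‖∑ m ∈ range x, χ m‖ = ‖(q : ℂ) * ∑ m ∈ range x, χ m‖ := by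
        rw [norm_mul, Complex.norm_natCast]
    _ ≤ ∑ k ∈ Ico 1 q, √(q * Nat.gcd k q) * (q / 2 * (1 / k + 1 / (q - k : ℕ))) := by
        rw [mul_sum_range_character_eq hχ]
        refine norm_sum_le_of_le _ fun k hk ↦ ?_
        rw [mem_Ico] at hk
        have hdft := norm_dft_le χ (k : ZMod q)
        rw [ZMod.val_cast_of_lt hk.2] at hdft
        rw [norm_mul]
        gcongr
        exact norm_sum_range_stdAddChar_mul_le hk.1 hk.2 x
    _ = q * √q / 2 * ∑ k ∈ Ico 1 q, √(Nat.gcd k q) / k +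
          q * √q / 2 * ∑ k ∈ Ico 1 q, √(Nat.gcd k q) / ((q - k : ℕ) : ℝ) := by
        rw [mul_sum, mul_sum, ← sum_add_distrib]
        refine sum_congr rfl fun k _ ↦ ?_
        rw [Real.sqrt_mul hq.le]
        ring
    _ = q * (√q * ∑ k ∈ Ico 1 q, √(Nat.gcd k q) / k) := by rw [reflect]; ring
    _ ≤ q * polyaVinogradovBound q := by
        unfold polyaVinogradovBound
        gcongr
        exact sum_Ico_sqrt_gcd_div_le (NeZero.pos q)

end PolyaVinogradov

/-! ### Jacobi symbol sums in residue classes modulo `4` -/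

section JacobiSums

open Finset
open scoped NumberTheorySymbols

lemma odd_val_of_isUnit {q : ℕ} [NeZero q] (hq : 2 ∣ q) {a : ZMod q} (ha : IsUnit a) :
    Odd a.val := by
  have hcop : Nat.Coprime a.val q :=
    (ZMod.isUnit_iff_coprime _ _).mp (by rwa [ZMod.natCast_zmod_val])
  exact Nat.coprime_two_right.mp (hcop.coprime_dvd_right hq)

instance (n : ℤ) [NeZero n] : NeZero (4 * n.natAbs) :=
  ⟨by simp [NeZero.ne n]⟩

/-- The real character `m ↦ J(n | m)` on odd `m`, as a Dirichlet character modulo `4 * |n|`. -/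
noncomputable def jacobiCharacter (n : ℤ) [NeZero n] : DirichletCharacter ℂ (4 * n.natAbs) where
  toFun a := if IsUnit a then (J(n | a.val) : ℂ) else 0
  map_one' := by
    have : Fact (1 < 4 * n.natAbs) := ⟨by have := Int.natAbs_pos.mpr (NeZero.ne n); omega⟩
    simp [ZMod.val_one]
  map_mul' a b := by
    by_cases ha : IsUnit a <;> by_cases hb : IsUnit b
    · have hq : 2 ∣ 4 * n.natAbs := Dvd.dvd.mul_right (by norm_num) _
      have hodda := odd_val_of_isUnit hq ha
      have hoddb := odd_val_of_isUnit hq hb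
      rw [if_pos ha, if_pos hb, if_pos (ha.mul hb), ZMod.val_mul,
        ← jacobiSym.mod_right n (hodda.mul hoddb),
        jacobiSym.mul_right' _ hodda.pos.ne' hoddb.pos.ne']
      push_cast
      rfl
    all_goals simp [IsUnit.mul_iff, ha, hb]
  map_nonunit' _ ha := if_neg ha

lemma jacobiCharacter_natCast (n : ℤ) [NeZero n] (m : ℕ) :
    jacobiCharacter n m = if Odd m then (J(n | m) : ℂ) else 0 := by
  have hunit : IsUnit (m : ZMod (4 * n.natAbs)) ↔ Odd m ∧ m.Coprime n.natAbs := by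
    rw [ZMod.isUnit_iff_coprime, Nat.coprime_mul_iff_right, show 4 = 2 ^ 2 from rfl,
      Nat.coprime_pow_right_iff two_pos, Nat.coprime_two_right]
  change (if IsUnit (m : ZMod (4 * n.natAbs)) then _ else (0 : ℂ)) = _
  simp only [hunit, ZMod.val_natCast]
  by_cases hm : Odd m
  · rw [if_pos hm, ← jacobiSym.mod_right n hm]
    split_ifs with hcop
    · rfl
    · have hne : n.gcd m ≠ 1 := fun h ↦ hcop ⟨hm, Nat.coprime_comm.mp (by simpa [Int.gcd] using h)⟩
      rw [jacobiSym.eq_zero_iff.mpr ⟨hm.pos.ne', hne⟩, Int.cast_zero]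
  · rw [if_neg hm, if_neg fun h ↦ hm h.1]

lemma exists_jacobiSym_eq_neg_one_of_prime {ℓ : ℕ} (hℓ : ℓ.Prime) (h2 : ℓ ≠ 2) :
    ∃ a : ℕ, J(a | ℓ) = -1 := by
  have : Fact ℓ.Prime := ⟨hℓ⟩
  obtain ⟨a, ha⟩ := quadraticChar_exists_neg_one (F := ZMod ℓ) (by rwa [ZMod.ringChar_zmod_n])
  exact ⟨a.val, by rw [← jacobiSym.legendreSym.to_jacobiSym, legendreSym]; simpa using ha⟩

lemma exists_jacobiSym_prime_pow_mul_eq_neg_one {ℓ : ℕ} (hℓ : ℓ.Prime) (h2 : ℓ ≠ 2) {m : ℤ}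
    (hm : ¬ (ℓ : ℤ) ∣ m) {v : ℕ} (hv : Odd v) : ∃ b : ℕ, Odd b ∧ J(ℓ ^ v * m | b) = -1 := by
  obtain ⟨a, ha⟩ := exists_jacobiSym_eq_neg_one_of_prime hℓ h2
  have hcop : Nat.Coprime (4 * m.natAbs) ℓ := by
    refine Nat.Coprime.mul_left ?_ ((hℓ.coprime_iff_not_dvd.mpr ?_).symm)
    · exact ((Nat.coprime_primes Nat.prime_two hℓ).mpr h2.symm).pow_left 2
    · rwa [← Int.natCast_dvd]
  obtain ⟨b, hb1, hba⟩ := Nat.chineseRemainder hcop 1 a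
  have hb4 : b % 4 = 1 := hb1.of_mul_right m.natAbs
  have hb : Odd b := Nat.odd_iff.mpr (by omega)
  have hJm : J(m | b) = 1 := by
    have hm0 : 0 < m.natAbs := Int.natAbs_pos.mpr fun h ↦ hm (h ▸ dvd_zero _)
    have hmod : b % (4 * m.natAbs) = 1 := Eq.trans hb1 (Nat.mod_eq_of_lt (by omega))
    rw [jacobiSym.mod_right _ hb, hmod, jacobiSym.one_right]
  have hJℓ : J(ℓ | b) = -1 := by
    rw [jacobiSym.quadratic_reciprocity_one_mod_four' (hℓ.odd_of_ne_two h2) hb4, ← ha]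
    exact jacobiSym.mod_left' (mod_cast hba)
  exact ⟨b, hb, by rw [jacobiSym.mul_left, jacobiSym.pow_left, hJm, hJℓ, hv.neg_one_pow, mul_one]⟩

lemma exists_jacobiSym_neg_sq_eq_neg_one {g : ℕ} (hg : 0 < g) :
    ∃ b : ℕ, Odd b ∧ J(-(g : ℤ) ^ 2 | b) = -1 := by
  have hb : Odd (4 * g - 1) := Nat.odd_iff.mpr (by omega)
  refine ⟨4 * g - 1, hb, ?_⟩
  have hcop : Nat.Coprime g (4 * g - 1) :=
    Nat.Coprime.coprime_dvd_left (Dvd.intro_left 4 rfl)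
      (Nat.coprime_self_sub_right (by omega) |>.mpr (Nat.coprime_one_right _))
  rw [jacobiSym.neg _ hb, jacobiSym.sq_one' (Int.isCoprime_iff_gcd_eq_one.mp hcop.isCoprime),
    ZMod.χ₄_nat_three_mod_four (by omega), mul_one]

lemma exists_jacobiSym_two_mul_sq_eq_neg_one {e : ℤ} (he : e = 1 ∨ e = -1) {g : ℕ} (hg : 0 < g) :
    ∃ b : ℕ, Odd b ∧ J(e * (2 * g ^ 2) | b) = -1 := by
  obtain ⟨i, k, hk, rfl⟩ := Nat.exists_eq_two_pow_mul_odd hg.ne'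
  have hb8 : (4 * k ^ 2 + 1) % 8 = 5 := by
    obtain ⟨c, rfl⟩ := hk
    ring_nf
    omega
  have hb : Odd (4 * k ^ 2 + 1) := Nat.odd_iff.mpr (by omega)
  have hcop : Nat.Coprime (2 ^ i * k) (4 * k ^ 2 + 1) := by
    refine Nat.Coprime.mul_left ((Nat.coprime_two_left.mpr hb).pow_left i) ?_
    rw [show 4 * k ^ 2 + 1 = 1 + k * (4 * k) by ring]
    exact (Nat.coprime_add_mul_left_right _ _ _).mpr (Nat.coprime_one_right k)
  have hJe : J(e | 4 * k ^ 2 + 1) = 1 := by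
    rcases he with rfl | rfl
    · exact jacobiSym.one_left _
    · rw [jacobiSym.at_neg_one hb, ZMod.χ₄_nat_one_mod_four (by omega)]
  refine ⟨4 * k ^ 2 + 1, hb, ?_⟩
  rw [jacobiSym.mul_left, jacobiSym.mul_left,
    jacobiSym.sq_one' (Int.isCoprime_iff_gcd_eq_one.mp hcop.isCoprime), hJe, jacobiSym.at_two hb,
    ZMod.χ₈_nat_eq_if_mod_eight, if_neg (by omega), if_neg (by omega), one_mul, mul_one]

lemma eq_one_or_two_of_squarefree {t : ℕ} (ht : Squarefree t)
    (h : ∀ ℓ : ℕ, ℓ.Prime → ℓ ∣ t → ℓ = 2) : t = 1 ∨ t = 2 := by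
  have hsub : t.primeFactors ⊆ {2} := fun ℓ hℓ ↦
    mem_singleton.mpr (h ℓ (Nat.prime_of_mem_primeFactors hℓ) (Nat.dvd_of_mem_primeFactors hℓ))
  rw [← Nat.prod_primeFactors_of_squarefree ht]
  rcases subset_singleton_iff.mp hsub with h0 | h2
  · simp [h0]
  · simp [h2]

theorem exists_jacobiSym_eq_neg_one {n : ℤ} (hn : ¬ IsSquare n) :
    ∃ b : ℕ, Odd b ∧ J(n | b) = -1 := by
  obtain ⟨e, he, hen⟩ : ∃ e : ℤ, (e = 1 ∨ e = -1) ∧ n = e * n.natAbs := by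
    rcases n.natAbs_eq with h | h
    · exact ⟨1, .inl rfl, by rwa [one_mul]⟩
    · exact ⟨-1, .inr rfl, by rwa [neg_one_mul]⟩
  obtain ⟨t, g, htg, ht⟩ := Nat.sq_mul_squarefree n.natAbs
  have hn0 : n.natAbs ≠ 0 := fun h ↦ hn (Int.natAbs_eq_zero.mp h ▸ IsSquare.zero)
  have hg : 0 < g := Nat.pos_of_ne_zero fun h ↦ hn0 (by rw [← htg, h]; ring)
  by_cases hodd : ∃ ℓ : ℕ, ℓ.Prime ∧ ℓ ∣ t ∧ ℓ ≠ 2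
  · obtain ⟨ℓ, hℓ, hℓt, hℓ2⟩ := hodd
    have hv : Odd (n.natAbs.factorization ℓ) := by
      have htℓ : t.factorization ℓ = 1 := le_antisymm (ht.natFactorization_le_one ℓ)
        ((hℓ.dvd_iff_one_le_factorization ht.ne_zero).mp hℓt)
      rw [← htg, Nat.factorization_mul (by positivity) ht.ne_zero, Nat.factorization_pow]
      simp [htℓ]
    have hm : ¬ (ℓ : ℤ) ∣ e * (n.natAbs / ℓ ^ n.natAbs.factorization ℓ : ℕ) := by
      have hunit : IsUnit e := Int.isUnit_iff.mpr he
      rw [hunit.dvd_mul_left, Int.natCast_dvd_natCast]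
      exact Nat.not_dvd_ordCompl hℓ hn0
    convert exists_jacobiSym_prime_pow_mul_eq_neg_one hℓ hℓ2 hm hv using 4
    rw [mul_left_comm, ← Nat.cast_pow, ← Nat.cast_mul, Nat.ordProj_mul_ordCompl_eq_self, ← hen]
  · push Not at hodd
    rw [← htg] at hen
    rcases eq_one_or_two_of_squarefree ht hodd with rfl | rfl
    · rcases he with rfl | rfl
      · exact absurd ⟨g, by rw [hen]; push_cast; ring⟩ hn
      · rw [show n = -(g : ℤ) ^ 2 by rw [hen]; push_cast; ring]
        exact exists_jacobiSym_neg_sq_eq_neg_one hg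
    · rw [show n = e * (2 * g ^ 2) by rw [hen]; push_cast; ring]
      exact exists_jacobiSym_two_mul_sq_eq_neg_one he hg

lemma jacobiCharacter_ne_one {n : ℤ} [NeZero n] (hn : ¬ IsSquare n) : jacobiCharacter n ≠ 1 := by
  obtain ⟨b, hb, hJ⟩ := exists_jacobiSym_eq_neg_one hn
  intro h
  have hval := jacobiCharacter_natCast n b
  rw [if_pos hb, hJ, h] at hval
  by_cases hu : IsUnit (b : ZMod (4 * n.natAbs))
  · rw [MulChar.one_apply hu] at hval
    norm_num at hval
  · rw [MulChar.map_nonunit _ hu] at hval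
    norm_num at hval

lemma abs_sum_odd_jacobiSym_le {n : ℤ} (hn : ¬ IsSquare n) (x : ℕ) :
    |∑ m ∈ range x with Odd m, (J(n | m) : ℝ)| ≤ polyaVinogradovBound (4 * n.natAbs) := by
  have : NeZero n := ⟨fun h ↦ hn (h ▸ IsSquare.zero)⟩
  calc |∑ m ∈ range x with Odd m, (J(n | m) : ℝ)|
      = ‖((∑ m ∈ range x with Odd m, (J(n | m) : ℝ) : ℝ) : ℂ)‖ := (Complex.norm_real _).symm
    _ = ‖∑ m ∈ range x, jacobiCharacter n m‖ := by
        simp only [jacobiCharacter_natCast, sum_filter, Complex.ofReal_sum,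
          apply_ite Complex.ofReal, Complex.ofReal_intCast, Complex.ofReal_zero]
    _ ≤ polyaVinogradovBound (4 * n.natAbs) := polya_vinogradov (jacobiCharacter_ne_one hn) x

lemma ite_mod_four_eq {r : ℕ} (hr : r = 1 ∨ r = 3) (m : ℕ) :
    (if m % 4 = r then (1 : ℝ) else 0) =
      if Odd m then (1 + (if r = 1 then (1 : ℝ) else -1) * J(-1 | m)) / 2 else 0 := by
  by_cases hm : Odd m
  · have hm4 : m % 4 = 1 ∨ m % 4 = 3 := by
      have := Nat.odd_iff.mp hm
      omega
    rw [if_pos hm, jacobiSym.at_neg_one hm]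
    rcases hm4 with h | h
    · rw [ZMod.χ₄_nat_one_mod_four h]
      rcases hr with rfl | rfl <;> simp [h]
    · rw [ZMod.χ₄_nat_three_mod_four h]
      rcases hr with rfl | rfl <;> simp [h]
  · rw [if_neg hm, if_neg fun h ↦ hm (Nat.odd_iff.mpr (by omega))]

lemma abs_sum_mod_four_jacobiSym_le {n : ℕ} (hn : ¬ IsSquare n) {r : ℕ} (hr : r = 1 ∨ r = 3)
    (x : ℕ) :
    |∑ m ∈ range x with m % 4 = r, (J(n | m) : ℝ)| ≤ polyaVinogradovBound (4 * n) := by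
  have hn0 : (0 : ℤ) < n :=
    Int.natCast_pos.mpr (Nat.pos_of_ne_zero fun h ↦ hn (h ▸ IsSquare.zero))
  set σ : ℝ := if r = 1 then 1 else -1 with hσ
  have hσ1 : |σ| = 1 := by rw [hσ]; split_ifs <;> simp
  have hsplit : ∑ m ∈ range x with m % 4 = r, (J(n | m) : ℝ) =
      (∑ m ∈ range x with Odd m, (J(n | m) : ℝ) +
        σ * ∑ m ∈ range x with Odd m, (J(-n | m) : ℝ)) / 2 := by
    rw [mul_sum, ← sum_add_distrib, sum_div, sum_filter, sum_filter]
    refine sum_congr rfl fun m _ ↦ ?_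
    have hJ : (J(-n | m) : ℝ) = J(-1 | m) * J(n | m) := by
      rw [neg_eq_neg_one_mul, jacobiSym.mul_left, Int.cast_mul]
    rw [← mul_boole, mul_comm, ite_mod_four_eq hr, ← hσ, hJ]
    split_ifs <;> ring
  have hpos := abs_sum_odd_jacobiSym_le (n := n) (by rwa [Int.isSquare_natCast_iff]) x
  have hneg := abs_sum_odd_jacobiSym_le (n := -n) (fun h ↦ by linarith [h.nonneg]) x
  rw [Int.natAbs_neg] at hneg
  rw [Int.natAbs_natCast] at hpos hneg
  rw [hsplit, abs_div, abs_two, div_le_iff₀ two_pos]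
  refine (abs_add_le _ _).trans ?_
  rw [abs_mul, hσ1]
  linarith

lemma mul_mod_four_eq_iff {d : ℕ} (hd : Odd d) {r : ℕ} (hr : r = 1 ∨ r = 3) (k : ℕ) :
    d * k % 4 = r ↔ k % 4 = d * r % 4 := by
  have hd4 : d % 4 = 1 ∨ d % 4 = 3 := by
    have := Nat.odd_iff.mp hd
    omega
  rw [Nat.mul_mod d k, Nat.mul_mod d r]
  rcases hd4 with h | h <;> rcases hr with rfl | rfl <;> rw [h] <;> omega

lemma sum_mod_four_dvd_eq {M : Type*} [AddCommMonoid M] {d : ℕ} (hd : Odd d) {r : ℕ}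
    (hr : r = 1 ∨ r = 3) (N : ℕ) (f : ℕ → M) :
    ∑ m ∈ range (N + 1) with m % 4 = r ∧ d ∣ m, f m =
      ∑ k ∈ range (N / d + 1) with k % 4 = d * r % 4, f (d * k) := by
  symm
  refine sum_bij (fun k _ ↦ d * k) ?_ ?_ ?_ fun _ _ ↦ rfl
  · intro k hk
    simp only [mem_filter, mem_range, Nat.lt_add_one_iff, Nat.le_div_iff_mul_le hd.pos] at hk ⊢
    exact ⟨mul_comm k d ▸ hk.1, (mul_mod_four_eq_iff hd hr k).mpr hk.2, dvd_mul_right _ _⟩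
  · exact fun _ _ _ _ h ↦ Nat.eq_of_mul_eq_mul_left hd.pos h
  · intro m hm
    simp only [mem_filter, mem_range, Nat.lt_add_one_iff] at hm
    obtain ⟨hmN, hmr, k, rfl⟩ := hm
    refine ⟨k, ?_, rfl⟩
    simp only [mem_filter, mem_range, Nat.lt_add_one_iff, Nat.le_div_iff_mul_le hd.pos]
    exact ⟨mul_comm d k ▸ hmN, (mul_mod_four_eq_iff hd hr k).mp hmr⟩

theorem abs_sum_mod_four_dvd_jacobiSym_le {n : ℕ} (hn : ¬ IsSquare n) {r : ℕ} (hr : r = 1 ∨ r = 3)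
    {d : ℕ} (hd : Odd d) (N : ℕ) :
    |∑ m ∈ range (N + 1) with m % 4 = r ∧ d ∣ m, (J(n | m) : ℝ)| ≤
      polyaVinogradovBound (4 * n) := by
  have hdr : d * r % 4 = 1 ∨ d * r % 4 = 3 := by
    have hodd : Odd (d * r) := hd.mul (by rcases hr with rfl | rfl <;> decide)
    have := Nat.odd_iff.mp hodd
    omega
  have hmul : ∀ k ∈ ({k ∈ range (N / d + 1) | k % 4 = d * r % 4} : Finset ℕ),
      (J(n | d * k) : ℝ) = J(n | d) * J(n | k) := by
    intro k hk
    have hk0 : k ≠ 0 := by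
      rintro rfl
      have := (mem_filter.mp hk).2
      omega
    exact_mod_cast jacobiSym.mul_right' n hd.pos.ne' hk0
  have hJ : |(J(n | d) : ℝ)| ≤ 1 := by
    rcases jacobiSym.trichotomy n d with h | h | h <;> simp [h]
  rw [sum_mod_four_dvd_eq hd hr, sum_congr rfl hmul, ← mul_sum, abs_mul]
  exact (mul_le_of_le_one_left (abs_nonneg _) hJ).trans (abs_sum_mod_four_jacobiSym_le hn hdr _)

lemma not_isSquare_mul_of_squarefree {a b : ℕ} (ha : Squarefree a) (hb : Squarefree b)
    (hab : a ≠ b) : ¬ IsSquare (a * b) := by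
  rintro ⟨w, hw⟩
  have hw0 : w ≠ 0 := fun h ↦ mul_ne_zero ha.ne_zero hb.ne_zero (by rw [hw, h, zero_mul])
  refine hab (Nat.eq_of_factorization_eq ha.ne_zero hb.ne_zero fun p ↦ ?_)
  have hval := congrArg (fun k ↦ k.factorization p) hw
  simp only [Nat.factorization_mul ha.ne_zero hb.ne_zero, Nat.factorization_mul hw0 hw0,
    Finsupp.add_apply] at hval
  have := ha.natFactorization_le_one p
  have := hb.natFactorization_le_one p
  omega

end JacobiSums

/-! ### Selberg weights -/

section SelbergWeights

open Finset ArithmeticFunction UniqueFactorizationMonoid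
open scoped ArithmeticFunction.Moebius

/-- A finite set of squarefree levels on which Selberg weights can be supported: it is closed
under taking divisors and contains `1`. -/
structure IsSieveSupport (S : Finset ℕ) : Prop where
  one_mem : 1 ∈ S
  squarefree : ∀ l ∈ S, Squarefree l
  mem_of_dvd : ∀ l ∈ S, ∀ d, d ∣ l → d ∈ S

/-- The normalising sum `G = ∑ 1 / φ(l)` of the Selberg sieve. -/
noncomputable def selbergMass (S : Finset ℕ) : ℝ := ∑ l ∈ S, 1 / (l.totient : ℝ)

/-- The Selberg weights `λ_d = (μ(d) d / G) ∑_{d ∣ l} 1 / φ(l)`, which minimise the quadratic form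
`∑ λ_d λ_e / lcm(d, e)` subject to `λ_1 = 1`. -/
noncomputable def selbergWeight (S : Finset ℕ) (d : ℕ) : ℝ :=
  (μ d : ℝ) * d * (∑ l ∈ S with d ∣ l, 1 / (l.totient : ℝ)) / selbergMass S

lemma sum_divisors_filter_dvd_moebius {k l : ℕ} (hl : Squarefree l) (hk : k ∣ l) :
    ∑ d ∈ l.divisors with k ∣ d, μ d = if k = l then μ k else 0 := by
  obtain ⟨e, rfl⟩ := hk
  have hk0 : 0 < k := Nat.pos_of_ne_zero (left_ne_zero_of_mul hl.ne_zero)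
  have he0 : e ≠ 0 := right_ne_zero_of_mul hl.ne_zero
  have himage : {d ∈ (k * e).divisors | k ∣ d} = e.divisors.image (k * ·) := by
    ext d
    simp only [mem_filter, Nat.mem_divisors, mem_image]
    constructor
    · rintro ⟨⟨hd, -⟩, f, rfl⟩
      exact ⟨f, ⟨Nat.dvd_of_mul_dvd_mul_left hk0 hd, he0⟩, rfl⟩
    · rintro ⟨f, ⟨hf, -⟩, rfl⟩
      exact ⟨⟨mul_dvd_mul_left k hf, hl.ne_zero⟩, dvd_mul_right _ _⟩
  have hmul : ∀ f ∈ e.divisors, μ (k * f) = μ k * μ f := fun f hf ↦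
    isMultiplicative_moebius.map_mul_of_coprime
      ((Nat.coprime_of_squarefree_mul hl).coprime_dvd_right (Nat.dvd_of_mem_divisors hf))
  rw [himage, sum_image fun _ _ _ _ h ↦ Nat.eq_of_mul_eq_mul_left hk0 h, sum_congr rfl hmul,
    ← mul_sum, ← coe_zeta_mul_apply, coe_zeta_mul_moebius, one_apply]
  simp [left_eq_mul₀ hk0.ne']

namespace IsSieveSupport

variable {S : Finset ℕ} (hS : IsSieveSupport S)
include hS

lemma pos {l : ℕ} (hl : l ∈ S) : 0 < l := Nat.pos_of_ne_zero (hS.squarefree l hl).ne_zero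

lemma totient_pos {l : ℕ} (hl : l ∈ S) : (0 : ℝ) < l.totient :=
  Nat.cast_pos.mpr (Nat.totient_pos.mpr (hS.pos hl))

lemma mass_pos : 0 < selbergMass S :=
  sum_pos (fun _ hl ↦ one_div_pos.mpr (hS.totient_pos hl)) ⟨1, hS.one_mem⟩

lemma weight_one : selbergWeight S 1 = 1 := by
  have hsum : ∑ l ∈ S with 1 ∣ l, 1 / (l.totient : ℝ) = selbergMass S := by
    simp only [one_dvd, filter_true, selbergMass]
  rw [selbergWeight, hsum, moebius_apply_one, Int.cast_one, Nat.cast_one, one_mul, one_mul,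
    div_self hS.mass_pos.ne']

lemma filter_dvd_eq_divisors {l : ℕ} (hl : l ∈ S) : {d ∈ S | d ∣ l} = l.divisors := by
  ext d
  simp only [mem_filter, Nat.mem_divisors]
  exact ⟨fun h ↦ ⟨h.2, (hS.pos hl).ne'⟩, fun h ↦ ⟨hS.mem_of_dvd l hl d h.1, h.1⟩⟩

lemma sum_weight_div {k : ℕ} (hk : k ∈ S) :
    ∑ d ∈ S with k ∣ d, selbergWeight S d / d = μ k / (k.totient * selbergMass S) := by
  have hexpand : ∀ d ∈ S, selbergWeight S d / d =
      ∑ l ∈ S, if d ∣ l then (μ d : ℝ) * (1 / l.totient / selbergMass S) else 0 := by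
    intro d hd
    have hd0 : (d : ℝ) ≠ 0 := Nat.cast_ne_zero.mpr (hS.pos hd).ne'
    rw [selbergWeight, ← sum_filter, ← mul_sum, ← sum_div]
    field_simp
  have hinner : ∀ l ∈ S, (∑ d ∈ S with k ∣ d,
      if d ∣ l then (μ d : ℝ) * (1 / l.totient / selbergMass S) else 0) =
        if k = l then (μ k : ℝ) * (1 / k.totient / selbergMass S) else 0 := by
    intro l hl
    rw [← sum_filter, ← sum_mul, filter_comm, hS.filter_dvd_eq_divisors hl]
    by_cases hkl : k ∣ l
    · have hμ : ∑ d ∈ l.divisors with k ∣ d, (μ d : ℝ) = if k = l then (μ k : ℝ) else 0 := by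
        exact_mod_cast sum_divisors_filter_dvd_moebius (hS.squarefree l hl) hkl
      rw [hμ]
      split_ifs with h
      · rw [h]
      · rw [zero_mul]
    · rw [if_neg fun h ↦ hkl h.dvd, filter_false_of_mem, sum_empty, zero_mul]
      exact fun d hd h ↦ hkl (h.trans (Nat.dvd_of_mem_divisors hd))
  rw [sum_congr rfl fun d hd ↦ hexpand d (mem_filter.mp hd).1, sum_comm, sum_congr rfl hinner,
    sum_ite_eq, if_pos hk, div_div, mul_one_div]

lemma gcd_eq_sum_totient {d e : ℕ} (hd : d ∈ S) :
    (d.gcd e : ℝ) = ∑ k ∈ S with k ∣ d ∧ k ∣ e, (k.totient : ℝ) := by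
  have hdiv : {k ∈ S | k ∣ d ∧ k ∣ e} = (d.gcd e).divisors := by
    ext k
    simp only [Nat.mem_divisors, mem_filter, Nat.dvd_gcd_iff]
    exact ⟨fun h ↦ ⟨h.2, Nat.gcd_ne_zero_left (hS.pos hd).ne'⟩,
      fun h ↦ ⟨hS.mem_of_dvd d hd k h.1.1, h.1⟩⟩
  rw [hdiv]
  exact_mod_cast (Nat.sum_totient (d.gcd e)).symm

/-- Selberg's diagonalisation, from `1 / lcm(d, e) = ∑_{k ∣ d, k ∣ e} φ(k) / (d e)`. -/
lemma sum_mul_div_lcm_eq_sum_sq (w : ℕ → ℝ) :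
    ∑ d ∈ S, ∑ e ∈ S, w d * w e / (d.lcm e : ℝ) =
      ∑ k ∈ S, (k.totient : ℝ) * (∑ d ∈ S with k ∣ d, w d / d) ^ 2 := by
  have hterm : ∀ d ∈ S, ∀ e ∈ S, w d * w e / (d.lcm e : ℝ) =
      ∑ k ∈ S, (k.totient : ℝ) *
        ((if k ∣ d then w d / d else 0) * (if k ∣ e then w e / e else 0)) := by
    intro d hd e he
    have hd0 : (d : ℝ) ≠ 0 := Nat.cast_ne_zero.mpr (hS.pos hd).ne'
    have he0 : (e : ℝ) ≠ 0 := Nat.cast_ne_zero.mpr (hS.pos he).ne'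
    have hl0 : (d.lcm e : ℝ) ≠ 0 :=
      Nat.cast_ne_zero.mpr (Nat.lcm_ne_zero (hS.pos hd).ne' (hS.pos he).ne')
    have hgl : (d.gcd e : ℝ) * d.lcm e = d * e := mod_cast Nat.gcd_mul_lcm d e
    calc w d * w e / (d.lcm e : ℝ)
        = (d.gcd e : ℝ) * (w d / d * (w e / e)) := by
          field_simp
          rw [mul_assoc, ← hgl]
          ring
      _ = _ := by
          rw [hS.gcd_eq_sum_totient hd, sum_mul, sum_filter]
          refine sum_congr rfl fun k _ ↦ ?_
          by_cases hkd : k ∣ d <;> by_cases hke : k ∣ e <;> simp [hkd, hke]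
  rw [sum_congr rfl fun d hd ↦ sum_congr rfl (hterm d hd),
    sum_congr rfl fun d _ ↦ sum_comm, sum_comm]
  refine sum_congr rfl fun k _ ↦ ?_
  rw [sq, sum_filter, sum_mul_sum, mul_sum]
  exact sum_congr rfl fun d _ ↦ (mul_sum _ _ _).symm

theorem sum_weight_mul_weight_div_lcm :
    ∑ d ∈ S, ∑ e ∈ S, selbergWeight S d * selbergWeight S e / (d.lcm e : ℝ) =
      1 / selbergMass S := by
  have hG := hS.mass_pos
  have hterm : ∀ k ∈ S, (k.totient : ℝ) * (∑ d ∈ S with k ∣ d, selbergWeight S d / d) ^ 2 =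
      1 / k.totient / selbergMass S ^ 2 := by
    intro k hk
    have hφ := hS.totient_pos hk
    have hμ : (μ k : ℝ) ^ 2 = 1 := mod_cast moebius_sq_eq_one_of_squarefree (hS.squarefree k hk)
    rw [hS.sum_weight_div hk, div_pow, hμ]
    field_simp
  rw [hS.sum_mul_div_lcm_eq_sum_sq, sum_congr rfl hterm, ← sum_div, ← selbergMass.eq_def]
  field_simp

lemma abs_weight_le {d : ℕ} :
    |selbergWeight S d| ≤ ∑ l ∈ S with d ∣ l, d * (1 / (l.totient : ℝ) / selbergMass S) := by
  have hμ : |(μ d : ℝ)| ≤ 1 := mod_cast abs_moebius_le_one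
  have hsum : 0 ≤ ∑ l ∈ S with d ∣ l, 1 / (l.totient : ℝ) := sum_nonneg fun l _ ↦ by positivity
  rw [selbergWeight, abs_div, abs_of_pos hS.mass_pos, abs_mul, abs_mul, Nat.abs_cast,
    abs_of_nonneg hsum, ← mul_sum, ← sum_div, ← mul_div_assoc]
  have := hS.mass_pos
  gcongr
  exact mul_le_of_le_one_left d.cast_nonneg hμ

end IsSieveSupport

lemma sum_divisors_le_mul_one_add_log (n : ℕ) :
    ∑ d ∈ n.divisors, (d : ℝ) ≤ n * (1 + Real.log n) := by
  calc ∑ d ∈ n.divisors, (d : ℝ)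
      = ∑ d ∈ n.divisors, ((n / d : ℕ) : ℝ) := (Nat.sum_div_divisors n fun d ↦ (d : ℝ)).symm
    _ ≤ ∑ d ∈ n.divisors, (n : ℝ) * (1 / d) :=
        sum_le_sum fun d _ ↦ by rw [mul_one_div]; exact Nat.cast_div_le
    _ ≤ ∑ d ∈ Icc 1 n, (n : ℝ) * (1 / d) := by
        refine sum_le_sum_of_subset_of_nonneg (fun d hd ↦ ?_) fun _ _ _ ↦ by positivity
        exact mem_Icc.mpr ⟨Nat.pos_of_mem_divisors hd, Nat.divisor_le hd⟩
    _ ≤ n * (1 + Real.log n) := by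
        rw [← mul_sum]
        exact mul_le_mul_of_nonneg_left (sum_Icc_one_div_le_one_add_log n) n.cast_nonneg

theorem IsSieveSupport.sum_abs_weight_le {S : Finset ℕ} (hS : IsSieveSupport S) {D : ℕ}
    (hD : ∀ l ∈ S, l ≤ D) : ∑ d ∈ S, |selbergWeight S d| ≤ D * (1 + Real.log D) := by
  have hG := hS.mass_pos
  calc ∑ d ∈ S, |selbergWeight S d|
      ≤ ∑ d ∈ S, ∑ l ∈ S with d ∣ l, d * (1 / (l.totient : ℝ) / selbergMass S) :=
        sum_le_sum fun d _ ↦ hS.abs_weight_le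
    _ = ∑ l ∈ S, (∑ d ∈ S with d ∣ l, (d : ℝ)) * (1 / (l.totient : ℝ) / selbergMass S) := by
        simp_rw [sum_mul, sum_filter]
        exact sum_comm
    _ ≤ ∑ l ∈ S, D * (1 + Real.log D) * (1 / (l.totient : ℝ) / selbergMass S) := by
        refine sum_le_sum fun l hl ↦ mul_le_mul_of_nonneg_right ?_ (by positivity)
        have hl0 : (0 : ℝ) < l := Nat.cast_pos.mpr (hS.pos hl)
        have hlD : (l : ℝ) ≤ D := Nat.cast_le.mpr (hD l hl)
        have := Real.log_natCast_nonneg l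
        rw [hS.filter_dvd_eq_divisors hl]
        refine (sum_divisors_le_mul_one_add_log l).trans ?_
        gcongr
    _ = D * (1 + Real.log D) := by
        rw [← mul_sum, ← sum_div, ← selbergMass.eq_def, div_self hG.ne', mul_one]

lemma prod_primeFactors_one_sub_inv_inv {l : ℕ} (hl : l ≠ 0) :
    ∏ p ∈ l.primeFactors, (1 - (p : ℝ)⁻¹)⁻¹ = l / l.totient := by
  have hφ : (l.totient : ℝ) = l * ∏ p ∈ l.primeFactors, (1 - (p : ℝ)⁻¹) := by
    have h := congrArg ((↑) : ℚ → ℝ) (Nat.totient_eq_mul_prod_factors l)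
    push_cast at h
    exact h
  have hl' : (l : ℝ) ≠ 0 := Nat.cast_ne_zero.mpr hl
  rw [prod_inv_distrib, hφ, div_mul_cancel_left₀ hl']

lemma hasSum_factoredNumbers_inv {l : ℕ} (hl : l ≠ 0) :
    HasSum (fun m : Nat.factoredNumbers l.primeFactors ↦ ((m : ℕ) : ℝ)⁻¹) (l / l.totient) := by
  let f : ℕ →* ℝ := invMonoidWithZeroHom.toMonoidHom.comp (Nat.castRingHom ℝ).toMonoidHom
  have hf : ∀ {p : ℕ}, p.Prime → ‖f p‖ < 1 := fun {p} hp ↦ by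
    change ‖(p : ℝ)⁻¹‖ < 1
    rw [norm_inv, Real.norm_natCast]
    exact inv_lt_one_of_one_lt₀ (by exact_mod_cast hp.one_lt)
  have hsum := (EulerProduct.summable_and_hasSum_factoredNumbers_prod_filter_prime_geometric
    hf l.primeFactors).2
  rw [filter_true_of_mem fun p hp ↦ Nat.prime_of_mem_primeFactors hp] at hsum
  exact prod_primeFactors_one_sub_inv_inv hl ▸ hsum

lemma sum_inv_le_of_radical_eq {T : Finset ℕ} {l : ℕ} (hl : l ≠ 0)
    (hT : ∀ n ∈ T, n ≠ 0 ∧ radical n = l) : ∑ n ∈ T, (1 : ℝ) / n ≤ 1 / l.totient := by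
  have hl' : (l : ℝ) ≠ 0 := Nat.cast_ne_zero.mpr hl
  have hdvd : ∀ n ∈ T, l ∣ n := fun n hn ↦ (hT n hn).2 ▸ radical_dvd_self
  have hmem : ∀ n ∈ T, n / l ∈ Nat.factoredNumbers l.primeFactors := by
    intro n hn
    obtain ⟨hn0, hrad⟩ := hT n hn
    refine Nat.mem_factoredNumbers_of_primeFactors_subset
      (Nat.div_pos (Nat.le_of_dvd (by omega) (hdvd n hn)) (by omega)).ne' ?_
    have hprimes : n.primeFactors = l.primeFactors := by rw [← hrad, Nat.primeFactors_radical]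
    exact hprimes ▸ Nat.primeFactors_mono (Nat.div_dvd_of_dvd (hdvd n hn)) hn0
  have hinj : Set.InjOn (· / l) (T : Set ℕ) := fun a ha b hb hab ↦
    Nat.div_left_inj (hdvd a ha) (hdvd b hb) |>.mp hab
  calc ∑ n ∈ T, (1 : ℝ) / n
      = 1 / l * ∑ n ∈ T, ((n / l : ℕ) : ℝ)⁻¹ := by
        rw [mul_sum]
        refine sum_congr rfl fun n hn ↦ ?_
        rw [Nat.cast_div (hdvd n hn) hl']
        field_simp
    _ = 1 / l * ∑ m ∈ T.image (· / l), (m : ℝ)⁻¹ := by rw [sum_image hinj]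
    _ = 1 / l * ∑ m ∈ (T.image (· / l)).subtype (· ∈ Nat.factoredNumbers l.primeFactors),
          ((m : ℕ) : ℝ)⁻¹ := by
        rw [sum_subtype_of_mem (fun m : ℕ ↦ (m : ℝ)⁻¹) (by simpa using hmem)]
    _ ≤ 1 / l * (l / l.totient) := by
        gcongr
        exact sum_le_hasSum _ (fun _ _ ↦ by positivity) (hasSum_factoredNumbers_inv hl)
    _ = 1 / l.totient := by field_simp

/-- The support of the weights used to detect primes in odd residue classes. -/
noncomputable def oddSquarefreeUpTo (D : ℕ) : Finset ℕ := {d ∈ Icc 1 D | Odd d ∧ Squarefree d}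

lemma mem_oddSquarefreeUpTo {D d : ℕ} :
    d ∈ oddSquarefreeUpTo D ↔ (1 ≤ d ∧ d ≤ D) ∧ Odd d ∧ Squarefree d := by
  simp [oddSquarefreeUpTo]

lemma isSieveSupport_oddSquarefreeUpTo {D : ℕ} (hD : 1 ≤ D) :
    IsSieveSupport (oddSquarefreeUpTo D) where
  one_mem := by simp [mem_oddSquarefreeUpTo, hD]
  squarefree l hl := (mem_oddSquarefreeUpTo.mp hl).2.2
  mem_of_dvd l hl d hdl := by
    obtain ⟨⟨hl1, hlD⟩, hodd, hsq⟩ := mem_oddSquarefreeUpTo.mp hl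
    exact mem_oddSquarefreeUpTo.mpr ⟨⟨Nat.pos_of_dvd_of_pos hdl hl1,
      (Nat.le_of_dvd hl1 hdl).trans hlD⟩, hodd.of_dvd_nat hdl, hsq.squarefree_of_dvd hdl⟩

lemma sum_even_inv_le_sum_odd_inv (D : ℕ) :
    ∑ n ∈ Icc 1 D with ¬ Odd n, (1 : ℝ) / n ≤ ∑ n ∈ Icc 1 D with Odd n, (1 : ℝ) / n := by
  have hpred : ∀ n ∈ ({n ∈ Icc 1 D | ¬ Odd n} : Finset ℕ), 1 ≤ n - 1 ∧ Odd (n - 1) ∧ n ≤ D := by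
    intro n hn
    simp only [mem_filter, mem_Icc, Nat.not_odd_iff_even, Nat.even_iff] at hn
    exact ⟨by omega, Nat.odd_iff.mpr (by omega), hn.1.2⟩
  have hinj : Set.InjOn (· - 1) (({n ∈ Icc 1 D | ¬ Odd n} : Finset ℕ) : Set ℕ) := by
    intro a ha b hb hab
    have := (hpred a ha).1
    have := (hpred b hb).1
    have hab' : a - 1 = b - 1 := hab
    omega
  calc ∑ n ∈ Icc 1 D with ¬ Odd n, (1 : ℝ) / n
      ≤ ∑ n ∈ Icc 1 D with ¬ Odd n, (1 : ℝ) / ((n - 1 : ℕ) : ℝ) := by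
        refine sum_le_sum fun n hn ↦ one_div_le_one_div_of_le ?_ (Nat.cast_le.mpr (n.sub_le 1))
        exact Nat.cast_pos.mpr (hpred n hn).1
    _ = ∑ m ∈ ({n ∈ Icc 1 D | ¬ Odd n} : Finset ℕ).image (fun n : ℕ ↦ n - 1),
          (1 : ℝ) / (m : ℕ) := by
        rw [sum_image hinj]
    _ ≤ ∑ n ∈ Icc 1 D with Odd n, (1 : ℝ) / n := by
        refine sum_le_sum_of_subset_of_nonneg (fun m hm ↦ ?_) fun _ _ _ ↦ by positivity
        obtain ⟨n, hn, rfl⟩ := mem_image.mp hm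
        obtain ⟨hn1, hodd, hnD⟩ := hpred n hn
        exact mem_filter.mpr ⟨mem_Icc.mpr ⟨hn1, (n.sub_le 1).trans hnD⟩, hodd⟩

lemma log_le_sum_Icc_one_div (n : ℕ) : Real.log n ≤ ∑ k ∈ Icc 1 n, (1 : ℝ) / k := by
  rcases n.eq_zero_or_pos with rfl | hn
  · simp
  · have h := log_add_one_le_harmonic n
    rw [harmonic_eq_sum_Icc] at h
    push_cast at h
    simp only [one_div]
    exact (Real.log_le_log (by positivity) (by linarith)).trans h

theorem log_div_two_le_selbergMass (D : ℕ) :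
    Real.log D / 2 ≤ selbergMass (oddSquarefreeUpTo D) := by
  have hmaps : ∀ n ∈ ({n ∈ Icc 1 D | Odd n} : Finset ℕ), radical n ∈ oddSquarefreeUpTo D := by
    intro n hn
    obtain ⟨hn1, hodd⟩ := mem_filter.mp hn
    obtain ⟨hn1, hnD⟩ := mem_Icc.mp hn1
    have hdvd : radical n ∣ n := radical_dvd_self
    exact mem_oddSquarefreeUpTo.mpr ⟨⟨Nat.radical_pos n, (Nat.le_of_dvd hn1 hdvd).trans hnD⟩,
      hodd.of_dvd_nat hdvd, squarefree_radical⟩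
  have hodd : ∑ n ∈ Icc 1 D with Odd n, (1 : ℝ) / n ≤ selbergMass (oddSquarefreeUpTo D) := by
    rw [← sum_fiberwise_of_maps_to hmaps]
    refine sum_le_sum fun l hl ↦ sum_inv_le_of_radical_eq ?_ fun n hn ↦ ?_
    · exact (mem_oddSquarefreeUpTo.mp hl).2.2.ne_zero
    · simp only [mem_filter, mem_Icc] at hn
      exact ⟨by omega, hn.2⟩
  have hlog := log_le_sum_Icc_one_div D
  rw [← sum_filter_add_sum_filter_not _ Odd] at hlog
  linarith [sum_even_inv_le_sum_odd_inv D]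

end SelbergWeights

/-! ### Mean squares of Jacobi symbol sums over the primes -/

section MeanSquare

open Filter Finset
open scoped NumberTheorySymbols

lemma card_range_mod_four_eq {r : ℕ} (hr : r = 1 ∨ r = 3) (X : ℕ) :
    #{m ∈ range (X + 1) | m % 4 = r} = (X + 4 - r) / 4 := by
  induction X with
  | zero => rcases hr with rfl | rfl <;> decide
  | succ X ih =>
    rw [range_add_one, filter_insert]
    split_ifs with h
    · rw [card_insert_of_notMem (by simp), ih]; omega
    · rw [ih]; rcases hr with rfl | rfl <;> omega

lemma abs_card_mod_four_dvd_sub_le {r : ℕ} (hr : r = 1 ∨ r = 3) {d : ℕ} (hd : Odd d) (N : ℕ) :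
    |(#{m ∈ range (N + 1) | m % 4 = r ∧ d ∣ m} : ℝ) - N / (4 * d)| ≤ 1 := by
  have hr' : d * r % 4 = 1 ∨ d * r % 4 = 3 := by
    have := Nat.odd_iff.mp hd
    have : d % 4 = 1 ∨ d % 4 = 3 := by omega
    rcases this with h | h <;> rcases hr with rfl | rfl <;> simp [Nat.mul_mod, h]
  have hcard : #{m ∈ range (N + 1) | m % 4 = r ∧ d ∣ m} = (N / d + 4 - d * r % 4) / 4 := by
    rw [card_eq_sum_ones, sum_mod_four_dvd_eq hd hr N fun _ ↦ 1, ← card_eq_sum_ones,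
      card_range_mod_four_eq hr']
  have hfloor_le : ((N / d : ℕ) : ℝ) ≤ N / d := Nat.cast_div_le
  have hlt_floor : (N : ℝ) / d < (N / d : ℕ) + 1 := by
    rw [div_lt_iff₀ (by exact_mod_cast hd.pos), mul_comm]
    exact_mod_cast Nat.lt_mul_div_succ N hd.pos
  rw [hcard, mul_comm (4 : ℝ), ← div_div]
  generalize N / d = X at hfloor_le hlt_floor ⊢
  set c := (X + 4 - d * r % 4) / 4
  have hc_le : 4 * (c : ℝ) ≤ X + 3 := by exact_mod_cast (by omega : 4 * c ≤ X + 3)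
  have hle_c : (X : ℝ) ≤ 4 * c + 2 := by exact_mod_cast (by omega : X ≤ 4 * c + 2)
  rw [abs_le]
  constructor <;> linarith

/-- The square of the sum of the Selberg weights over the divisors of `m` in `S`: a nonnegative
majorant of the indicator function of the integers free of divisors in `S` other than `1`. -/
noncomputable def sieveMajorant (S : Finset ℕ) (m : ℕ) : ℝ :=
  (∑ d ∈ S with d ∣ m, selbergWeight S d) ^ 2

lemma sieveMajorant_nonneg (S : Finset ℕ) (m : ℕ) : 0 ≤ sieveMajorant S m := sq_nonneg _

lemma sum_sieveMajorant_mul (S M : Finset ℕ) (f : ℕ → ℝ) :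
    ∑ m ∈ M, sieveMajorant S m * f m = ∑ d ∈ S, ∑ e ∈ S,
      selbergWeight S d * selbergWeight S e * ∑ m ∈ M with d.lcm e ∣ m, f m := by
  have hterm (m : ℕ) : sieveMajorant S m * f m = ∑ d ∈ S, ∑ e ∈ S,
      selbergWeight S d * selbergWeight S e * if d.lcm e ∣ m then f m else 0 := by
    rw [sieveMajorant, sq, sum_filter, sum_mul_sum, sum_mul]
    refine sum_congr rfl fun d _ ↦ ?_
    rw [sum_mul]
    refine sum_congr rfl fun e _ ↦ ?_
    by_cases hd : d ∣ m <;> by_cases he : e ∣ m <;> simp [hd, he, Nat.lcm_dvd_iff]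
  rw [sum_congr rfl fun m _ ↦ hterm m, sum_comm]
  refine sum_congr rfl fun d _ ↦ ?_
  rw [sum_comm]
  exact sum_congr rfl fun e _ ↦ by rw [← mul_sum, ← sum_filter]

/-- The linear form `m ↦ ∑ w s (s / m)` in Jacobi symbols with coefficients `w` supported
on `T`. -/
noncomputable def jacobiLinearForm (T : Finset ℕ) (w : ℕ → ℝ) (m : ℕ) : ℝ :=
  ∑ s ∈ T, w s * J(s | m)

lemma sum_mul_jacobiLinearForm_sq (M T : Finset ℕ) (f w : ℕ → ℝ) :
    ∑ m ∈ M, f m * jacobiLinearForm T w m ^ 2 =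
      ∑ s ∈ T, ∑ t ∈ T, w s * w t * ∑ m ∈ M, f m * J((s * t : ℕ) | m) := by
  have hterm (m : ℕ) : f m * jacobiLinearForm T w m ^ 2 =
      ∑ s ∈ T, ∑ t ∈ T, w s * w t * (f m * J((s * t : ℕ) | m)) := by
    rw [jacobiLinearForm, sq, sum_mul_sum, mul_sum]
    refine sum_congr rfl fun s _ ↦ ?_
    rw [mul_sum]
    refine sum_congr rfl fun t _ ↦ ?_
    rw [Nat.cast_mul, jacobiSym.mul_left]
    push_cast
    ring
  rw [sum_congr rfl fun m _ ↦ hterm m, sum_comm]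
  refine sum_congr rfl fun s _ ↦ ?_
  rw [sum_comm]
  exact sum_congr rfl fun t _ ↦ by rw [← mul_sum]

namespace IsSieveSupport

variable {S : Finset ℕ} {D r : ℕ}

lemma sieveMajorant_eq_one_of_prime (hS : IsSieveSupport S) {p : ℕ} (hp : p.Prime) (hpS : p ∉ S) :
    sieveMajorant S p = 1 := by
  have : ({d ∈ S | d ∣ p} : Finset ℕ) = {1} := by
    ext d
    rw [mem_filter, mem_singleton, Nat.dvd_prime hp]
    constructor
    · rintro ⟨hd, rfl | rfl⟩
      exacts [rfl, (hpS hd).elim]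
    · rintro rfl
      exact ⟨hS.one_mem, Or.inl rfl⟩
  rw [sieveMajorant, this, sum_singleton, hS.weight_one, one_pow]

lemma sum_abs_weight_mul_abs_weight_le (hS : IsSieveSupport S) (hD : ∀ d ∈ S, d ≤ D) :
    ∑ d ∈ S, ∑ e ∈ S, |selbergWeight S d| * |selbergWeight S e| ≤ (D * (1 + Real.log D)) ^ 2 := by
  rw [← sum_mul_sum, ← sq]
  exact pow_le_pow_left₀ (sum_nonneg fun _ _ ↦ abs_nonneg _) (hS.sum_abs_weight_le hD) 2

lemma sum_mod_four_sieveMajorant_le (hS : IsSieveSupport S) (hodd : ∀ d ∈ S, Odd d)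
    (hD : ∀ d ∈ S, d ≤ D) (hr : r = 1 ∨ r = 3) (N : ℕ) :
    ∑ m ∈ range (N + 1) with m % 4 = r, sieveMajorant S m ≤
      N / (4 * selbergMass S) + (D * (1 + Real.log D)) ^ 2 := by
  have hexpand := sum_sieveMajorant_mul S {m ∈ range (N + 1) | m % 4 = r} fun _ ↦ 1
  simp only [mul_one, sum_const, nsmul_eq_mul, filter_filter] at hexpand
  rw [hexpand]
  calc _ ≤ ∑ d ∈ S, ∑ e ∈ S, (N / 4 * (selbergWeight S d * selbergWeight S e / (d.lcm e : ℝ)) +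
        |selbergWeight S d| * |selbergWeight S e|) := by
        refine sum_le_sum fun d hd ↦ sum_le_sum fun e he ↦ ?_
        have hlcm : Odd (d.lcm e) := ((hodd d hd).mul (hodd e he)).of_dvd_nat (d.lcm_dvd_mul e)
        have hcard := abs_card_mod_four_dvd_sub_le hr hlcm N
        set c := (#{m ∈ range (N + 1) | m % 4 = r ∧ d.lcm e ∣ m} : ℝ)
        have hlcm_pos : (0 : ℝ) < d.lcm e := by exact_mod_cast hlcm.pos
        calc selbergWeight S d * selbergWeight S e * c
            = N / 4 * (selbergWeight S d * selbergWeight S e / (d.lcm e : ℝ)) +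
              selbergWeight S d * selbergWeight S e * (c - N / (4 * d.lcm e)) := by
              field_simp
              ring
          _ ≤ _ := by
              refine add_le_add le_rfl ((le_abs_self _).trans ?_)
              rw [abs_mul, abs_mul]
              exact mul_le_of_le_one_right (by positivity) hcard
    _ = N / (4 * selbergMass S) + ∑ d ∈ S, ∑ e ∈ S, |selbergWeight S d| * |selbergWeight S e| := by
        have hmass := hS.mass_pos
        simp_rw [sum_add_distrib, ← mul_sum, hS.sum_weight_mul_weight_div_lcm]
        congr 1
        field_simp
    _ ≤ _ := by
        gcongr
        exact hS.sum_abs_weight_mul_abs_weight_le hD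

lemma abs_sum_sieveMajorant_mul_jacobiSym_le (hS : IsSieveSupport S) (hodd : ∀ d ∈ S, Odd d)
    (hD : ∀ d ∈ S, d ≤ D) (hr : r = 1 ∨ r = 3) (N : ℕ) {n : ℕ} (hn : ¬ IsSquare n) :
    |∑ m ∈ range (N + 1) with m % 4 = r, sieveMajorant S m * J(n | m)| ≤
      (D * (1 + Real.log D)) ^ 2 * polyaVinogradovBound (4 * n) := by
  rw [sum_sieveMajorant_mul]
  calc _ ≤ ∑ d ∈ S, ∑ e ∈ S, |selbergWeight S d| * |selbergWeight S e| *
        polyaVinogradovBound (4 * n) := by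
        refine (abs_sum_le_sum_abs _ _).trans (sum_le_sum fun d hd ↦
          (abs_sum_le_sum_abs _ _).trans (sum_le_sum fun e he ↦ ?_))
        have hlcm : Odd (d.lcm e) := ((hodd d hd).mul (hodd e he)).of_dvd_nat (d.lcm_dvd_mul e)
        rw [abs_mul, abs_mul, filter_filter]
        gcongr
        exact abs_sum_mod_four_dvd_jacobiSym_le hn hr hlcm N
    _ ≤ _ := by
        simp_rw [← sum_mul]
        gcongr
        · exact polyaVinogradovBound_nonneg _
        · exact hS.sum_abs_weight_mul_abs_weight_le hD

lemma mul_sum_sieveMajorant_mul_jacobiSym_le (hS : IsSieveSupport S) (hodd : ∀ d ∈ S, Odd d)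
    (hD : ∀ d ∈ S, d ≤ D) (hr : r = 1 ∨ r = 3) (N : ℕ) (w : ℕ → ℝ) {s t : ℕ}
    (hs : Squarefree s) (ht : Squarefree t) :
    w s * w t * ∑ m ∈ range (N + 1) with m % 4 = r, sieveMajorant S m * J((s * t : ℕ) | m) ≤
      (if s = t then w s ^ 2 * (N / (4 * selbergMass S) + (D * (1 + Real.log D)) ^ 2) else 0) +
        (D * (1 + Real.log D)) ^ 2 * (|w s| * |w t| * polyaVinogradovBound (4 * (s * t))) := by
  have hPV := polyaVinogradovBound_nonneg (4 * (s * t))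
  split_ifs with hst
  · subst hst
    have hdiag : ∑ m ∈ range (N + 1) with m % 4 = r, sieveMajorant S m * J((s * s : ℕ) | m) ≤
        N / (4 * selbergMass S) + (D * (1 + Real.log D)) ^ 2 := by
      refine (sum_le_sum fun m _ ↦ ?_).trans (hS.sum_mod_four_sieveMajorant_le hodd hD hr N)
      refine mul_le_of_le_one_right (sieveMajorant_nonneg S m) ?_
      rcases jacobiSym.trichotomy (s * s : ℕ) m with h | h | h <;> rw [h] <;> norm_num
    rw [← sq]
    exact (mul_le_mul_of_nonneg_left hdiag (sq_nonneg _)).trans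
      (le_add_of_nonneg_right (by positivity))
  · have hoff := hS.abs_sum_sieveMajorant_mul_jacobiSym_le hodd hD hr N
      (not_isSquare_mul_of_squarefree hs ht hst)
    calc _ ≤ |w s| * |w t| * ((D * (1 + Real.log D)) ^ 2 *
          polyaVinogradovBound (4 * (s * t))) := by
          refine (le_abs_self _).trans ?_
          rw [abs_mul, abs_mul]
          gcongr
      _ = _ := by ring

-- Majorizing the primes by the sieve leaves a diagonal `s = t`, controlled by the mass of the
-- weights, and an off-diagonal part, where `s * t` is not a square and Pólya–Vinogradov applies.
theorem sum_prime_jacobiLinearForm_sq_le (hS : IsSieveSupport S) (hodd : ∀ d ∈ S, Odd d)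
    (hD : ∀ d ∈ S, d ≤ D) (hr : r = 1 ∨ r = 3) (N : ℕ) {T : Finset ℕ}
    (hT : ∀ s ∈ T, Squarefree s) (w : ℕ → ℝ) :
    ∑ p ∈ range (N + 1) with p.Prime ∧ p % 4 = r ∧ D < p, jacobiLinearForm T w p ^ 2 ≤
      (∑ s ∈ T, w s ^ 2) * (N / (4 * selbergMass S) + (D * (1 + Real.log D)) ^ 2) +
      (D * (1 + Real.log D)) ^ 2 *
        ∑ s ∈ T, ∑ t ∈ T, |w s| * |w t| * polyaVinogradovBound (4 * (s * t)) := by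
  calc _ = ∑ p ∈ range (N + 1) with p.Prime ∧ p % 4 = r ∧ D < p,
        sieveMajorant S p * jacobiLinearForm T w p ^ 2 := by
        refine sum_congr rfl fun p hp ↦ ?_
        obtain ⟨-, hp, -, hDp⟩ := mem_filter.mp hp
        rw [hS.sieveMajorant_eq_one_of_prime hp fun h ↦ hDp.not_ge (hD p h), one_mul]
    _ ≤ ∑ m ∈ range (N + 1) with m % 4 = r, sieveMajorant S m * jacobiLinearForm T w m ^ 2 := by
        refine sum_le_sum_of_subset_of_nonneg (fun p hp ↦ ?_) fun m _ _ ↦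
          mul_nonneg (sieveMajorant_nonneg S m) (sq_nonneg _)
        obtain ⟨hpN, -, hpr, -⟩ := mem_filter.mp hp
        exact mem_filter.mpr ⟨hpN, hpr⟩
    _ ≤ _ := by
        rw [sum_mul_jacobiLinearForm_sq]
        refine (sum_le_sum fun s hs ↦ sum_le_sum fun t ht ↦
          hS.mul_sum_sieveMajorant_mul_jacobiSym_le hodd hD hr N w (hT s hs) (hT t ht)).trans_eq ?_
        simp_rw [sum_add_distrib, ← mul_sum]
        rw [sum_mul]
        refine congrArg (· + _) (sum_congr rfl fun s hs ↦ ?_)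
        rw [sum_ite_eq, if_pos hs]

end IsSieveSupport

end MeanSquare

section MeanSquareAsymptotics

open Filter Finset
open scoped NumberTheorySymbols

lemma sum_card_divisors_div_le (M : ℕ) :
    ∑ s ∈ Icc 1 M, (#s.divisors : ℝ) / s ≤ (1 + Real.log M) ^ 2 := by
  calc ∑ s ∈ Icc 1 M, (#s.divisors : ℝ) / s
      = ∑ s ∈ Icc 1 M, ∑ x ∈ Icc 1 M ×ˢ Icc 1 M with x.1 * x.2 = s, (1 : ℝ) / x.1 * (1 / x.2) := by
        refine sum_congr rfl fun s hs ↦ ?_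
        obtain ⟨hs1, hsM⟩ := mem_Icc.mp hs
        have hfiber : {x ∈ Icc 1 M ×ˢ Icc 1 M | x.1 * x.2 = s} = s.divisorsAntidiagonal := by
          ext ⟨a, b⟩
          simp only [mem_filter, mem_product, mem_Icc, Nat.mem_divisorsAntidiagonal]
          constructor
          · exact fun h ↦ ⟨h.2, by omega⟩
          · rintro ⟨rfl, h⟩
            have ha := Nat.pos_of_ne_zero (left_ne_zero_of_mul h)
            have hb := Nat.pos_of_ne_zero (right_ne_zero_of_mul h)
            exact ⟨⟨⟨ha, (Nat.le_mul_of_pos_right a hb).trans hsM⟩,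
              hb, (Nat.le_mul_of_pos_left b ha).trans hsM⟩, rfl⟩
        have hterm : ∀ x ∈ s.divisorsAntidiagonal, (1 : ℝ) / x.1 * (1 / x.2) = 1 / s := by
          intro x hx
          rw [← (Nat.mem_divisorsAntidiagonal.mp hx).1, one_div_mul_one_div, Nat.cast_mul]
        rw [hfiber, sum_congr rfl hterm, sum_const, nsmul_eq_mul, mul_one_div,
          ← Nat.map_div_right_divisors, card_map]
    _ ≤ ∑ x ∈ Icc 1 M ×ˢ Icc 1 M, (1 : ℝ) / x.1 * (1 / x.2) :=
        sum_fiberwise_le_sum_of_sum_fiber_nonneg fun _ _ ↦ sum_nonneg fun _ _ ↦ by positivity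
    _ = (∑ a ∈ Icc 1 M, (1 : ℝ) / a) ^ 2 := by rw [sq, sum_mul_sum, sum_product]
    _ ≤ (1 + Real.log M) ^ 2 :=
        pow_le_pow_left₀ (sum_nonneg fun _ _ ↦ by positivity) (sum_Icc_one_div_le_one_add_log M) 2

lemma card_divisors_four_mul_le (s t : ℕ) :
    #(4 * (s * t)).divisors ≤ 3 * (#s.divisors * #t.divisors) := by
  rw [Nat.divisors_mul, Nat.divisors_mul]
  exact card_mul_le.trans (Nat.mul_le_mul (by decide) card_mul_le)

lemma polyaVinogradovBound_four_mul_le {M s t : ℕ} (hs : 1 ≤ s) (hsM : s ≤ M) (ht : 1 ≤ t)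
    (htM : t ≤ M) :
    polyaVinogradovBound (4 * (s * t)) ≤
      18 * M * (1 + Real.log M) * (#s.divisors * #t.divisors) := by
  have hs' : (1 : ℝ) ≤ s := by exact_mod_cast hs
  have ht' : (1 : ℝ) ≤ t := by exact_mod_cast ht
  have hsM' : (s : ℝ) ≤ M := by exact_mod_cast hsM
  have htM' : (t : ℝ) ≤ M := by exact_mod_cast htM
  have hsqrt : √((4 * (s * t) : ℕ) : ℝ) ≤ 2 * M := by
    rw [Real.sqrt_le_left (by positivity)]
    push_cast
    nlinarith
  have hlog : 1 + Real.log ((4 * (s * t) : ℕ) : ℝ) ≤ 3 * (1 + Real.log M) := by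
    have hlog_s : Real.log s ≤ Real.log M := Real.log_le_log (by linarith) hsM'
    have hlog_t : Real.log t ≤ Real.log M := Real.log_le_log (by linarith) htM'
    have hlog_four : Real.log 4 ≤ 2 := by
      rw [show (4 : ℝ) = 2 ^ 2 by norm_num, Real.log_pow]
      push_cast
      linarith [Real.log_two_lt_d9]
    push_cast
    rw [Real.log_mul (by norm_num) (by positivity), Real.log_mul (by positivity) (by positivity)]
    linarith [Real.log_natCast_nonneg M]
  have hdiv : (#(4 * (s * t)).divisors : ℝ) ≤ 3 * (#s.divisors * #t.divisors) := by
    exact_mod_cast card_divisors_four_mul_le s t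
  calc polyaVinogradovBound (4 * (s * t))
      ≤ 2 * M * (3 * (#s.divisors * #t.divisors) * (3 * (1 + Real.log M))) := by
        have := Real.log_natCast_nonneg (4 * (s * t))
        rw [polyaVinogradovBound]
        gcongr
    _ = _ := by ring

lemma sum_abs_mul_abs_mul_polyaVinogradovBound_le {T : Finset ℕ} {w : ℕ → ℝ} {M : ℕ} {C : ℝ}
    (hT : ∀ s ∈ T, 1 ≤ s ∧ s ≤ M) (hw : ∀ s ∈ T, |w s| ≤ C / s) :
    ∑ s ∈ T, ∑ t ∈ T, |w s| * |w t| * polyaVinogradovBound (4 * (s * t)) ≤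
      18 * C ^ 2 * M * (1 + Real.log M) ^ 5 := by
  have : 0 ≤ Real.log M := Real.log_natCast_nonneg _
  have hterm : ∀ s ∈ T, ∀ t ∈ T, |w s| * |w t| * polyaVinogradovBound (4 * (s * t)) ≤
      18 * C ^ 2 * M * (1 + Real.log M) * ((#s.divisors / s) * (#t.divisors / t)) := by
    intro s hs t ht
    obtain ⟨hs1, hsM⟩ := hT s hs
    obtain ⟨ht1, htM⟩ := hT t ht
    calc |w s| * |w t| * polyaVinogradovBound (4 * (s * t))
        ≤ (C / s) * (C / t) * (18 * M * (1 + Real.log M) * (#s.divisors * #t.divisors)) :=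
          mul_le_mul
            (mul_le_mul (hw s hs) (hw t ht) (abs_nonneg _) ((abs_nonneg _).trans (hw s hs)))
            (polyaVinogradovBound_four_mul_le hs1 hsM ht1 htM) (polyaVinogradovBound_nonneg _)
            (mul_nonneg ((abs_nonneg _).trans (hw s hs)) ((abs_nonneg _).trans (hw t ht)))
      _ = _ := by ring
  have hsum : ∑ s ∈ T, (#s.divisors : ℝ) / s ≤ (1 + Real.log M) ^ 2 :=
    (sum_le_sum_of_subset_of_nonneg (fun s hs ↦ mem_Icc.mpr (hT s hs))
      fun _ _ _ ↦ by positivity).trans (sum_card_divisors_div_le M)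
  have : 0 ≤ ∑ s ∈ T, (#s.divisors : ℝ) / s := sum_nonneg fun _ _ ↦ by positivity
  calc _ ≤ ∑ s ∈ T, ∑ t ∈ T,
        18 * C ^ 2 * M * (1 + Real.log M) * ((#s.divisors / s) * (#t.divisors / t)) :=
        sum_le_sum fun s hs ↦ sum_le_sum (hterm s hs)
    _ = 18 * C ^ 2 * M * (1 + Real.log M) * (∑ s ∈ T, (#s.divisors : ℝ) / s) ^ 2 := by
        simp_rw [← mul_sum, sq, sum_mul_sum, mul_sum]
    _ ≤ 18 * C ^ 2 * M * (1 + Real.log M) * ((1 + Real.log M) ^ 2) ^ 2 := by gcongr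
    _ = _ := by ring

lemma sum_sq_le_of_abs_le_div {T : Finset ℕ} {w : ℕ → ℝ} {M : ℕ} {C : ℝ}
    (hT : ∀ s ∈ T, 1 ≤ s ∧ s ≤ M) (hw : ∀ s ∈ T, |w s| ≤ C / s) :
    ∑ s ∈ T, w s ^ 2 ≤ C ^ 2 * (1 + Real.log M) := by
  calc ∑ s ∈ T, w s ^ 2 ≤ ∑ s ∈ T, C ^ 2 * (1 / (s : ℝ)) := by
        refine sum_le_sum fun s hs ↦ ?_
        have hs1 : (1 : ℝ) ≤ s := by exact_mod_cast (hT s hs).1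
        calc w s ^ 2 = |w s| ^ 2 := (sq_abs _).symm
          _ ≤ (C / s) ^ 2 := pow_le_pow_left₀ (abs_nonneg _) (hw s hs) 2
          _ = C ^ 2 * (1 / (s : ℝ) ^ 2) := by ring
          _ ≤ C ^ 2 * (1 / (s : ℝ)) := by
              gcongr
              exact le_self_pow₀ hs1 two_ne_zero
    _ ≤ ∑ s ∈ Icc 1 M, C ^ 2 * (1 / (s : ℝ)) :=
        sum_le_sum_of_subset_of_nonneg (fun s hs ↦ mem_Icc.mpr (hT s hs))
          fun _ _ _ ↦ by positivity
    _ ≤ C ^ 2 * (1 + Real.log M) := by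
        rw [← mul_sum]
        gcongr
        exact sum_Icc_one_div_le_one_add_log M

lemma eventually_mul_rpow_mul_log_pow_le (B : ℝ) (n : ℕ) {ε κ : ℝ} (hε : 0 < ε) (hκ : κ < 1) :
    ∀ᶠ x : ℝ in atTop, B * x ^ κ * (1 + Real.log x) ^ n ≤ ε * x / Real.log x := by
  have hlittle : (fun x : ℝ ↦ Real.log x ^ ((n : ℝ) + 1)) =o[atTop] fun x ↦ x ^ (1 - κ) :=
    isLittleO_log_rpow_rpow_atTop _ (by linarith)
  set B' : ℝ := |B| * 2 ^ n + 1
  have hB' : 0 < B' := by positivity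
  filter_upwards [hlittle.bound (show 0 < ε / B' by positivity),
    Real.tendsto_log_atTop.eventually_ge_atTop 1, eventually_gt_atTop 0] with x hx hlog hx0
  rw [Real.norm_of_nonneg (by positivity), Real.norm_of_nonneg (by positivity)] at hx
  rw [le_div_iff₀ (by linarith)]
  set l := Real.log x
  calc B * x ^ κ * (1 + l) ^ n * l ≤ |B| * x ^ κ * (2 * l) ^ n * l := by
        gcongr
        exacts [le_abs_self B, by linarith]
    _ = |B| * 2 ^ n * x ^ κ * l ^ ((n : ℝ) + 1) := by
        rw [Real.rpow_add_one (by linarith), Real.rpow_natCast]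
        ring
    _ ≤ B' * x ^ κ * (ε / B' * x ^ (1 - κ)) := by
        gcongr
        exact le_add_of_nonneg_right zero_le_one
    _ = ε * (x ^ κ * x ^ (1 - κ)) := by field_simp
    _ = ε * x := by rw [← Real.rpow_add hx0, add_sub_cancel, Real.rpow_one]

lemma eventually_div_selbergMass_le {θ A : ℝ} (hθ : 0 < θ) (hA : 1 < 2 * A * θ) :
    ∀ᶠ N : ℕ in atTop,
      N / (4 * selbergMass (oddSquarefreeUpTo ⌊(N : ℝ) ^ θ⌋₊)) ≤ A * N / Real.log N := by
  have hA0 : 0 < A := pos_of_mul_pos_left (by linarith : 0 < A * (2 * θ)) (by positivity)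
  have hlog : Tendsto (fun N : ℕ ↦ Real.log (N : ℝ)) atTop atTop :=
    Real.tendsto_log_atTop.comp tendsto_natCast_atTop_atTop
  filter_upwards [eventually_ge_atTop 2,
    hlog.eventually_ge_atTop (2 * A * Real.log 2 / (2 * A * θ - 1))] with N hN hl
  have hN1 : (1 : ℝ) < N := by exact_mod_cast hN
  have hl0 := Real.log_pos hN1
  have hrpow : 1 ≤ (N : ℝ) ^ θ := Real.one_le_rpow hN1.le hθ.le
  set D := ⌊(N : ℝ) ^ θ⌋₊
  have hD : 1 ≤ D := Nat.le_floor (by simpa using hrpow)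
  have hlogD : θ * Real.log N - Real.log 2 ≤ Real.log D := by
    have hD1 : (1 : ℝ) ≤ D := by exact_mod_cast hD
    have hhalf : (N : ℝ) ^ θ / 2 ≤ D := by linarith [Nat.lt_floor_add_one ((N : ℝ) ^ θ)]
    have := Real.log_le_log (by positivity) hhalf
    rwa [Real.log_div (by positivity) two_ne_zero, Real.log_rpow (by linarith)] at this
  have hmass := log_div_two_le_selbergMass D
  have hmass_pos := (isSieveSupport_oddSquarefreeUpTo hD).mass_pos
  have hmain : Real.log N ≤ A * (4 * selbergMass (oddSquarefreeUpTo D)) := by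
    rw [div_le_iff₀ (by linarith)] at hl
    have := mul_le_mul_of_nonneg_left (hlogD.trans (by linarith : _ ≤ 2 * selbergMass _)) hA0.le
    linarith
  rw [div_le_div_iff₀ (by positivity) hl0]
  nlinarith

lemma log_floor_rpow_le {x θ : ℝ} (hx : 1 ≤ x) (hθ : 0 ≤ θ) (hθ1 : θ ≤ 1) :
    Real.log ⌊x ^ θ⌋₊ ≤ Real.log x := by
  have hrpow : 1 ≤ x ^ θ := Real.one_le_rpow hx hθ
  calc Real.log ⌊x ^ θ⌋₊ ≤ Real.log (x ^ θ) :=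
        Real.log_le_log (by exact_mod_cast Nat.floor_pos.mpr hrpow) (Nat.floor_le (by positivity))
    _ = θ * Real.log x := Real.log_rpow (by linarith) θ
    _ ≤ Real.log x := mul_le_of_le_one_left (Real.log_nonneg hx) hθ1

lemma eventually_sieve_error_le {θ τ ε : ℝ} (hθ : 0 < θ) (hτ : 0 < τ) (hθτ : 2 * θ + τ < 1)
    (C : ℝ) (hε : 0 < ε) :
    ∀ᶠ N : ℕ in atTop, (⌊(N : ℝ) ^ θ⌋₊ * (1 + Real.log ⌊(N : ℝ) ^ θ⌋₊)) ^ 2 *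
      (C ^ 2 * (1 + Real.log ⌊(N : ℝ) ^ τ⌋₊) +
        18 * C ^ 2 * ⌊(N : ℝ) ^ τ⌋₊ * (1 + Real.log ⌊(N : ℝ) ^ τ⌋₊) ^ 5) ≤
      ε * N / Real.log N := by
  filter_upwards [tendsto_natCast_atTop_atTop.eventually
    (eventually_mul_rpow_mul_log_pow_le (19 * C ^ 2) 7 hε hθτ), eventually_ge_atTop 1]
    with N herror hN
  have hN1 : (1 : ℝ) ≤ N := by exact_mod_cast hN
  have hlogD := log_floor_rpow_le hN1 hθ.le (by linarith)
  have hlogM := log_floor_rpow_le hN1 hτ.le (by linarith)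
  have hDle : (⌊(N : ℝ) ^ θ⌋₊ : ℝ) ≤ (N : ℝ) ^ θ := Nat.floor_le (by positivity)
  have hMle : (⌊(N : ℝ) ^ τ⌋₊ : ℝ) ≤ (N : ℝ) ^ τ := Nat.floor_le (by positivity)
  have : 1 ≤ (N : ℝ) ^ τ := Real.one_le_rpow hN1 hτ.le
  set D := ⌊(N : ℝ) ^ θ⌋₊
  set M := ⌊(N : ℝ) ^ τ⌋₊
  have := Real.log_natCast_nonneg D
  have := Real.log_natCast_nonneg M
  set l := Real.log N
  have hfactor : C ^ 2 * (1 + Real.log M) + 18 * C ^ 2 * M * (1 + Real.log M) ^ 5 ≤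
      19 * C ^ 2 * (N : ℝ) ^ τ * (1 + l) ^ 5 := by
    calc _ ≤ C ^ 2 * ((N : ℝ) ^ τ * (1 + l) ^ 5) +
          18 * C ^ 2 * (N : ℝ) ^ τ * (1 + l) ^ 5 := by
          gcongr
          calc 1 + Real.log M ≤ 1 * (1 + l) := by linarith
            _ ≤ (N : ℝ) ^ τ * (1 + l) ^ 5 := by
                gcongr
                exact le_self_pow₀ (by linarith) (by norm_num)
      _ = _ := by ring
  calc _ ≤ ((N : ℝ) ^ θ * (1 + l)) ^ 2 * (19 * C ^ 2 * (N : ℝ) ^ τ * (1 + l) ^ 5) := by gcongr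
    _ = 19 * C ^ 2 * (N : ℝ) ^ (2 * θ + τ) * (1 + l) ^ 7 := by
        rw [two_mul, Real.rpow_add (by linarith), Real.rpow_add (by linarith)]
        ring
    _ ≤ _ := herror

/-- The primes `p ≡ r (mod 4)` in `(N ^ 0.95, N]`. -/
noncomputable def largePrimes (N r : ℕ) : Finset ℕ :=
  {p ∈ range (N + 1) | p.Prime ∧ p % 4 = r ∧ (N : ℝ) ^ (0.95 : ℝ) < p}

lemma mem_largePrimes {N r p : ℕ} : p ∈ largePrimes N r ↔
    p ≤ N ∧ p.Prime ∧ p % 4 = r ∧ (N : ℝ) ^ (0.95 : ℝ) < p := by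
  rw [largePrimes, mem_filter, mem_range, Nat.lt_succ_iff]

theorem eventually_sum_jacobiLinearForm_sq_le {θ τ A ε : ℝ} (hθ : 0 < θ) (hτ : 0 < τ)
    (hθτ : 2 * θ + τ < 1) (hA : 1 < 2 * A * θ) (C : ℝ) (hε : 0 < ε) :
    ∀ᶠ N : ℕ in atTop, ∀ (T : Finset ℕ) (w : ℕ → ℝ) (r : ℕ), (r = 1 ∨ r = 3) →
      (∀ s ∈ T, Squarefree s ∧ (s : ℝ) ≤ (N : ℝ) ^ τ) → (∀ s ∈ T, |w s| ≤ C / s) →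
      ∑ p ∈ largePrimes N r, jacobiLinearForm T w p ^ 2 ≤
        (A * ∑ s ∈ T, w s ^ 2 + ε) * N / Real.log N := by
  filter_upwards [eventually_sieve_error_le hθ hτ hθτ C hε, eventually_div_selbergMass_le hθ hA,
    eventually_ge_atTop 1] with N herror hmain hN T w r hr hT hw
  have hN1 : (1 : ℝ) ≤ N := by exact_mod_cast hN
  have hD1 : 1 ≤ ⌊(N : ℝ) ^ θ⌋₊ := Nat.floor_pos.mpr (Real.one_le_rpow hN1 hθ.le)
  have hDle : (⌊(N : ℝ) ^ θ⌋₊ : ℝ) ≤ (N : ℝ) ^ θ := Nat.floor_le (by positivity)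
  have hTM : ∀ s ∈ T, 1 ≤ s ∧ s ≤ ⌊(N : ℝ) ^ τ⌋₊ := fun s hs ↦
    ⟨Nat.pos_of_ne_zero (hT s hs).1.ne_zero, Nat.le_floor (hT s hs).2⟩
  set D := ⌊(N : ℝ) ^ θ⌋₊
  set M := ⌊(N : ℝ) ^ τ⌋₊
  set E := (D * (1 + Real.log D)) ^ 2
  calc ∑ p ∈ largePrimes N r, jacobiLinearForm T w p ^ 2
      ≤ ∑ p ∈ range (N + 1) with p.Prime ∧ p % 4 = r ∧ D < p, jacobiLinearForm T w p ^ 2 := by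
        refine sum_le_sum_of_subset_of_nonneg (fun p hp ↦ ?_) fun _ _ _ ↦ sq_nonneg _
        obtain ⟨hpN, hprime, hpr, hp⟩ := mem_largePrimes.mp hp
        have hDp : (D : ℝ) < p := (hDle.trans
          (Real.rpow_le_rpow_of_exponent_le hN1 (by linarith))).trans_lt hp
        exact mem_filter.mpr ⟨mem_range_succ_iff.mpr hpN, hprime, hpr, by exact_mod_cast hDp⟩
    _ ≤ (∑ s ∈ T, w s ^ 2) * (N / (4 * selbergMass (oddSquarefreeUpTo D)) + E) +
        E * ∑ s ∈ T, ∑ t ∈ T, |w s| * |w t| * polyaVinogradovBound (4 * (s * t)) :=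
        (isSieveSupport_oddSquarefreeUpTo hD1).sum_prime_jacobiLinearForm_sq_le
          (fun d hd ↦ (mem_oddSquarefreeUpTo.mp hd).2.1)
          (fun d hd ↦ (mem_oddSquarefreeUpTo.mp hd).1.2) hr N (fun s hs ↦ (hT s hs).1) w
    _ = (∑ s ∈ T, w s ^ 2) * (N / (4 * selbergMass (oddSquarefreeUpTo D))) + E * (∑ s ∈ T, w s ^ 2 +
          ∑ s ∈ T, ∑ t ∈ T, |w s| * |w t| * polyaVinogradovBound (4 * (s * t))) := by ring
    _ ≤ (∑ s ∈ T, w s ^ 2) * (A * N / Real.log N) + ε * N / Real.log N := by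
        have : 0 ≤ ∑ s ∈ T, w s ^ 2 := sum_nonneg fun _ _ ↦ sq_nonneg _
        refine add_le_add (by gcongr) (le_trans ?_ herror)
        gcongr
        exacts [sum_sq_le_of_abs_le_div hTM hw, sum_abs_mul_abs_mul_polyaVinogradovBound_le hTM hw]
    _ = _ := by ring

end MeanSquareAsymptotics

/-! ### The sign of the quadratic Gauss sum -/

section QuadraticGaussSum

open Complex Filter Topology

lemma ofReal_mul_cpow {r : ℝ} (hr : 0 < r) {z : ℂ} (hz : z ≠ 0) (s : ℂ) :
    (r * z) ^ s = (r : ℂ) ^ s * z ^ s := by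
  have hr' : (r : ℂ) ≠ 0 := ofReal_ne_zero.mpr hr.ne'
  rw [cpow_def_of_ne_zero (mul_ne_zero hr' hz), cpow_def_of_ne_zero hr', cpow_def_of_ne_zero hz,
    log_ofReal_mul hr hz, ofReal_log hr.le, add_mul, exp_add]

lemma ofReal_sq_mul_cpow_half {r : ℝ} (hr : 0 < r) {z : ℂ} (hz : z ≠ 0) :
    ((r : ℂ) ^ 2 * z) ^ (1 / 2 : ℂ) = r * z ^ (1 / 2 : ℂ) := by
  rw [← ofReal_pow, ofReal_mul_cpow (by positivity) hz, ofReal_pow, one_div,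
    sq_cpow_two_inv (by simpa using hr)]

lemma cpow_half_mul_tsum_exp_residue_class {z : ℂ} (hz : 0 < z.re) {q : ℕ} (hq : 0 < q) (a : ℤ) :
    z ^ (1 / 2 : ℂ) * ∑' m : ℤ, cexp (-Real.pi * z * (m * q + a) ^ 2) =
      1 / q * ∑' m : ℤ,
        cexp (-Real.pi * (1 / z) * (m / q) ^ 2 + 2 * Real.pi * I * a * m / q) := by
  have hz0 : z ≠ 0 := by rintro rfl; simp at hz
  have hq0 : (q : ℂ) ≠ 0 := Nat.cast_ne_zero.mpr hq.ne'
  have hre : 0 < (((q : ℝ) : ℂ) ^ 2 * z).re := by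
    rw [← ofReal_pow, re_ofReal_mul]
    positivity
  have hfun := tsum_exp_neg_quadratic hre (-z * q * a)
  rw [ofReal_sq_mul_cpow_half (by exact_mod_cast hq) hz0] at hfun
  have hsqrt : z ^ (1 / 2 : ℂ) ≠ 0 := by simp [cpow_eq_zero_iff, hz0]
  have hleft (m : ℤ) : cexp (-Real.pi * z * (m * q + a) ^ 2) = cexp (-Real.pi * z * a ^ 2) *
      cexp (-Real.pi * (((q : ℝ) : ℂ) ^ 2 * z) * m ^ 2 + 2 * Real.pi * (-z * q * a) * m) := by
    rw [← exp_add]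
    push_cast
    ring_nf
  have hright (m : ℤ) :
      cexp (-Real.pi / (((q : ℝ) : ℂ) ^ 2 * z) * (m + I * (-z * q * a)) ^ 2) =
        cexp (Real.pi * z * a ^ 2) *
          cexp (-Real.pi * (1 / z) * (m / q) ^ 2 + 2 * Real.pi * I * a * m / q) := by
    rw [← exp_add]
    congr 1
    push_cast
    field_simp
    linear_combination (-(z : ℂ) ^ 2 * (q : ℂ) ^ 2 * a ^ 2) * I_sq
  have hcancel : cexp (-Real.pi * z * a ^ 2) * cexp (Real.pi * z * a ^ 2) = 1 := by
    rw [← exp_add]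
    simp
  simp_rw [hleft, tsum_mul_left, hfun, hright, tsum_mul_left]
  push_cast
  generalize ∑' m : ℤ, cexp (-Real.pi * (1 / z) * (m / q) ^ 2 + 2 * Real.pi * I * a * m / q) = T
  generalize cexp (-Real.pi * z * a ^ 2) = E₁ at *
  generalize cexp (Real.pi * z * a ^ 2) = E₂ at *
  field_simp
  linear_combination T * hcancel

lemma summable_exp_neg_pi_mul_sq : Summable fun m : ℤ ↦ Real.exp (-Real.pi * m ^ 2) := by
  refine (hasSum_jacobiTheta₂_term 0 (τ := I) (by simp)).summable.norm.congr fun m ↦ ?_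
  rw [jacobiTheta₂_term, norm_exp]
  congr 1
  have : (2 * Real.pi * I * m * 0 + Real.pi * I * m ^ 2 * I : ℂ) =
      ((-Real.pi * m ^ 2 : ℝ) : ℂ) := by
    push_cast
    linear_combination (Real.pi * m ^ 2 : ℂ) * I_sq
  rw [this, ofReal_re]

lemma tendsto_tsum_exp_neg_mul_sq_add {ι : Type*} {l : Filter ι} [l.IsCountablyGenerated]
    {y : ι → ℂ} (hy : Tendsto (fun t ↦ (y t).re) l atTop) {q : ℕ} (hq : 0 < q) (a : ℤ) :
    Tendsto (fun t ↦ ∑' m : ℤ,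
      cexp (-Real.pi * y t * (m / q) ^ 2 + 2 * Real.pi * I * a * m / q)) l (𝓝 1) := by
  have : (0 : ℝ) < q := Nat.cast_pos.mpr hq
  have hnorm (t : ι) (m : ℤ) :
      ‖cexp (-Real.pi * y t * (m / q) ^ 2 + 2 * Real.pi * I * a * m / q)‖ =
        Real.exp (-(Real.pi * (m / q) ^ 2 * (y t).re)) := by
    rw [norm_exp]
    congr 1
    have : (-Real.pi * y t * (m / q) ^ 2 + 2 * Real.pi * I * a * m / q : ℂ) =
        ((-(Real.pi * (m / q) ^ 2) : ℝ) : ℂ) * y t + ((2 * Real.pi * a * m / q : ℝ) : ℂ) * I := by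
      push_cast
      ring
    rw [this, add_re, re_ofReal_mul, re_ofReal_mul, I_re, mul_zero, add_zero, neg_mul]
  rw [← tsum_ite_eq (0 : ℤ) fun _ ↦ (1 : ℂ)]
  refine tendsto_tsum_of_dominated_convergence summable_exp_neg_pi_mul_sq (fun m ↦ ?_) ?_
  · by_cases hm : m = 0
    · subst hm
      simpa using tendsto_const_nhds
    · rw [if_neg hm, tendsto_zero_iff_norm_tendsto_zero]
      simp_rw [hnorm]
      have : (m : ℝ) ≠ 0 := Int.cast_ne_zero.mpr hm
      exact Real.tendsto_exp_neg_atTop_nhds_zero.comp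
        (hy.const_mul_atTop (by positivity : 0 < Real.pi * (m / q : ℝ) ^ 2))
  · filter_upwards [hy.eventually_ge_atTop ((q : ℝ) ^ 2)] with t ht m
    rw [hnorm, Real.exp_le_exp, neg_mul, neg_le_neg_iff, mul_assoc]
    gcongr
    calc (m : ℝ) ^ 2 = (m / q : ℝ) ^ 2 * (q : ℝ) ^ 2 := by field_simp
      _ ≤ _ := by gcongr

lemma summable_mul_exp_neg_pi_mul_sq {z : ℂ} (hz : 0 < z.re) {c : ℤ → ℂ} (hc : ∀ n, ‖c n‖ ≤ 1) :
    Summable fun n : ℤ ↦ c n * cexp (-Real.pi * z * n ^ 2) := by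
  refine Summable.of_norm_bounded
    (hasSum_jacobiTheta₂_term 0 (τ := I * z) (by simpa using hz)).summable.norm fun n ↦ ?_
  have : cexp (-Real.pi * z * n ^ 2) = jacobiTheta₂_term n 0 (I * z) := by
    rw [jacobiTheta₂_term]
    congr 1
    linear_combination (-Real.pi * n ^ 2 * z : ℂ) * I_sq
  rw [norm_mul, this]
  exact mul_le_of_le_one_left (norm_nonneg _) (hc n)

lemma tsum_mul_exp_eq_sum_fin {z : ℂ} (hz : 0 < z.re) {q : ℕ} [NeZero q] {c : ℤ → ℂ}
    (hc : ∀ n, ‖c n‖ ≤ 1) (hper : ∀ m n : ℤ, c (m * q + n) = c n) :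
    ∑' n : ℤ, c n * cexp (-Real.pi * z * n ^ 2) =
      ∑ a : Fin q, c a * ∑' m : ℤ, cexp (-Real.pi * z * (m * q + (a : ℤ)) ^ 2) := by
  have hsum := (Int.divModEquiv q).symm.summable_iff.mpr (summable_mul_exp_neg_pi_mul_sq hz hc)
  simp only [Function.comp_def] at hsum
  rw [← (Int.divModEquiv q).symm.tsum_eq,
    hsum.tsum_prod' fun m ↦ (hasSum_fintype _).summable]
  simp only [tsum_fintype]
  have hfiber (a : Fin q) := hsum.comp_injective (i := fun m : ℤ ↦ (m, a))
    fun x y h ↦ by simpa using h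
  simp only [Function.comp_def] at hfiber
  rw [Summable.tsum_finsetSum fun a _ ↦ hfiber a]
  refine Finset.sum_congr rfl fun a _ ↦ ?_
  rw [← tsum_mul_left]
  refine tsum_congr fun m ↦ ?_
  rw [Int.divModEquiv_symm_apply]
  have := hper m a
  push_cast at this ⊢
  rw [this]

lemma tendsto_cpow_half_mul_tsum_periodic {ι : Type*} {l : Filter ι} [l.IsCountablyGenerated]
    {z : ι → ℂ} (hz : Tendsto (fun t ↦ (1 / z t).re) l atTop) {q : ℕ} (hq : 0 < q) {c : ℤ → ℂ}
    (hc : ∀ n, ‖c n‖ ≤ 1) (hper : ∀ m n : ℤ, c (m * q + n) = c n) :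
    Tendsto (fun t ↦ z t ^ (1 / 2 : ℂ) * ∑' n : ℤ, c n * cexp (-Real.pi * z t * n ^ 2)) l
      (𝓝 (1 / q * ∑ a ∈ Finset.range q, c a)) := by
  have : NeZero q := ⟨hq.ne'⟩
  have hlim : Tendsto (fun t ↦ ∑ a : Fin q, c a * (1 / q * ∑' m : ℤ,
      cexp (-Real.pi * (1 / z t) * (m / q) ^ 2 + 2 * Real.pi * I * (a : ℤ) * m / q))) l
      (𝓝 (∑ a : Fin q, c a * (1 / q * 1))) :=
    tendsto_finsetSum _ fun a _ ↦
      ((tendsto_tsum_exp_neg_mul_sq_add hz hq (a : ℤ)).const_mul _).const_mul _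
  have hvalue : ∑ a : Fin q, c a * ((1 : ℂ) / q * 1) = 1 / q * ∑ a ∈ Finset.range q, c a := by
    rw [mul_one, ← Finset.sum_mul, mul_comm, Finset.sum_range fun a : ℕ ↦ c a]
  rw [← hvalue]
  refine hlim.congr' ?_
  filter_upwards [hz.eventually_gt_atTop 0] with t ht
  have hre : 0 < (z t).re := by
    have hz0 : z t ≠ 0 := fun h ↦ by simp [h] at ht
    rw [one_div, inv_re] at ht
    exact (div_pos_iff_of_pos_right (normSq_pos.mpr hz0)).mp ht
  rw [tsum_mul_exp_eq_sum_fin hre hc hper, Finset.mul_sum]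
  refine Finset.sum_congr rfl fun a _ ↦ ?_
  rw [← cpow_half_mul_tsum_exp_residue_class hre hq (a : ℤ)]
  ring

lemma tendsto_cpow_half_mul_tsum_exp_add {ι : Type*} {l : Filter ι} [l.IsCountablyGenerated]
    {z : ι → ℂ} (hz : Tendsto (fun t ↦ (1 / z t).re) l atTop) {q : ℕ} (hq : 0 < q) {β : ℂ}
    (hβ : ∀ n : ℤ, ‖cexp (-Real.pi * β * n ^ 2)‖ ≤ 1)
    (hper : ∀ m n : ℤ, cexp (-Real.pi * β * (m * q + n : ℤ) ^ 2) = cexp (-Real.pi * β * n ^ 2)) :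
    Tendsto (fun t ↦ z t ^ (1 / 2 : ℂ) * ∑' n : ℤ, cexp (-Real.pi * (β + z t) * n ^ 2)) l
      (𝓝 (1 / q * ∑ a ∈ Finset.range q, cexp (-Real.pi * β * a ^ 2))) := by
  have hlim := tendsto_cpow_half_mul_tsum_periodic hz hq hβ hper
  simp only [Int.cast_natCast, ← exp_add] at hlim
  refine hlim.congr fun t ↦ ?_
  congr 2 with n
  ring_nf

lemma exp_neg_pi_mul_I_mul_half_mul_sq (p : ℕ) (n : ℤ) :
    cexp (-Real.pi * (I * p / 2) * n ^ 2) = if Even n then 1 else (-I) ^ p := by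
  split_ifs with h
  · obtain ⟨k, rfl⟩ := h
    rw [exp_eq_one_iff]
    exact ⟨-(p * k ^ 2), by push_cast; ring⟩
  · obtain ⟨k, rfl⟩ := Int.not_even_iff_odd.mp h
    have : (-Real.pi * (I * p / 2) * ((2 * k + 1 : ℤ) : ℂ) ^ 2 : ℂ) =
        ((-(p * (k ^ 2 + k)) : ℤ) : ℂ) * (2 * Real.pi * I) + p * (-(Real.pi / 2) * I) := by
      push_cast
      ring
    rw [this, exp_add, exp_int_mul_two_pi_mul_I, one_mul, exp_nat_mul, exp_mul_I, cos_neg,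
      sin_neg, cos_pi_div_two, sin_pi_div_two, zero_add, neg_one_mul]

lemma tendsto_theta_at_neg_two_I_div {p : ℕ} (hp : 0 < p) :
    Tendsto (fun t : ℝ ↦ (t : ℂ) ^ (1 / 2 : ℂ) *
        ∑' n : ℤ, cexp (-Real.pi * (-2 * I / p + t) * n ^ 2)) (𝓝[>] 0)
      (𝓝 (1 / p * ∑ n ∈ Finset.range p, cexp (2 * Real.pi * I * n ^ 2 / p))) := by
  have hp0 : (p : ℂ) ≠ 0 := Nat.cast_ne_zero.mpr hp.ne'
  have hexp (n : ℂ) : (-Real.pi * (-2 * I / p) * n ^ 2 : ℂ) = 2 * Real.pi * I * n ^ 2 / p := by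
    ring
  have hlim := tendsto_cpow_half_mul_tsum_exp_add (l := 𝓝[>] (0 : ℝ)) (z := fun t ↦ (t : ℂ))
    (q := p) (β := -2 * I / p) ?_ hp (fun n ↦ ?_) fun m n ↦ ?_
  · simpa only [hexp] using hlim
  · refine tendsto_inv_nhdsGT_zero.congr fun t ↦ ?_
    rw [one_div, ← ofReal_inv, ofReal_re]
  · have : (-Real.pi * (-2 * I / p) * n ^ 2 : ℂ) = ((2 * Real.pi * n ^ 2 / p : ℝ) : ℂ) * I := by
      push_cast
      ring
    rw [this, norm_exp_ofReal_mul_I]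
  · rw [exp_eq_exp_iff_exists_int]
    refine ⟨m ^ 2 * p + 2 * m * n, ?_⟩
    push_cast
    field_simp
    ring

lemma tendsto_theta_at_I_mul_half (p : ℕ) {z : ℝ → ℂ}
    (hz : Tendsto (fun t ↦ (1 / z t).re) (𝓝[>] 0) atTop) :
    Tendsto (fun t ↦ z t ^ (1 / 2 : ℂ) * ∑' n : ℤ, cexp (-Real.pi * (I * p / 2 + z t) * n ^ 2))
      (𝓝[>] 0) (𝓝 (1 / 2 * (1 + (-I) ^ p))) := by
  have hlim := tendsto_cpow_half_mul_tsum_exp_add hz two_pos (β := I * p / 2) (fun n ↦ ?_)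
    fun m n ↦ ?_
  · have hexp (a : ℕ) := exp_neg_pi_mul_I_mul_half_mul_sq p a
    simp only [Int.cast_natCast, Int.even_coe_nat] at hexp
    have hsum : ∑ a ∈ Finset.range 2, cexp (-Real.pi * (I * p / 2) * a ^ 2) = 1 + (-I) ^ p := by
      rw [Finset.sum_range_succ, Finset.sum_range_one, hexp, hexp, if_pos Even.zero,
        if_neg Nat.not_even_one]
    simp only [hsum, Nat.cast_ofNat] at hlim
    exact hlim
  · rw [exp_neg_pi_mul_I_mul_half_mul_sq]
    split_ifs <;> simp
  · rw [exp_neg_pi_mul_I_mul_half_mul_sq, exp_neg_pi_mul_I_mul_half_mul_sq]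
    simp [Int.even_add]

/-- The sign of the quadratic Gauss sum modulo `p`: for odd `p`, it is `1` or `I` according to
whether `p` is `1` or `3` modulo `4`. -/
noncomputable def gaussSign (p : ℕ) : ℂ := (1 + I) * (1 + (-I) ^ p) / 2

lemma neg_two_mul_I_div_cpow_half {r : ℝ} (hr : 0 < r) :
    (-2 * I / r) ^ (1 / 2 : ℂ) = (1 - I) / √r := by
  have hsq : (-2 * I / r : ℂ) = (((√r)⁻¹ : ℝ) * (1 - I)) ^ 2 := by
    rw [mul_pow, ← ofReal_pow, inv_pow, Real.sq_sqrt hr.le, sub_sq, I_sq]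
    push_cast
    ring
  rw [hsq, one_div, sq_cpow_two_inv (by simpa [re_ofReal_mul] using hr)]
  push_cast
  ring

lemma tsum_exp_neg_pi_mul_sq {z : ℂ} (hz : 0 < z.re) :
    ∑' n : ℤ, cexp (-Real.pi * z * n ^ 2) =
      1 / z ^ (1 / 2 : ℂ) * ∑' n : ℤ, cexp (-Real.pi * (1 / z) * n ^ 2) := by
  have hfun := tsum_exp_neg_quadratic hz 0
  simp only [mul_zero, zero_mul, add_zero] at hfun
  rw [hfun]
  congr 2 with n
  ring_nf

lemma neg_two_mul_I_div_add_ofReal_im_ne_zero {r : ℝ} (hr : r ≠ 0) (t : ℝ) :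
    (-2 * I / r + t).im ≠ 0 := by
  have : -2 * I / r + t = ((-2 / r : ℝ) : ℂ) * I + t := by
    push_cast
    ring
  rw [this, add_im, im_ofReal_mul, I_im, ofReal_im]
  simpa using hr

lemma neg_two_mul_I_div_add_ofReal_ne_zero {r : ℝ} (hr : r ≠ 0) (t : ℝ) :
    -2 * I / r + t ≠ 0 :=
  fun h ↦ neg_two_mul_I_div_add_ofReal_im_ne_zero hr t (by rw [h, zero_im])

lemma tendsto_neg_two_mul_I_div_add_cpow_half {r : ℝ} (hr : 0 < r) :
    Tendsto (fun t : ℝ ↦ (-2 * I / r + t) ^ (1 / 2 : ℂ)) (𝓝[>] 0) (𝓝 ((1 - I) / √r)) := by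
  have hcont : ContinuousAt (fun t : ℝ ↦ (-2 * I / r + t) ^ (1 / 2 : ℂ)) 0 :=
    ContinuousAt.cpow (by fun_prop) continuousAt_const
      (Or.inr (neg_two_mul_I_div_add_ofReal_im_ne_zero hr.ne' 0))
  simpa only [ContinuousAt, ofReal_zero, add_zero, neg_two_mul_I_div_cpow_half hr] using
    hcont.tendsto.mono_left nhdsWithin_le_nhds

lemma tendsto_neg_I_mul_div_cpow_half {r : ℝ} (hr : 0 < r) :
    Tendsto (fun t : ℝ ↦ (-I * r / (2 * (-2 * I / r + t))) ^ (1 / 2 : ℂ)) (𝓝[>] 0)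
      (𝓝 (r / 2)) := by
  have hrc : (r : ℂ) ≠ 0 := ofReal_ne_zero.mpr hr.ne'
  have hvalue : -I * r / (2 * (-2 * I / r + (0 : ℝ))) = ((r / 2 : ℝ) : ℂ) ^ 2 * 1 := by
    push_cast
    field_simp
    ring
  have hcont : ContinuousAt
      (fun t : ℝ ↦ (-I * r / (2 * (-2 * I / r + t))) ^ (1 / 2 : ℂ)) 0 := by
    refine ContinuousAt.cpow ?_ continuousAt_const (Or.inl ?_)
    · exact continuousAt_const.div (by fun_prop)
        (mul_ne_zero two_ne_zero (neg_two_mul_I_div_add_ofReal_ne_zero hr.ne' 0))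
    · rw [hvalue, mul_one, ← ofReal_pow, ofReal_re]
      positivity
  have hlim := hcont.tendsto.mono_left (nhdsWithin_le_nhds (s := Set.Ioi 0))
  rw [hvalue, ofReal_sq_mul_cpow_half (half_pos hr) one_ne_zero, one_cpow, mul_one] at hlim
  simpa only [ofReal_div, ofReal_ofNat] using hlim

lemma neg_two_mul_I_div_add_ofReal_mul {r : ℝ} (hr : r ≠ 0) (t : ℝ) :
    (-2 * I / r + t) * r = -2 * I + t * r := by
  have : (r : ℂ) ≠ 0 := ofReal_ne_zero.mpr hr
  field_simp

lemma one_div_neg_two_mul_I_div_add_ofReal {r : ℝ} (hr : r ≠ 0) (t : ℝ) :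
    1 / (-2 * I / r + t) = I * r / 2 + t * (-I * r / (2 * (-2 * I / r + t))) := by
  have hne := neg_two_mul_I_div_add_ofReal_ne_zero hr t
  have hmul := neg_two_mul_I_div_add_ofReal_mul hr t
  generalize -2 * I / (r : ℂ) + t = w at *
  field_simp
  linear_combination (-I) * hmul + 2 * I_sq

lemma one_div_mul_neg_I_mul_div_re {r : ℝ} (hr : r ≠ 0) (t : ℝ) :
    (1 / (t * (-I * r / (2 * (-2 * I / r + t))))).re = 4 / r ^ 2 * t⁻¹ := by
  have hv : 1 / (-I * r / (2 * (-2 * I / r + t))) =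
      ((4 / r ^ 2 : ℝ) : ℂ) + ((2 / r * t : ℝ) : ℂ) * I := by
    have hr0 : (r : ℂ) ≠ 0 := ofReal_ne_zero.mpr hr
    have hne := neg_two_mul_I_div_add_ofReal_ne_zero hr t
    have hmul := neg_two_mul_I_div_add_ofReal_mul hr t
    generalize -2 * I / (r : ℂ) + t = w at *
    push_cast
    field_simp
    linear_combination (-2) * hmul - 2 * t * r * I_sq
  rw [one_div, mul_inv, ← one_div (_ / _), hv, ← ofReal_inv, re_ofReal_mul, add_re, ofReal_re,
    re_ofReal_mul, I_re, mul_zero, add_zero, mul_comm]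

/- The functional equation of the theta function exchanges its behaviour near `-2 * I / p` and near
`I * p / 2`; comparing the two limits gives the Landsberg–Schaar relation. -/
lemma sum_range_exp_two_pi_I_mul_sq_div {p : ℕ} (hp : 0 < p) :
    ∑ n ∈ Finset.range p, cexp (2 * Real.pi * I * n ^ 2 / p) = √p * gaussSign p := by
  have hp0 : (0 : ℝ) < p := Nat.cast_pos.mpr hp
  have hpc : (p : ℂ) ≠ 0 := Nat.cast_ne_zero.mpr hp.ne'
  set w : ℝ → ℂ := fun t ↦ -2 * I / p + t
  set v : ℝ → ℂ := fun t ↦ -I * p / (2 * w t)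
  have hw0 (t : ℝ) : w t ≠ 0 := neg_two_mul_I_div_add_ofReal_ne_zero hp0.ne' t
  have hv0 (t : ℝ) : v t ≠ 0 :=
    div_ne_zero (mul_ne_zero (neg_ne_zero.mpr I_ne_zero) hpc) (mul_ne_zero two_ne_zero (hw0 t))
  have hinv (t : ℝ) : 1 / w t = I * p / 2 + t * v t :=
    one_div_neg_two_mul_I_div_add_ofReal hp0.ne' t
  have hre (t : ℝ) : (1 / (t * v t)).re = 4 / p ^ 2 * t⁻¹ :=
    one_div_mul_neg_I_mul_div_re hp0.ne' t
  have hnear := tendsto_theta_at_neg_two_I_div hp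
  have hfar := tendsto_theta_at_I_mul_half p (z := fun t ↦ t * v t) (by
    simp only [hre]
    exact tendsto_inv_nhdsGT_zero.const_mul_atTop (by positivity))
  have hlimit := tendsto_nhds_unique_of_eventuallyEq hfar
    (((tendsto_neg_two_mul_I_div_add_cpow_half hp0).mul
      (tendsto_neg_I_mul_div_cpow_half hp0)).mul hnear) <| by
    filter_upwards [eventually_mem_nhdsWithin] with t ht
    have hwre : 0 < (w t).re := by simpa [w] using ht
    have : w t ^ (1 / 2 : ℂ) ≠ 0 := by simp [cpow_eq_zero_iff, hw0]
    rw [ofReal_mul_cpow ht (hv0 t), ← hinv]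
    change _ = w t ^ (1 / 2 : ℂ) * v t ^ (1 / 2 : ℂ) *
      (_ * ∑' n : ℤ, cexp (-Real.pi * w t * n ^ 2))
    rw [tsum_exp_neg_pi_mul_sq hwre]
    field_simp
  have : ((√p : ℝ) : ℂ) ≠ 0 := ofReal_ne_zero.mpr (Real.sqrt_pos.mpr hp0).ne'
  rw [gaussSign]
  generalize ∑ n ∈ Finset.range p, cexp (2 * Real.pi * I * n ^ 2 / p) = S at *
  generalize (-I) ^ p = u at *
  push_cast at hlimit
  field_simp at hlimit
  linear_combination (-(1 + I) / 2) * hlimit + (S / 2) * I_sq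

lemma neg_I_pow_eq_pow_mod_four (n : ℕ) : (-I) ^ n = (-I) ^ (n % 4) :=
  pow_eq_pow_mod n (by rw [neg_pow, I_pow_four]; norm_num)

lemma gaussSign_eq_one {p : ℕ} (hp : p % 4 = 1) : gaussSign p = 1 := by
  rw [gaussSign, neg_I_pow_eq_pow_mod_four, hp]
  linear_combination (-1 / 2) * I_sq

lemma gaussSign_eq_I {p : ℕ} (hp : p % 4 = 3) : gaussSign p = I := by
  rw [gaussSign, neg_I_pow_eq_pow_mod_four, hp]
  linear_combination ((-I - I ^ 2 + 1) / 2) * I_sq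

section

variable {p : ℕ} [Fact p.Prime]

/-- The quadratic character modulo `p`, with values in `ℂ`. -/
noncomputable def complexQuadraticChar (p : ℕ) [Fact p.Prime] : MulChar (ZMod p) ℂ :=
  (quadraticChar (ZMod p)).ringHomComp (Int.castRingHom ℂ)

lemma complexQuadraticChar_apply (a : ZMod p) :
    complexQuadraticChar p a = (quadraticChar (ZMod p) a : ℤ) := rfl

lemma sum_stdAddChar_sq (hp : p ≠ 2) :
    ∑ x : ZMod p, ZMod.stdAddChar (x ^ 2) = gaussSum (complexQuadraticChar p) ZMod.stdAddChar := by
  have hcard (a : ZMod p) :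
      ((Finset.univ.filter fun x : ZMod p ↦ x ^ 2 = a).card : ℂ) =
        (quadraticChar (ZMod p) a : ℤ) + 1 := by
    have hchar : ringChar (ZMod p) ≠ 2 := by rwa [ZMod.ringChar_zmod_n]
    have hsqrt := quadraticChar_card_sqrts hchar a
    rw [Set.toFinset_ofPred] at hsqrt
    exact_mod_cast hsqrt
  have hfiber (a : ZMod p) : ∑ x : ZMod p with x ^ 2 = a, ZMod.stdAddChar (x ^ 2) =
      ((quadraticChar (ZMod p) a : ℤ) + 1 : ℂ) * ZMod.stdAddChar a := by
    rw [← hcard, ← nsmul_eq_mul, ← Finset.sum_const]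
    exact Finset.sum_congr rfl fun x hx ↦ by rw [(Finset.mem_filter.mp hx).2]
  have hne : (ZMod.stdAddChar : AddChar (ZMod p) ℂ) ≠ 1 := fun h ↦
    ZMod.isPrimitive_stdAddChar p one_ne_zero (by rw [h, AddChar.mulShift_one])
  rw [← Finset.sum_fiberwise (g := fun x : ZMod p ↦ x ^ 2)]
  simp_rw [hfiber, add_mul, one_mul]
  rw [Finset.sum_add_distrib, AddChar.sum_eq_zero_of_ne_one hne, add_zero]
  rfl

lemma gaussSum_complexQuadraticChar (hp : p ≠ 2) :
    gaussSum (complexQuadraticChar p) ZMod.stdAddChar = √p * gaussSign p := by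
  rw [← sum_stdAddChar_sq hp, ← sum_range_exp_two_pi_I_mul_sq_div (Fact.out : p.Prime).pos,
    sum_eq_sum_range_natCast]
  refine Finset.sum_congr rfl fun n _ ↦ ?_
  rw [← Nat.cast_pow, stdAddChar_natCast, Nat.cast_pow]

lemma sum_complexQuadraticChar_mul_stdAddChar (hp : p ≠ 2) (k : ZMod p) :
    ∑ a : ZMod p, complexQuadraticChar p a * ZMod.stdAddChar (k * a) =
      complexQuadraticChar p k * (√p * gaussSign p) := by
  obtain rfl | hk := eq_or_ne k 0
  · have hchar : ringChar (ZMod p) ≠ 2 := by rwa [ZMod.ringChar_zmod_n]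
    simp only [zero_mul, AddChar.map_zero_eq_one, mul_one, complexQuadraticChar_apply]
    rw [← Int.cast_sum, quadraticChar_sum_zero hchar]
    simp
  · have hshift := gaussSum_mulShift (complexQuadraticChar p) ZMod.stdAddChar (Units.mk0 k hk)
    have hsq : complexQuadraticChar p k * complexQuadraticChar p k = 1 := by
      rw [complexQuadraticChar_apply, ← sq]
      exact_mod_cast quadraticChar_sq_one hk
    rw [← gaussSum_complexQuadraticChar hp, ← hshift, Units.val_mk0, ← mul_assoc, hsq, one_mul]
    rfl

lemma sum_legendreSym_mul_exp (hp : p ≠ 2) (k : ℕ) :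
    ∑ n ∈ Finset.range p,
        (legendreSym p n : ℂ) * cexp ((2 * Real.pi * k * (n / p) : ℝ) * I) =
      legendreSym p k * (√p * gaussSign p) := by
  have hchar (n : ℕ) : complexQuadraticChar p n = legendreSym p n := by
    rw [complexQuadraticChar_apply, legendreSym, Int.cast_natCast]
  rw [← hchar, ← sum_complexQuadraticChar_mul_stdAddChar hp k, sum_eq_sum_range_natCast]
  refine Finset.sum_congr rfl fun n _ ↦ ?_
  rw [hchar, ← Nat.cast_mul, stdAddChar_natCast]
  push_cast
  ring_nf

lemma sum_legendreSym_mul_cos (hp : p ≠ 2) (k : ℕ) :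
    ∑ n ∈ Finset.range p, (legendreSym p n : ℝ) * Real.cos (2 * Real.pi * k * (n / p)) =
      legendreSym p k * √p * (gaussSign p).re := by
  have h := congrArg re (sum_legendreSym_mul_exp hp k)
  simpa only [re_sum, ← ofReal_intCast, re_ofReal_mul, exp_ofReal_mul_I_re,
    mul_assoc] using h

lemma sum_legendreSym_mul_sin (hp : p ≠ 2) (k : ℕ) :
    ∑ n ∈ Finset.range p, (legendreSym p n : ℝ) * Real.sin (2 * Real.pi * k * (n / p)) =
      legendreSym p k * √p * (gaussSign p).im := by
  have h := congrArg im (sum_legendreSym_mul_exp hp k)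
  simpa only [im_sum, ← ofReal_intCast, im_ofReal_mul, exp_ofReal_mul_I_im,
    mul_assoc] using h

end

end QuadraticGaussSum

/-! ### The smoothed Fourier expansion of `L(α, p)` -/

section SmoothedExpansion

open Filter Finset Topology

/-- The trigonometric function `u cos(2πkβ) + v sin(2πkβ)` of frequency `k`; the phase `(u, v)` is
that of the Gauss sum. -/
noncomputable def trigMode (u v : ℝ) (k : ℕ) (β : ℝ) : ℝ :=
  u * Real.cos (2 * Real.pi * k * β) + v * Real.sin (2 * Real.pi * k * β)

/-- The second mixed difference of `f` along the steps `α` and `h` from `0`. -/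
def mixedDifference (f : ℝ → ℝ) (α h : ℝ) : ℝ :=
  f (α + h) - f α - f h + f 0

/-- The `k`-th Fourier coefficient of `L(α, p)` averaged over a window of length `h`, up to the
factor `(k/p) √p`. -/
noncomputable def smoothedCoeff (u v α h : ℝ) (k : ℕ) : ℝ :=
  -(1 / (2 * h * Real.pi ^ 2)) * (1 / (k : ℝ) ^ 2 * mixedDifference (trigMode u v k) α h)

/-- The numerator `s_k(α)` of the `k`-th Fourier coefficient of `L(α, p)`, which formally is
`(√p / π) ∑ (k/p) s_k(α) / k`. -/
noncomputable def fourierNumerator (u v : ℝ) (k : ℕ) (α : ℝ) : ℝ :=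
  u * Real.sin (2 * Real.pi * k * α) + v * (1 - Real.cos (2 * Real.pi * k * α))

lemma abs_mixedDifference_le {f : ℝ → ℝ} {M : ℝ} (hf : ∀ x, |f x| ≤ M) (α h : ℝ) :
    |mixedDifference f α h| ≤ 4 * M := by
  have h₁ := abs_le.mp (hf (α + h))
  have h₂ := abs_le.mp (hf α)
  have h₃ := abs_le.mp (hf h)
  have h₄ := abs_le.mp (hf 0)
  rw [mixedDifference, abs_le]
  constructor <;> linarith

lemma abs_mixedDifference_le_of_abs_sub_le {f : ℝ → ℝ} {h δ : ℝ}
    (hf : ∀ x, |f (x + h) - f x| ≤ δ) (α : ℝ) : |mixedDifference f α h| ≤ 2 * δ := by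
  have h₁ := abs_le.mp (hf α)
  have h₂ := abs_le.mp (hf 0)
  rw [zero_add] at h₂
  rw [mixedDifference, abs_le]
  constructor <;> linarith

lemma tendsto_mixedDifference_div {f : ℝ → ℝ} {α a b : ℝ} (hα : HasDerivAt f a α)
    (h0 : HasDerivAt f b 0) :
    Tendsto (fun h ↦ mixedDifference f α h / h) (𝓝[>] 0) (𝓝 (a - b)) := by
  refine (hα.tendsto_slope_zero_right.sub h0.tendsto_slope_zero_right).congr fun h ↦ ?_
  rw [mixedDifference, zero_add, smul_eq_mul, smul_eq_mul]
  ring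

lemma hasDerivAt_trigMode (u v : ℝ) (k : ℕ) (x : ℝ) :
    HasDerivAt (trigMode u v k) (2 * Real.pi * k * trigMode v (-u) k x) x := by
  have hlin : HasDerivAt (fun x : ℝ ↦ 2 * Real.pi * k * x) (2 * Real.pi * k) x := by
    simpa using (hasDerivAt_id x).const_mul (2 * Real.pi * k)
  refine ((hlin.cos.const_mul u).add (hlin.sin.const_mul v)).congr_deriv ?_
  rw [trigMode]
  ring

section UnitPhase

variable {u v : ℝ}

lemma abs_trigMode_le_one (huv : u ^ 2 + v ^ 2 = 1) (k : ℕ) (β : ℝ) : |trigMode u v k β| ≤ 1 := by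
  rw [trigMode, abs_le_one_iff_mul_self_le_one]
  nlinarith [Real.sin_sq_add_cos_sq (2 * Real.pi * k * β),
    sq_nonneg (u * Real.sin (2 * Real.pi * k * β) - v * Real.cos (2 * Real.pi * k * β))]

lemma abs_trigMode_sub_le (huv : u ^ 2 + v ^ 2 = 1) (k : ℕ) (x y : ℝ) :
    |trigMode u v k y - trigMode u v k x| ≤ 2 * Real.pi * k * |y - x| := by
  refine convex_univ.norm_image_sub_le_of_norm_hasDerivWithin_le
    (fun z _ ↦ (hasDerivAt_trigMode u v k z).hasDerivWithinAt) (fun z _ ↦ ?_)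
    (Set.mem_univ x) (Set.mem_univ y)
  have hk : 0 ≤ 2 * Real.pi * k := by positivity
  rw [Real.norm_eq_abs, abs_mul, abs_of_nonneg hk]
  exact mul_le_of_le_one_right hk (abs_trigMode_le_one (by rw [neg_sq, add_comm, huv]) k z)

lemma abs_smoothedCoeff {h : ℝ} (hh : 0 < h) (α : ℝ) (k : ℕ) :
    |smoothedCoeff u v α h k| =
      1 / (2 * h * Real.pi ^ 2) * (1 / (k : ℝ) ^ 2 * |mixedDifference (trigMode u v k) α h|) := by
  have := Real.pi_pos
  rw [smoothedCoeff, abs_mul, abs_mul, abs_neg, abs_of_nonneg (by positivity),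
    abs_of_nonneg (by positivity)]

lemma abs_smoothedCoeff_le_div_sq (huv : u ^ 2 + v ^ 2 = 1) {h : ℝ} (hh : 0 < h) (α : ℝ) (k : ℕ) :
    |smoothedCoeff u v α h k| ≤ 2 / (h * Real.pi ^ 2) * (1 / (k : ℝ) ^ 2) := by
  have hdiff := abs_mixedDifference_le (abs_trigMode_le_one huv k) α h
  calc |smoothedCoeff u v α h k|
      ≤ 1 / (2 * h * Real.pi ^ 2) * (1 / (k : ℝ) ^ 2 * (4 * 1)) := by
        rw [abs_smoothedCoeff hh]
        gcongr
    _ = 2 / (h * Real.pi ^ 2) * (1 / (k : ℝ) ^ 2) := by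
        field_simp
        norm_num

lemma abs_smoothedCoeff_le_div (huv : u ^ 2 + v ^ 2 = 1) {h : ℝ} (hh : 0 < h) (α : ℝ) (k : ℕ) :
    |smoothedCoeff u v α h k| ≤ 2 / Real.pi / k := by
  obtain rfl | hk := k.eq_zero_or_pos
  · simp [smoothedCoeff]
  have : (0 : ℝ) < k := Nat.cast_pos.mpr hk
  have hdiff := abs_mixedDifference_le_of_abs_sub_le (f := trigMode u v k)
    (h := h) (δ := 2 * Real.pi * k * h) (fun x ↦ by
      simpa [abs_of_pos hh] using abs_trigMode_sub_le huv k x (x + h)) α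
  calc |smoothedCoeff u v α h k|
      ≤ 1 / (2 * h * Real.pi ^ 2) * (1 / (k : ℝ) ^ 2 * (2 * (2 * Real.pi * k * h))) := by
        rw [abs_smoothedCoeff hh]
        gcongr
    _ = 2 / Real.pi / k := by
        field_simp

end UnitPhase

lemma tendsto_pi_mul_smoothedCoeff (u v α : ℝ) (k : ℕ) :
    Tendsto (fun h ↦ Real.pi * smoothedCoeff u v α h k) (𝓝[>] 0)
      (𝓝 (fourierNumerator u v k α / k)) := by
  obtain rfl | hk := k.eq_zero_or_pos
  · simp [smoothedCoeff]
  have : (0 : ℝ) < k := Nat.cast_pos.mpr hk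
  have hlim := (tendsto_mixedDifference_div (hasDerivAt_trigMode u v k α)
    (hasDerivAt_trigMode u v k 0)).const_mul (-(1 / (2 * Real.pi * (k : ℝ) ^ 2)))
  have hvalue : fourierNumerator u v k α / k = -(1 / (2 * Real.pi * (k : ℝ) ^ 2)) *
      (2 * Real.pi * k * trigMode v (-u) k α - 2 * Real.pi * k * trigMode v (-u) k 0) := by
    simp only [fourierNumerator, trigMode, mul_zero, Real.cos_zero, Real.sin_zero]
    field_simp
    ring
  rw [hvalue]
  refine hlim.congr fun h ↦ ?_
  rw [smoothedCoeff]
  field_simp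

lemma hasSum_one_div_sq_mul_cos {y : ℝ} (hy : |y| ≤ 1) :
    HasSum (fun n : ℕ ↦ 1 / (n : ℝ) ^ 2 * Real.cos (2 * Real.pi * n * y))
      (Real.pi ^ 2 * (y ^ 2 - |y| + 6⁻¹)) := by
  have hsum := hasSum_one_div_nat_pow_mul_cos one_ne_zero (x := |y|) ⟨abs_nonneg y, hy⟩
  have hbernoulli := bernoulliFun_two |y|
  rw [bernoulliFun] at hbernoulli
  rw [mul_one, hbernoulli, sq_abs] at hsum
  have hcos (n : ℕ) : Real.cos (2 * Real.pi * n * |y|) = Real.cos (2 * Real.pi * n * y) := by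
    rw [← Real.cos_abs (2 * Real.pi * n * y), abs_mul,
      abs_of_nonneg (show 0 ≤ 2 * Real.pi * n by positivity)]
  simp only [hcos] at hsum
  convert hsum using 1
  rw [Nat.factorial_two, Nat.cast_ofNat]
  ring

section Prime

variable {p : ℕ} [Fact p.Prime]

/-- The integral `∫₀^β L(t, p) dt` of the Legendre sum. -/
noncomputable def integratedLegendreSum (p : ℕ) [Fact p.Prime] (β : ℝ) : ℝ :=
  ∑ n ∈ range p, (legendreSym p n : ℝ) * max (β - n / p) 0

lemma abs_legendreSym_le_one (n : ℤ) : |(legendreSym p n : ℝ)| ≤ 1 := by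
  by_cases h : (n : ZMod p) = 0
  · simp [(legendreSym.eq_zero_iff p n).mpr h]
  · obtain h | h := legendreSym.eq_one_or_neg_one p h <;> simp [h]

lemma sum_range_legendreSym_eq_zero (hp : p ≠ 2) : ∑ n ∈ range p, (legendreSym p n : ℝ) = 0 := by
  simpa using sum_legendreSym_mul_cos hp 0

lemma sum_legendreSym_mul_cos_sub (hp : p ≠ 2) (β : ℝ) (k : ℕ) :
    ∑ n ∈ range p, (legendreSym p n : ℝ) * Real.cos (2 * Real.pi * k * (n / p - β)) =
      legendreSym p k * √p * trigMode (gaussSign p).re (gaussSign p).im k β := by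
  have hsplit (n : ℕ) :
      (legendreSym p n : ℝ) * Real.cos (2 * Real.pi * k * (n / p - β)) =
        Real.cos (2 * Real.pi * k * β) *
            (legendreSym p n * Real.cos (2 * Real.pi * k * (n / p))) +
          Real.sin (2 * Real.pi * k * β) *
            (legendreSym p n * Real.sin (2 * Real.pi * k * (n / p))) := by
    rw [mul_sub, Real.cos_sub]
    ring
  simp only [hsplit]
  rw [sum_add_distrib, ← mul_sum, ← mul_sum, sum_legendreSym_mul_cos hp,
    sum_legendreSym_mul_sin hp, trigMode]
  ring

lemma sum_legendreSym_mul_bernoulli (hp : p ≠ 2) (β : ℝ) :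
    ∑ n ∈ range p, (legendreSym p n : ℝ) * (((n : ℝ) / p - β) ^ 2 - |(n : ℝ) / p - β| + 6⁻¹) =
      ∑ n ∈ range p, (legendreSym p n : ℝ) * (((n : ℝ) / p) ^ 2 - n / p) -
        2 * β * ∑ n ∈ range p, (legendreSym p n : ℝ) * (n / p) -
        2 * integratedLegendreSum p β := by
  have hmax (y : ℝ) : max (-y) 0 = (|y| - y) / 2 := by
    obtain h | h := le_total 0 y
    · rw [abs_of_nonneg h, max_eq_right (by linarith)]
      ring
    · rw [abs_of_nonpos h, max_eq_left (by linarith)]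
      ring
  have hterm (n : ℕ) :
      (legendreSym p n : ℝ) * (((n : ℝ) / p - β) ^ 2 - |(n : ℝ) / p - β| + 6⁻¹) =
        legendreSym p n * (((n : ℝ) / p) ^ 2 - n / p) -
          2 * β * (legendreSym p n * (n / p)) - 2 * (legendreSym p n * max (β - n / p) 0) +
          (β ^ 2 + β + 6⁻¹) * legendreSym p n := by
    rw [← neg_sub (n / p : ℝ) β, hmax]
    ring
  simp only [hterm]
  rw [sum_add_distrib, sum_sub_distrib, sum_sub_distrib, ← mul_sum, ← mul_sum, ← mul_sum,
    sum_range_legendreSym_eq_zero hp, mul_zero, add_zero, integratedLegendreSum]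

lemma hasSum_legendreSym_mul_trigMode (hp : p ≠ 2) {β : ℝ} (h0 : 0 ≤ β) (h1 : β ≤ 1) :
    HasSum (fun k : ℕ ↦ 1 / (k : ℝ) ^ 2 *
        (legendreSym p k * √p * trigMode (gaussSign p).re (gaussSign p).im k β))
      (Real.pi ^ 2 * (∑ n ∈ range p, (legendreSym p n : ℝ) * (((n : ℝ) / p) ^ 2 - n / p) -
        2 * β * ∑ n ∈ range p, (legendreSym p n : ℝ) * (n / p) -
        2 * integratedLegendreSum p β)) := by
  have hp0 : (0 : ℝ) < p := Nat.cast_pos.mpr (Fact.out : p.Prime).pos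
  have hterm : ∀ n ∈ range p, HasSum
      (fun k : ℕ ↦ (legendreSym p n : ℝ) *
        (1 / (k : ℝ) ^ 2 * Real.cos (2 * Real.pi * k * ((n : ℝ) / p - β))))
      (legendreSym p n * (Real.pi ^ 2 * (((n : ℝ) / p - β) ^ 2 - |(n : ℝ) / p - β| + 6⁻¹))) := by
    intro n hn
    have hn1 : (n : ℝ) / p ≤ 1 := by
      rw [div_le_one hp0]
      exact_mod_cast (mem_range.mp hn).le
    have hn0 : 0 ≤ (n : ℝ) / p := by positivity
    exact (hasSum_one_div_sq_mul_cos (abs_le.mpr ⟨by linarith, by linarith⟩)).mul_left _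
  convert hasSum_sum hterm using 1
  · funext k
    rw [← sum_legendreSym_mul_cos_sub hp, mul_sum]
    exact sum_congr rfl fun n _ ↦ mul_left_comm _ _ _
  · rw [← sum_legendreSym_mul_bernoulli hp, mul_sum]
    exact sum_congr rfl fun n _ ↦ mul_left_comm _ _ _

lemma hasSum_legendreSym_mul_smoothedCoeff (hp : p ≠ 2) {α h : ℝ} (h0 : 0 ≤ α) (hh : 0 < h)
    (h1 : α + h ≤ 1) :
    HasSum (fun k : ℕ ↦
        √p * (legendreSym p k * smoothedCoeff (gaussSign p).re (gaussSign p).im α h k))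
      (mixedDifference (integratedLegendreSum p) α h / h) := by
  have hsum := ((((hasSum_legendreSym_mul_trigMode hp (by linarith) h1).sub
    (hasSum_legendreSym_mul_trigMode hp h0 (by linarith))).sub
    (hasSum_legendreSym_mul_trigMode hp hh.le (by linarith))).add
    (hasSum_legendreSym_mul_trigMode hp le_rfl zero_le_one)).mul_left
    (-(1 / (2 * h * Real.pi ^ 2)))
  have := Real.pi_pos
  convert hsum using 1
  · rfl
  · funext k
    rw [smoothedCoeff, mixedDifference]
    ring
  · rw [mixedDifference]
    field_simp
    ring

lemma sum_Icc_legendreSym_eq_sum_range_ite {A : ℕ} (hA : A < p) :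
    ∑ n ∈ Icc 1 A, (legendreSym p n : ℝ) =
      ∑ n ∈ range p, if n ≤ A then (legendreSym p n : ℝ) else 0 := by
  rw [← sum_filter]
  refine sum_subset (fun n hn ↦ ?_) fun n hn hn' ↦ ?_
  · rw [mem_Icc] at hn
    rw [mem_filter, mem_range]
    lia
  · rw [mem_filter] at hn
    rw [mem_Icc] at hn'
    obtain rfl : n = 0 := by lia
    simp

lemma abs_max_sub_max_sub_ite_le {β h x : ℝ} (hh : 0 ≤ h) :
    |max (β + h - x) 0 - max (β - x) 0 - if x ≤ β then h else 0| ≤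
      if β < x ∧ x ≤ β + h then h else 0 := by
  split_ifs with h₁ h₂ h₂
  · linarith
  · rw [max_eq_left (by linarith), max_eq_left (by linarith)]
    ring_nf
    simp
  · rw [max_eq_left (by linarith), max_eq_right (by linarith), sub_zero, sub_zero,
      abs_of_nonneg (by linarith)]
    linarith
  · have : β + h < x := by
      by_contra hx
      exact h₂ ⟨not_le.mp h₁, not_lt.mp hx⟩
    rw [max_eq_right (by linarith), max_eq_right (by linarith)]
    simp

lemma abs_integratedLegendreSum_sub_le {β h : ℝ} (h0 : 0 ≤ β) (hh : 0 < h) (h1 : β + h < 1) :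
    |integratedLegendreSum p (β + h) - integratedLegendreSum p β -
      h * ∑ n ∈ Icc 1 ⌊β * p⌋₊, (legendreSym p n : ℝ)| ≤ h * (h * p + 1) := by
  have hp0 : (0 : ℝ) < p := Nat.cast_pos.mpr (Fact.out : p.Prime).pos
  have hle {γ : ℝ} (hγ : 0 ≤ γ) (n : ℕ) : n ≤ ⌊γ * p⌋₊ ↔ (n : ℝ) / p ≤ γ := by
    rw [Nat.le_floor_iff (by positivity), div_le_iff₀ hp0]
  have hAp : ⌊β * p⌋₊ < p := by
    rw [Nat.floor_lt (by positivity)]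
    nlinarith
  have hsum : integratedLegendreSum p (β + h) - integratedLegendreSum p β -
      h * ∑ n ∈ Icc 1 ⌊β * p⌋₊, (legendreSym p n : ℝ) =
      ∑ n ∈ range p, (legendreSym p n : ℝ) *
        (max (β + h - n / p) 0 - max (β - n / p) 0 - if (n : ℝ) / p ≤ β then h else 0) := by
    rw [sum_Icc_legendreSym_eq_sum_range_ite hAp, integratedLegendreSum, integratedLegendreSum,
      mul_sum, ← sum_sub_distrib, ← sum_sub_distrib]
    refine sum_congr rfl fun n _ ↦ ?_
    simp only [hle h0]
    split_ifs <;> ring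
  have hcard : (#(Ioc ⌊β * p⌋₊ ⌊(β + h) * p⌋₊) : ℝ) ≤ h * p + 1 := by
    rw [Nat.card_Ioc, Nat.cast_sub (Nat.floor_le_floor (by gcongr; linarith))]
    linarith [Nat.floor_le (show 0 ≤ (β + h) * p by positivity), Nat.lt_floor_add_one (β * (p : ℝ))]
  calc _ ≤ ∑ n ∈ range p, if β < (n : ℝ) / p ∧ (n : ℝ) / p ≤ β + h then h else 0 := by
        rw [hsum]
        refine (abs_sum_le_sum_abs _ _).trans (sum_le_sum fun n _ ↦ ?_)
        rw [abs_mul]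
        exact (mul_le_of_le_one_left (abs_nonneg _) (abs_legendreSym_le_one n)).trans
          (abs_max_sub_max_sub_ite_le hh.le)
    _ ≤ ∑ _n ∈ Ioc ⌊β * p⌋₊ ⌊(β + h) * p⌋₊, h := by
        rw [← sum_filter]
        refine sum_le_sum_of_subset_of_nonneg (fun n hn ↦ ?_) fun _ _ _ ↦ hh.le
        rw [mem_filter, ← hle (by linarith), ← not_le, ← hle h0, not_le] at hn
        exact mem_Ioc.mpr hn.2
    _ ≤ h * (h * p + 1) := by
        rw [sum_const, nsmul_eq_mul, mul_comm]
        gcongr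

lemma abs_legendreSum_sub_tsum_le (hp : p ≠ 2) {α h : ℝ} (h0 : 0 ≤ α) (hh : 0 < h)
    (h1 : α + h < 1) :
    |(legendreSum α p : ℝ) - √p * ∑' k : ℕ,
      (legendreSym p k : ℝ) * smoothedCoeff (gaussSign p).re (gaussSign p).im α h k| ≤
      2 * (h * p + 1) := by
  rw [← tsum_mul_left, (hasSum_legendreSym_mul_smoothedCoeff hp h0 hh h1.le).tsum_eq]
  have hα := abs_integratedLegendreSum_sub_le (p := p) h0 hh h1
  have hzero := abs_integratedLegendreSum_sub_le (p := p) le_rfl hh (by linarith : 0 + h < 1)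
  have hL : (legendreSum α p : ℝ) = ∑ n ∈ Icc 1 ⌊α * p⌋₊, (legendreSym p n : ℝ) := by
    rw [legendreSum, dif_pos (Fact.out : p.Prime), Int.cast_sum]
  rw [← hL] at hα
  rw [zero_add, zero_mul, Nat.floor_zero, Icc_eq_empty (by norm_num), sum_empty, mul_zero,
    sub_zero] at hzero
  have hdiff : (legendreSum α p : ℝ) - mixedDifference (integratedLegendreSum p) α h / h =
      ((integratedLegendreSum p h - integratedLegendreSum p 0) -
        (integratedLegendreSum p (α + h) - integratedLegendreSum p α - h * legendreSum α p)) /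
        h := by
    rw [mixedDifference]
    field_simp
    ring
  rw [hdiff, abs_div, abs_of_pos hh, div_le_iff₀ hh]
  linarith [abs_sub (integratedLegendreSum p h - integratedLegendreSum p 0)
    (integratedLegendreSum p (α + h) - integratedLegendreSum p α - h * legendreSum α p)]

end Prime

end SmoothedExpansion

/-! ### Grouping by squarefree cores -/

section SquarefreeCore

open Finset Filter
open scoped NumberTheorySymbols

/-- The squarefree part `s` in a decomposition `n = u² s`. -/
noncomputable def squarefreeCore (n : ℕ) : ℕ := (Nat.sq_mul_squarefree n).choose

/-- The number `u` in the decomposition `n = u² s` with `s` the squarefree core of `n`. -/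
noncomputable def squareRootPart (n : ℕ) : ℕ := (Nat.sq_mul_squarefree n).choose_spec.choose

lemma squareRootPart_sq_mul_squarefreeCore (n : ℕ) :
    squareRootPart n ^ 2 * squarefreeCore n = n :=
  (Nat.sq_mul_squarefree n).choose_spec.choose_spec.1

lemma squarefree_squarefreeCore (n : ℕ) : Squarefree (squarefreeCore n) :=
  (Nat.sq_mul_squarefree n).choose_spec.choose_spec.2

lemma squarefreeCore_pos (n : ℕ) : 0 < squarefreeCore n :=
  Nat.pos_of_ne_zero (squarefree_squarefreeCore n).ne_zero

lemma squareRootPart_pos {n : ℕ} (hn : 0 < n) : 0 < squareRootPart n := by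
  refine Nat.pos_of_ne_zero fun h ↦ hn.ne' ?_
  rw [← squareRootPart_sq_mul_squarefreeCore n, h, zero_pow two_ne_zero, zero_mul]

lemma squarefreeCore_dvd (n : ℕ) : squarefreeCore n ∣ n :=
  Dvd.intro_left _ (squareRootPart_sq_mul_squarefreeCore n)

lemma squareRootPart_sq_dvd (n : ℕ) : squareRootPart n ^ 2 ∣ n :=
  Dvd.intro _ (squareRootPart_sq_mul_squarefreeCore n)

lemma natCast_eq_sq_mul_of_squarefreeCore_eq {n s : ℕ} (h : squarefreeCore n = s) :
    (n : ℝ) = (squareRootPart n : ℝ) ^ 2 * s := by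
  rw [← h]
  exact_mod_cast (squareRootPart_sq_mul_squarefreeCore n).symm

lemma isSquare_of_squarefreeCore_eq_one {n : ℕ} (h : squarefreeCore n = 1) : IsSquare n := by
  refine ⟨squareRootPart n, ?_⟩
  rw [← sq, ← mul_one (squareRootPart n ^ 2), ← h, squareRootPart_sq_mul_squarefreeCore]

lemma injOn_squareRootPart (T : Finset ℕ) (s : ℕ) :
    Set.InjOn squareRootPart ({n ∈ T | squarefreeCore n = s} : Finset ℕ) := by
  intro a ha b hb hab
  rw [mem_coe, mem_filter] at ha hb
  rw [← squareRootPart_sq_mul_squarefreeCore a, ← squareRootPart_sq_mul_squarefreeCore b, ha.2,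
    hb.2, hab]

lemma jacobiSym_squarefreeCore {n m : ℕ} (h : n.Coprime m) :
    J(squarefreeCore n | m) = J(n | m) := by
  have hroot : (squareRootPart n : ℤ).gcd m = 1 := by
    rw [Int.gcd_natCast_natCast]
    exact h.coprime_dvd_left ((dvd_pow_self _ two_ne_zero).trans (squareRootPart_sq_dvd n))
  conv_rhs => rw [← squareRootPart_sq_mul_squarefreeCore n]
  rw [Nat.cast_mul, Nat.cast_pow, jacobiSym.mul_left, jacobiSym.sq_one' hroot, one_mul]

lemma sum_one_div_sq_le_two (F : Finset ℕ) : ∑ u ∈ F, 1 / (u : ℝ) ^ 2 ≤ 2 := by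
  have hzeta := sum_le_hasSum F (fun _ _ ↦ by positivity) hasSum_zeta_two
  nlinarith [Real.pi_lt_d2, Real.pi_pos]

lemma sum_one_div_sq_le_of_le {v : ℕ} (hv : v ≠ 0) {F : Finset ℕ} (hF : ∀ u ∈ F, v ≤ u) :
    ∑ u ∈ F, 1 / (u : ℝ) ^ 2 ≤ 1 / (v : ℝ) ^ 2 + 1 / v := by
  set W := max (F.sup id) v
  have hsub : F ⊆ insert v (Ioc v W) := fun u hu ↦ by
    have hsup : u ≤ F.sup id := le_sup (f := id) hu
    have := hF u hu
    rw [mem_insert, mem_Ioc]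
    omega
  calc ∑ u ∈ F, 1 / (u : ℝ) ^ 2
      ≤ ∑ u ∈ insert v (Ioc v W), 1 / (u : ℝ) ^ 2 :=
        sum_le_sum_of_subset_of_nonneg hsub fun _ _ _ ↦ by positivity
    _ = 1 / (v : ℝ) ^ 2 + ∑ u ∈ Ioc v W, 1 / (u : ℝ) ^ 2 := sum_insert (by simp)
    _ ≤ 1 / (v : ℝ) ^ 2 + 1 / v := by
        gcongr
        simp only [one_div]
        exact (sum_Ioc_inv_sq_le_sub hv (le_max_right _ _)).trans
          (sub_le_self _ (by positivity))

lemma summable_one_div_squarefreeCore_mul :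
    Summable fun n : ℕ ↦ 1 / ((squarefreeCore n : ℝ) * n) := by
  have hsq : Summable fun n : ℕ ↦ 1 / (n : ℝ) ^ 2 := hasSum_zeta_two.summable
  have hprod := hsq.mul_of_nonneg hsq (fun _ ↦ by positivity) fun _ ↦ by positivity
  have hinj : Function.Injective fun n : ℕ ↦ (squarefreeCore n, squareRootPart n) := by
    intro a b hab
    rw [Prod.mk.injEq] at hab
    rw [← squareRootPart_sq_mul_squarefreeCore a, ← squareRootPart_sq_mul_squarefreeCore b, hab.1,
      hab.2]
  refine (hprod.comp_injective hinj).congr fun n ↦ ?_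
  rw [Function.comp, natCast_eq_sq_mul_of_squarefreeCore_eq (n := n) rfl]
  field_simp

end SquarefreeCore

section CoreVariance

open Finset Filter
open scoped NumberTheorySymbols

/-- The total weight of the elements of `T` with squarefree core `s`. -/
noncomputable def groupedWeight (T : Finset ℕ) (w : ℕ → ℝ) (s : ℕ) : ℝ :=
  ∑ n ∈ T with squarefreeCore n = s, w n

/-- The sum of the squares of the grouped weights: the mean square of `∑ n ∈ T, w n * J(n | p)` over
`p` to be expected from the orthogonality of distinct real characters. -/
noncomputable def coreVariance (T : Finset ℕ) (w : ℕ → ℝ) : ℝ :=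
  ∑ s ∈ T.image squarefreeCore, groupedWeight T w s ^ 2

variable {T : Finset ℕ} {w : ℕ → ℝ} {C : ℝ}

lemma jacobiLinearForm_groupedWeight {m : ℕ} (hT : ∀ n ∈ T, n.Coprime m) :
    jacobiLinearForm (T.image squarefreeCore) (groupedWeight T w) m = jacobiLinearForm T w m := by
  rw [jacobiLinearForm, jacobiLinearForm,
    ← sum_fiberwise_of_maps_to (s := T) fun n hn ↦ mem_image_of_mem squarefreeCore hn]
  refine sum_congr rfl fun s _ ↦ ?_
  rw [groupedWeight, sum_mul]
  refine sum_congr rfl fun n hn ↦ ?_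
  rw [mem_filter] at hn
  rw [← jacobiSym_squarefreeCore (hT n hn.1), hn.2]

lemma abs_groupedWeight_le_sum_image {s : ℕ} {g : ℕ → ℝ}
    (hg : ∀ n ∈ T, squarefreeCore n = s → |w n| ≤ g (squareRootPart n)) :
    |groupedWeight T w s| ≤ ∑ u ∈ {n ∈ T | squarefreeCore n = s}.image squareRootPart, g u := by
  rw [sum_image (injOn_squareRootPart T s)]
  refine (abs_sum_le_sum_abs _ _).trans (sum_le_sum fun n hn ↦ ?_)
  rw [mem_filter] at hn
  exact hg n hn.1 hn.2

lemma abs_groupedWeight_le (hC : 0 ≤ C) (hw : ∀ n ∈ T, |w n| ≤ C / n) (s : ℕ) :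
    |groupedWeight T w s| ≤ 2 * C / s := by
  refine (abs_groupedWeight_le_sum_image (g := fun u ↦ C / s * (1 / (u : ℝ) ^ 2)) ?_).trans ?_
  · intro n hn hcore
    refine (hw n hn).trans (le_of_eq ?_)
    rw [natCast_eq_sq_mul_of_squarefreeCore_eq hcore]
    field_simp
  · calc ∑ u ∈ {n ∈ T | squarefreeCore n = s}.image squareRootPart, C / s * (1 / (u : ℝ) ^ 2)
        ≤ C / s * 2 := by
          rw [← mul_sum]
          gcongr
          exact sum_one_div_sq_le_two _
      _ = 2 * C / s := by ring

lemma coreVariance_le_sum (hC : 0 ≤ C) (hw : ∀ n ∈ T, |w n| ≤ C / n) :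
    coreVariance T w ≤ 2 * C ^ 2 * ∑ n ∈ T, 1 / ((squarefreeCore n : ℝ) * n) := by
  rw [← sum_fiberwise_of_maps_to fun n hn ↦ mem_image_of_mem squarefreeCore hn, mul_sum,
    coreVariance]
  refine sum_le_sum fun s hs ↦ ?_
  have hs0 : (0 : ℝ) < s := by
    obtain ⟨n, -, rfl⟩ := mem_image.1 hs
    exact_mod_cast squarefreeCore_pos n
  have hfiber : |groupedWeight T w s| ≤
      C * s * ∑ n ∈ T with squarefreeCore n = s, 1 / ((squarefreeCore n : ℝ) * n) := by
    rw [mul_sum]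
    refine (abs_sum_le_sum_abs _ _).trans (sum_le_sum fun n hn ↦ ?_)
    rw [mem_filter] at hn
    refine (hw n hn.1).trans (le_of_eq ?_)
    rw [hn.2]
    field_simp
  calc groupedWeight T w s ^ 2 = |groupedWeight T w s| * |groupedWeight T w s| := by
        rw [← sq, sq_abs]
    _ ≤ 2 * C / s *
          (C * s * ∑ n ∈ T with squarefreeCore n = s, 1 / ((squarefreeCore n : ℝ) * n)) :=
        mul_le_mul (abs_groupedWeight_le hC hw s) hfiber (abs_nonneg _) (by positivity)
    _ = 2 * C ^ 2 * ∑ n ∈ T with squarefreeCore n = s, 1 / ((squarefreeCore n : ℝ) * n) := by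
        field_simp

lemma exists_forall_coreVariance_le (hC : 0 ≤ C) {η : ℝ} (hη : 0 < η) :
    ∃ K : ℕ, ∀ (T : Finset ℕ) (w : ℕ → ℝ), (∀ n ∈ T, K < n) → (∀ n ∈ T, |w n| ≤ C / n) →
      coreVariance T w ≤ η := by
  have hδ : 0 < η / (2 * C ^ 2 + 1) := by positivity
  obtain ⟨F, hF⟩ := summable_iff_vanishing_norm.1 summable_one_div_squarefreeCore_mul _ hδ
  refine ⟨F.sup id, fun T w hT hw ↦ (coreVariance_le_sum hC hw).trans ?_⟩
  have hdisj : Disjoint T F := disjoint_left.2 fun n hnT hnF ↦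
    (hT n hnT).not_ge (le_sup (f := id) hnF)
  calc 2 * C ^ 2 * ∑ n ∈ T, 1 / ((squarefreeCore n : ℝ) * n)
      ≤ (2 * C ^ 2 + 1) * (η / (2 * C ^ 2 + 1)) := by
        gcongr
        · linarith
        · exact (le_abs_self _).trans (hF T hdisj).le
    _ = η := by field_simp

theorem eventually_sum_jacobiLinearForm_sq_le_coreVariance {θ τ A ε : ℝ} (hθ : 0 < θ)
    (hτ : 0 < τ) (hθτ : 2 * θ + τ < 1) (hτ' : τ ≤ 0.95) (hA : 1 < 2 * A * θ) (hC : 0 ≤ C)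
    (hε : 0 < ε) :
    ∀ᶠ N : ℕ in atTop, ∀ (T : Finset ℕ) (w : ℕ → ℝ) (r : ℕ), (r = 1 ∨ r = 3) →
      (∀ n ∈ T, 0 < n ∧ (n : ℝ) ≤ (N : ℝ) ^ τ) → (∀ n ∈ T, |w n| ≤ C / n) →
      ∑ p ∈ largePrimes N r, jacobiLinearForm T w p ^ 2 ≤
        (A * coreVariance T w + ε) * N / Real.log N := by
  filter_upwards [eventually_sum_jacobiLinearForm_sq_le hθ hτ hθτ hA (2 * C) hε,
    eventually_ge_atTop 1] with N hmean hN T w r hr hT hw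
  have hcore : ∀ s ∈ T.image squarefreeCore, Squarefree s ∧ (s : ℝ) ≤ (N : ℝ) ^ τ := by
    intro s hs
    obtain ⟨n, hn, rfl⟩ := mem_image.1 hs
    have hle : (squarefreeCore n : ℝ) ≤ n :=
      mod_cast Nat.le_of_dvd (hT n hn).1 (squarefreeCore_dvd n)
    exact ⟨squarefree_squarefreeCore n, hle.trans (hT n hn).2⟩
  have hcoprime : ∀ p ∈ largePrimes N r, ∀ n ∈ T, n.Coprime p := by
    intro p hp n hn
    obtain ⟨-, hprime, -, hlarge⟩ := mem_largePrimes.1 hp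
    have hnp : (n : ℝ) < p := ((hT n hn).2.trans
      (Real.rpow_le_rpow_of_exponent_le (mod_cast hN) hτ')).trans_lt hlarge
    exact (Nat.coprime_of_lt_prime (hT n hn).1.ne' (mod_cast hnp) hprime).symm
  calc ∑ p ∈ largePrimes N r, jacobiLinearForm T w p ^ 2
      = ∑ p ∈ largePrimes N r,
          jacobiLinearForm (T.image squarefreeCore) (groupedWeight T w) p ^ 2 :=
        sum_congr rfl fun p hp ↦ by rw [jacobiLinearForm_groupedWeight (hcoprime p hp)]
    _ ≤ (A * coreVariance T w + ε) * N / Real.log N :=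
        hmean _ _ r hr hcore fun s _ ↦ abs_groupedWeight_le hC hw s

end CoreVariance

section VarianceBounds

open Finset

variable {T : Finset ℕ} {w : ℕ → ℝ}

/-- The squares up to `K` that are prime to `6`. -/
noncomputable def squaresCoprimeSix (K : ℕ) : Finset ℕ :=
  {n ∈ Ioc 0 K | n.Coprime 6 ∧ IsSquare n}

/-- The non-squares up to `K` that are prime to `6`. -/
noncomputable def nonsquaresCoprimeSix (K : ℕ) : Finset ℕ :=
  {n ∈ Ioc 0 K | n.Coprime 6 ∧ ¬ IsSquare n}

lemma one_point_zero_six_le_sum_squaresCoprimeSix {K : ℕ} (hK : 49 ≤ K) :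
    1.06 ≤ ∑ n ∈ squaresCoprimeSix K, 1 / (n : ℝ) := by
  have hsub : ({1, 25, 49} : Finset ℕ) ⊆ squaresCoprimeSix K := by
    simp only [insert_subset_iff, singleton_subset_iff, squaresCoprimeSix, mem_filter, mem_Ioc]
    exact ⟨⟨by omega, by norm_num, 1, rfl⟩, ⟨by omega, by norm_num, 5, rfl⟩,
      ⟨by omega, by norm_num, 7, rfl⟩⟩
  calc (1.06 : ℝ) ≤ ∑ n ∈ {1, 25, 49}, 1 / ((n : ℕ) : ℝ) := by norm_num
    _ ≤ _ := sum_le_sum_of_subset_of_nonneg hsub fun _ _ _ ↦ by positivity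

lemma mod_six_eq_one_or_five_of_coprime {n : ℕ} (h : n.Coprime 6) : n % 6 = 1 ∨ n % 6 = 5 := by
  have h2 : ¬ 2 ∣ n := fun h2 ↦ Nat.not_coprime_of_dvd_of_dvd one_lt_two h2 (by norm_num) h
  have h3 : ¬ 3 ∣ n := fun h3 ↦ Nat.not_coprime_of_dvd_of_dvd (by norm_num) h3 (by norm_num) h
  omega

-- For `k ≥ 1` the `k`-th summand is at most `(1 / (k + 1/2) - 1 / (k + 3/2)) / 18`.
lemma sum_range_one_div_sq_add_one_div_sq_le (K : ℕ) :
    ∑ k ∈ range (K + 1), (1 / (6 * k + 5 : ℝ) ^ 2 + 1 / (6 * k + 7 : ℝ) ^ 2) ≤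
      0.0975 - 1 / (18 * (K + 3 / 2 : ℝ)) := by
  induction K with
  | zero => norm_num
  | succ K ih =>
    have hpair : 1 / (6 * (K + 1 : ℝ) + 5) ^ 2 + 1 / (6 * (K + 1 : ℝ) + 7) ^ 2 ≤
        1 / (18 * (K + 3 / 2 : ℝ)) - 1 / (18 * (K + 1 + 3 / 2 : ℝ)) := by
      have htelescope : 1 / (18 * (K + 3 / 2 : ℝ)) - 1 / (18 * (K + 1 + 3 / 2 : ℝ)) =
          2 / (9 * (2 * K + 3) * (2 * K + 5)) := by
        field_simp
        ring
      rw [htelescope, div_add_div _ _ (by positivity) (by positivity),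
        div_le_div_iff₀ (by positivity) (by positivity)]
      have : (0 : ℝ) ≤ K := K.cast_nonneg
      nlinarith [sq_nonneg ((K : ℝ) + 2)]
    rw [sum_range_succ]
    push_cast
    linarith

lemma sum_one_div_sq_le_of_coprime_six {S : Finset ℕ} (hS : ∀ s ∈ S, 2 ≤ s ∧ s.Coprime 6) :
    ∑ s ∈ S, 1 / (s : ℝ) ^ 2 ≤ 0.0975 := by
  obtain ⟨K, hK⟩ : ∃ K, ∀ s ∈ S, s ≤ K := ⟨S.sup id, fun s hs ↦ le_sup (f := id) hs⟩
  have hsub : S ⊆ (range (K + 1)).biUnion fun k ↦ {6 * k + 5, 6 * k + 7} := by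
    intro s hs
    obtain ⟨h2, h6⟩ := hS s hs
    have hsK := hK s hs
    simp only [mem_biUnion, mem_range, mem_insert, mem_singleton]
    rcases mod_six_eq_one_or_five_of_coprime h6 with h | h
    · exact ⟨s / 6 - 1, by omega⟩
    · exact ⟨s / 6, by omega⟩
  have hdisj : (range (K + 1) : Set ℕ).PairwiseDisjoint
      fun k ↦ ({6 * k + 5, 6 * k + 7} : Finset ℕ) := by
    intro a _ b _ hab
    simp only [Function.onFun, disjoint_left, mem_insert, mem_singleton]
    omega
  calc ∑ s ∈ S, 1 / (s : ℝ) ^ 2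
      ≤ ∑ s ∈ (range (K + 1)).biUnion fun k ↦ {6 * k + 5, 6 * k + 7}, 1 / (s : ℝ) ^ 2 :=
        sum_le_sum_of_subset_of_nonneg hsub fun _ _ _ ↦ by positivity
    _ = ∑ k ∈ range (K + 1), (1 / (6 * k + 5 : ℝ) ^ 2 + 1 / (6 * k + 7 : ℝ) ^ 2) := by
        rw [sum_biUnion hdisj]
        refine sum_congr rfl fun k _ ↦ ?_
        rw [sum_pair (by omega)]
        push_cast
        rfl
    _ ≤ 0.0975 - 1 / (18 * (K + 3 / 2 : ℝ)) := sum_range_one_div_sq_add_one_div_sq_le K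
    _ ≤ 0.0975 := sub_le_self _ (by positivity)

lemma abs_groupedWeight_nonsquaresCoprimeSix_le {K : ℕ} {κ : ℝ} (hκ : 0 ≤ κ)
    (hw : ∀ n ∈ nonsquaresCoprimeSix K, |w n| ≤ κ / n) (s : ℕ) :
    |groupedWeight (nonsquaresCoprimeSix K) w s| ≤
      κ / s * ∑ n ∈ squaresCoprimeSix K, 1 / (n : ℝ) := by
  set U := {n ∈ nonsquaresCoprimeSix K | squarefreeCore n = s}.image squareRootPart
  have hU : U.image (· ^ 2) ⊆ squaresCoprimeSix K := by
    intro m hm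
    simp only [U, mem_image, mem_filter, nonsquaresCoprimeSix, mem_Ioc] at hm
    obtain ⟨_, ⟨n, ⟨⟨⟨hn1, hnK⟩, hn6, -⟩, -⟩, rfl⟩, rfl⟩ := hm
    have hdvd := squareRootPart_sq_dvd n
    rw [squaresCoprimeSix, mem_filter, mem_Ioc]
    exact ⟨⟨Nat.pow_pos (squareRootPart_pos hn1), (Nat.le_of_dvd hn1 hdvd).trans hnK⟩,
      hn6.coprime_dvd_left hdvd, IsSquare.sq _⟩
  calc |groupedWeight (nonsquaresCoprimeSix K) w s|
      ≤ ∑ u ∈ U, κ / s * (1 / ((u ^ 2 : ℕ) : ℝ)) := by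
        refine abs_groupedWeight_le_sum_image fun n hn hcore ↦ (hw n hn).trans (le_of_eq ?_)
        rw [natCast_eq_sq_mul_of_squarefreeCore_eq hcore]
        push_cast
        field_simp
    _ = κ / s * ∑ m ∈ U.image (· ^ 2), 1 / ((m : ℕ) : ℝ) := by
        rw [← mul_sum, sum_image (Nat.pow_left_injective two_ne_zero).injOn]
    _ ≤ κ / s * ∑ n ∈ squaresCoprimeSix K, 1 / (n : ℝ) := by
        gcongr

lemma coreVariance_nonsquaresCoprimeSix_le {K : ℕ} {κ : ℝ} (hκ : 0 ≤ κ)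
    (hw : ∀ n ∈ nonsquaresCoprimeSix K, |w n| ≤ κ / n) :
    coreVariance (nonsquaresCoprimeSix K) w ≤
      0.0975 * (κ * ∑ n ∈ squaresCoprimeSix K, 1 / (n : ℝ)) ^ 2 := by
  set c := κ * ∑ n ∈ squaresCoprimeSix K, 1 / (n : ℝ)
  have hgroup (s : ℕ) : groupedWeight (nonsquaresCoprimeSix K) w s ^ 2 ≤ c ^ 2 * (1 / s ^ 2) := by
    rw [← sq_abs]
    calc |groupedWeight (nonsquaresCoprimeSix K) w s| ^ 2
        ≤ (κ / s * ∑ n ∈ squaresCoprimeSix K, 1 / (n : ℝ)) ^ 2 := by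
          gcongr
          exact abs_groupedWeight_nonsquaresCoprimeSix_le hκ hw s
      _ = c ^ 2 * (1 / s ^ 2) := by ring
  have hcore : ∀ s ∈ (nonsquaresCoprimeSix K).image squarefreeCore, 2 ≤ s ∧ s.Coprime 6 := by
    intro s hs
    obtain ⟨n, hn, rfl⟩ := mem_image.1 hs
    obtain ⟨-, hn6, hnsq⟩ := mem_filter.1 hn
    have hne : squarefreeCore n ≠ 1 := fun h ↦ hnsq (isSquare_of_squarefreeCore_eq_one h)
    have := squarefreeCore_pos n
    exact ⟨by omega, hn6.coprime_dvd_left (squarefreeCore_dvd n)⟩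
  calc coreVariance (nonsquaresCoprimeSix K) w
      ≤ c ^ 2 * ∑ s ∈ (nonsquaresCoprimeSix K).image squarefreeCore, 1 / (s : ℝ) ^ 2 := by
        rw [coreVariance, mul_sum]
        exact sum_le_sum fun s _ ↦ hgroup s
    _ ≤ c ^ 2 * 0.0975 := by
        gcongr
        exact sum_one_div_sq_le_of_coprime_six hcore
    _ = 0.0975 * c ^ 2 := mul_comm _ _

lemma sum_min_one_div_sq_le {t : ℝ} (ht : 0 < t) {F : Finset ℕ} (hF : ∀ u ∈ F, 0 < u) :
    ∑ u ∈ F, min (1 / t ^ 2) (1 / (u : ℝ) ^ 2) ≤ 2 / t := by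
  set v := ⌈t⌉₊
  have hv : 0 < v := Nat.ceil_pos.2 ht
  have hv0 : (0 : ℝ) < v := mod_cast hv
  have htv : t ≤ v := Nat.le_ceil t
  have hvt : (v : ℝ) - 1 ≤ t := by linarith [Nat.ceil_lt_add_one ht.le]
  have hsmall : ∑ u ∈ F with u < v, min (1 / t ^ 2) (1 / (u : ℝ) ^ 2) ≤ (v - 1) * (1 / t ^ 2) := by
    have hcard : ({u ∈ F | u < v} : Finset ℕ) ⊆ Ico 1 v := fun u hu ↦
      mem_Ico.2 ⟨hF u (mem_filter.1 hu).1, (mem_filter.1 hu).2⟩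
    calc ∑ u ∈ F with u < v, min (1 / t ^ 2) (1 / (u : ℝ) ^ 2)
        ≤ ∑ u ∈ Ico 1 v, min (1 / t ^ 2) (1 / (u : ℝ) ^ 2) :=
          sum_le_sum_of_subset_of_nonneg hcard fun _ _ _ ↦ by positivity
      _ ≤ ∑ _u ∈ Ico 1 v, 1 / t ^ 2 := sum_le_sum fun _ _ ↦ min_le_left _ _
      _ = (v - 1) * (1 / t ^ 2) := by
          rw [sum_const, Nat.card_Ico, nsmul_eq_mul, Nat.cast_sub hv, Nat.cast_one]
  have hlarge : ∑ u ∈ F with ¬ u < v, min (1 / t ^ 2) (1 / (u : ℝ) ^ 2) ≤ 1 / (v : ℝ) ^ 2 + 1 / v :=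
    (sum_le_sum fun _ _ ↦ min_le_right _ _).trans
      (sum_one_div_sq_le_of_le hv.ne' fun u hu ↦ not_lt.1 (mem_filter.1 hu).2)
  have hnumerator : 0 ≤ 2 * t * v ^ 2 - (v - 1) * v ^ 2 - (1 + v) * t ^ 2 := by
    have hprod := mul_nonneg (sub_nonneg.2 htv) (sub_nonneg.2 hvt)
    nlinarith [mul_nonneg hprod hv0.le]
  have hgap : 2 / t - ((v - 1) * (1 / t ^ 2) + (1 / (v : ℝ) ^ 2 + 1 / v)) =
      (2 * t * v ^ 2 - (v - 1) * v ^ 2 - (1 + v) * t ^ 2) / (t ^ 2 * v ^ 2) := by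
    field_simp
    ring
  have := div_nonneg hnumerator (show 0 ≤ t ^ 2 * (v : ℝ) ^ 2 by positivity)
  rw [← sum_filter_add_sum_filter_not F (· < v)]
  linarith

lemma sum_min_div_sq_le {a b : ℝ} (ha : 0 < a) (hb : 0 < b) {F : Finset ℕ}
    (hF : ∀ u ∈ F, 0 < u) : ∑ u ∈ F, min a (b / (u : ℝ) ^ 2) ≤ 2 * √(a * b) := by
  have ht : 0 < √(b / a) := by positivity
  have htsq : √(b / a) ^ 2 = b / a := Real.sq_sqrt (by positivity)
  calc ∑ u ∈ F, min a (b / (u : ℝ) ^ 2)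
      = b * ∑ u ∈ F, min (1 / √(b / a) ^ 2) (1 / (u : ℝ) ^ 2) := by
        rw [mul_sum]
        refine sum_congr rfl fun u _ ↦ ?_
        rw [mul_min_of_nonneg _ _ hb.le, htsq]
        congr 1 <;> field_simp
    _ ≤ b * (2 / √(b / a)) := by
        gcongr
        exact sum_min_one_div_sq_le ht hF
    _ = 2 * √(a * b) := by
        have hsqrt : √(a * b) * √(b / a) = b := by
          rw [← Real.sqrt_mul (by positivity), show a * b * (b / a) = b ^ 2 by field_simp,
            Real.sqrt_sq hb.le]
        rw [← mul_div_assoc, div_eq_iff ht.ne', mul_assoc, hsqrt, mul_comm]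

lemma groupedWeight_sq_le_of_abs_le_min {D b : ℝ} (hD : 0 < D) (hb : 0 < b) (hT : ∀ n ∈ T, 0 < n)
    (hw : ∀ n ∈ T, |w n| ≤ min (D * n) b / n) {s : ℕ} (hs : 0 < s) :
    groupedWeight T w s ^ 2 ≤ 4 * b * D * (1 / s) := by
  have habs : |groupedWeight T w s| ≤ 1 / s * (2 * √(D * s * b)) := by
    refine (abs_groupedWeight_le_sum_image
      (g := fun u ↦ 1 / s * min (D * s) (b / (u : ℝ) ^ 2)) fun n hn hcore ↦ ?_).trans ?_
    · refine (hw n hn).trans (le_of_eq ?_)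
      have hroot : (0 : ℝ) < squareRootPart n := mod_cast squareRootPart_pos (hT n hn)
      rw [natCast_eq_sq_mul_of_squarefreeCore_eq hcore, ← min_div_div_right (by positivity),
        mul_min_of_nonneg _ _ (by positivity)]
      congr 1 <;> field_simp
    · rw [← mul_sum]
      gcongr
      refine sum_min_div_sq_le (by positivity) hb fun u hu ↦ ?_
      obtain ⟨n, hn, rfl⟩ := mem_image.1 hu
      exact squareRootPart_pos (hT n (mem_filter.1 hn).1)
  rw [← sq_abs]
  calc |groupedWeight T w s| ^ 2 ≤ (1 / s * (2 * √(D * s * b))) ^ 2 := by gcongr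
    _ = 4 * b * D * (1 / s) := by
        rw [mul_pow, mul_pow, Real.sq_sqrt (by positivity)]
        field_simp
        ring

lemma coreVariance_le_of_abs_le_min {D b : ℝ} (hD : 0 < D) (hb : 0 < b) (hT : ∀ n ∈ T, 0 < n)
    (hw : ∀ n ∈ T, |w n| ≤ min (D * n) b / n) {S : ℕ} (hS : S ≠ 0) :
    coreVariance T w ≤
      4 * b * D * (1 + Real.log S) + (2 * b) ^ 2 * (1 / (S : ℝ) ^ 2 + 1 / S) := by
  have hpos : ∀ s ∈ T.image squarefreeCore, 0 < s := by
    intro s hs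
    obtain ⟨n, -, rfl⟩ := mem_image.1 hs
    exact squarefreeCore_pos n
  rw [coreVariance, ← sum_filter_add_sum_filter_not _ (· ≤ S)]
  refine add_le_add ?_ ?_
  · calc ∑ s ∈ T.image squarefreeCore with s ≤ S, groupedWeight T w s ^ 2
        ≤ ∑ s ∈ T.image squarefreeCore with s ≤ S, 4 * b * D * (1 / (s : ℝ)) :=
          sum_le_sum fun s hs ↦
            groupedWeight_sq_le_of_abs_le_min hD hb hT hw (hpos s (mem_filter.1 hs).1)
      _ ≤ ∑ s ∈ Icc 1 S, 4 * b * D * (1 / (s : ℝ)) := by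
          refine sum_le_sum_of_subset_of_nonneg (fun s hs ↦ ?_) fun _ _ _ ↦ by positivity
          exact mem_Icc.2 ⟨hpos s (mem_filter.1 hs).1, (mem_filter.1 hs).2⟩
      _ ≤ 4 * b * D * (1 + Real.log S) := by
          rw [← mul_sum]
          gcongr
          exact sum_Icc_one_div_le_one_add_log S
  · have hw' : ∀ n ∈ T, |w n| ≤ b / n := fun n hn ↦
      (hw n hn).trans (by gcongr; exact min_le_right _ _)
    calc ∑ s ∈ T.image squarefreeCore with ¬ s ≤ S, groupedWeight T w s ^ 2
        ≤ ∑ s ∈ T.image squarefreeCore with ¬ s ≤ S, (2 * b) ^ 2 * (1 / (s : ℝ) ^ 2) := by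
          refine sum_le_sum fun s _ ↦ ?_
          rw [← sq_abs]
          calc |groupedWeight T w s| ^ 2 ≤ (2 * b / s) ^ 2 := by
                gcongr
                exact abs_groupedWeight_le hb.le hw' s
            _ = (2 * b) ^ 2 * (1 / (s : ℝ) ^ 2) := by ring
      _ ≤ (2 * b) ^ 2 * (1 / (S : ℝ) ^ 2 + 1 / S) := by
          rw [← mul_sum]
          gcongr
          exact sum_one_div_sq_le_of_le hS fun s hs ↦ (not_le.1 (mem_filter.1 hs).2).le

lemma coreVariance_le_of_abs_le_min_two (hT : ∀ n ∈ T, 0 < n)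
    (hw : ∀ n ∈ T, |w n| ≤ min (0.000012567 * (n : ℝ)) 2 / n) : coreVariance T w ≤ 0.00142 := by
  have hbound := coreVariance_le_of_abs_le_min (by norm_num) two_pos hT hw
    (S := 2 ^ 17) (by norm_num)
  have hlog : Real.log ((2 ^ 17 : ℕ) : ℝ) = 17 * Real.log 2 := by
    rw [Nat.cast_pow, Real.log_pow]
    norm_num
  rw [hlog] at hbound
  have := Real.log_two_lt_d9
  norm_num at hbound this ⊢
  linarith

end VarianceBounds

/-! ### Approximation by linear forms in Legendre symbols -/

section FourierNumerator

variable {u v κ ε : ℝ} {r : ℕ}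

lemma fourierNumerator_eq_sub_trigMode (u v : ℝ) (k : ℕ) (α : ℝ) :
    fourierNumerator u v k α = v - trigMode v (-u) k α := by
  rw [fourierNumerator, trigMode]
  ring

lemma abs_fourierNumerator_sub_le (huv : u ^ 2 + v ^ 2 = 1) (k : ℕ) (α β : ℝ) :
    |fourierNumerator u v k α - fourierNumerator u v k β| ≤ min (2 * Real.pi * |α - β| * k) 2 := by
  have huv' : v ^ 2 + (-u) ^ 2 = 1 := by rw [neg_sq, add_comm, huv]
  rw [fourierNumerator_eq_sub_trigMode, fourierNumerator_eq_sub_trigMode, sub_sub_sub_cancel_left,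
    abs_sub_comm]
  refine le_min ((abs_trigMode_sub_le huv' k β α).trans_eq (by ring)) ?_
  calc |trigMode v (-u) k α - trigMode v (-u) k β|
      ≤ |trigMode v (-u) k α| + |trigMode v (-u) k β| := abs_sub _ _
    _ ≤ 1 + 1 := add_le_add (abs_trigMode_le_one huv' k α) (abs_trigMode_le_one huv' k β)
    _ = 2 := one_add_one_eq_two

lemma fourierNumerator_one_third (u v : ℝ) (n : ℕ) :
    fourierNumerator u v n (1 / 3) =
      if n % 3 = 0 then 0
      else if n % 3 = 1 then u * (√3 / 2) + v * (3 / 2)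
      else -u * (√3 / 2) + v * (3 / 2) := by
  have hcos : Real.cos (2 * Real.pi / 3) = -1 / 2 := by
    rw [show 2 * Real.pi / 3 = Real.pi - Real.pi / 3 by ring, Real.cos_pi_sub,
      Real.cos_pi_div_three]
    norm_num
  have hsin : Real.sin (2 * Real.pi / 3) = √3 / 2 := by
    rw [show 2 * Real.pi / 3 = Real.pi - Real.pi / 3 by ring, Real.sin_pi_sub,
      Real.sin_pi_div_three]
  have hperiod : 2 * Real.pi * n * (1 / 3) =
      (n % 3 : ℕ) * (2 * Real.pi / 3) + (n / 3 : ℕ) * (2 * Real.pi) := by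
    have : (n : ℝ) = 3 * (n / 3 : ℕ) + (n % 3 : ℕ) := mod_cast (Nat.div_add_mod n 3).symm
    rw [this]
    ring
  rw [fourierNumerator, hperiod, Real.sin_add_nat_mul_two_pi, Real.cos_add_nat_mul_two_pi]
  obtain h | h | h : n % 3 = 0 ∨ n % 3 = 1 ∨ n % 3 = 2 := by omega
  · simp [h]
  · simp only [h, Nat.cast_one, one_mul, hcos, hsin, one_ne_zero, if_false, if_true]
    ring
  · simp only [h, Nat.cast_ofNat, Real.sin_two_mul, Real.cos_two_mul, hcos, hsin, two_ne_zero,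
      OfNat.ofNat_ne_one, if_false]
    ring

/-- `IsGaussPhase r u v κ ε`: the Gauss sum of a prime `p ≡ r (mod 4)` has phase `u + iv`, and
the numerators `s_n = fourierNumerator u v n (1 / 3)` satisfy `s_1 = κ` and `s_{2n} = ε s_n`. -/
inductive IsGaussPhase : ℕ → ℝ → ℝ → ℝ → ℝ → Prop
  | one_mod_four : IsGaussPhase 1 1 0 (√3 / 2) (-1)
  | three_mod_four : IsGaussPhase 3 0 1 (3 / 2) 1

namespace IsGaussPhase

lemma eq_one_or_eq_three (h : IsGaussPhase r u v κ ε) : r = 1 ∨ r = 3 := by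
  cases h <;> simp

lemma ne_two (h : IsGaussPhase r u v κ ε) {p : ℕ} (hp : p % 4 = r) : p ≠ 2 := by
  rintro rfl
  cases h <;> simp at hp

lemma gaussSign_re (h : IsGaussPhase r u v κ ε) {p : ℕ} (hp : p % 4 = r) :
    (gaussSign p).re = u := by
  cases h
  · rw [gaussSign_eq_one hp, Complex.one_re]
  · rw [gaussSign_eq_I hp, Complex.I_re]

lemma gaussSign_im (h : IsGaussPhase r u v κ ε) {p : ℕ} (hp : p % 4 = r) :
    (gaussSign p).im = v := by
  cases h
  · rw [gaussSign_eq_one hp, Complex.one_im]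
  · rw [gaussSign_eq_I hp, Complex.I_im]

lemma sq_add_sq (h : IsGaussPhase r u v κ ε) : u ^ 2 + v ^ 2 = 1 := by
  cases h <;> norm_num

lemma pos (h : IsGaussPhase r u v κ ε) : 0 < κ := by
  cases h <;> positivity

lemma le_sq (h : IsGaussPhase r u v κ ε) : 0.75 ≤ κ ^ 2 := by
  cases h <;> norm_num [div_pow]

lemma abs_eq_one (h : IsGaussPhase r u v κ ε) : |ε| = 1 := by
  cases h <;> norm_num

lemma abs_fourierNumerator_le (h : IsGaussPhase r u v κ ε) (n : ℕ) :
    |fourierNumerator u v n (1 / 3)| ≤ κ := by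
  have hκ := h.pos
  rw [fourierNumerator_one_third, abs_le]
  cases h <;> split_ifs <;> constructor <;> linarith

lemma fourierNumerator_two_mul (h : IsGaussPhase r u v κ ε) (n : ℕ) :
    fourierNumerator u v (2 * n) (1 / 3) = ε * fourierNumerator u v n (1 / 3) := by
  rw [fourierNumerator_one_third, fourierNumerator_one_third, Nat.mul_mod]
  obtain hn | hn | hn : n % 3 = 0 ∨ n % 3 = 1 ∨ n % 3 = 2 := by omega
  all_goals cases h <;> norm_num [hn]

lemma fourierNumerator_eq_of_isSquare (h : IsGaussPhase r u v κ ε) {n : ℕ} (hn : IsSquare n)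
    (hn3 : ¬ 3 ∣ n) : fourierNumerator u v n (1 / 3) = κ := by
  have hn1 : n % 3 = 1 := by
    obtain ⟨m, rfl⟩ := hn
    obtain hm | hm | hm : m % 3 = 0 ∨ m % 3 = 1 ∨ m % 3 = 2 := by omega
    · exact absurd (dvd_mul_of_dvd_left (Nat.dvd_of_mod_eq_zero hm) m) hn3
    all_goals simp [Nat.mul_mod, hm]
  rw [fourierNumerator_one_third, if_neg (by omega), if_pos hn1]
  cases h <;> ring

end IsGaussPhase

end FourierNumerator

section Approximation

variable {u v κ ε : ℝ} {r : ℕ}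

open Finset Filter Topology
open scoped NumberTheorySymbols

lemma abs_tsum_sub_sum_Ioc_le {f : ℕ → ℝ} {C : ℝ} (hf : ∀ k, |f k| ≤ C * (1 / (k : ℝ) ^ 2))
    {M : ℕ} (hM : M ≠ 0) : |∑' k, f k - ∑ k ∈ Ioc 0 M, f k| ≤ C / M := by
  have hC : 0 ≤ C := by simpa using (abs_nonneg _).trans (hf 1)
  have hf0 : f 0 = 0 := by simpa using hf 0
  have hsum : Summable f := .of_norm_bounded
    ((Real.summable_one_div_nat_pow.2 one_lt_two).mul_left C) hf
  have hlim := (hsum.hasSum.tendsto_sum_nat.comp (tendsto_add_atTop_nat 1)).sub_const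
    (∑ k ∈ Ioc 0 M, f k)
  refine le_of_tendsto hlim.abs ?_
  filter_upwards [eventually_ge_atTop M] with n hn
  have hrange : ∑ k ∈ range (n + 1), f k = ∑ k ∈ Ioc 0 n, f k := by
    refine (sum_subset (fun k hk ↦ ?_) fun k hk hk' ↦ ?_).symm
    · exact mem_range.2 (Nat.lt_succ_of_le (mem_Ioc.1 hk).2)
    · have : k = 0 := by
        rw [mem_Ioc] at hk'
        rw [mem_range] at hk
        omega
      rw [this, hf0]
  rw [Function.comp_apply, hrange, ← sum_Ioc_consecutive f M.zero_le hn, add_sub_cancel_left]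
  calc |∑ k ∈ Ioc M n, f k| ≤ ∑ k ∈ Ioc M n, C * ((k : ℝ) ^ 2)⁻¹ :=
        (abs_sum_le_sum_abs _ _).trans (sum_le_sum fun k _ ↦ by simpa only [one_div] using hf k)
    _ ≤ C * (M : ℝ)⁻¹ := by
        rw [← mul_sum]
        gcongr
        exact (sum_Ioc_inv_sq_le_sub hM hn).trans (sub_le_self _ (by positivity))
    _ = C / M := (div_eq_mul_inv _ _).symm

lemma abs_pi_mul_legendreSum_sub_jacobiLinearForm_le (hG : IsGaussPhase r u v κ ε) {p : ℕ}
    [Fact p.Prime] (hp : p % 4 = r) {α h : ℝ} (h0 : 0 ≤ α) (hh : 0 < h) (h1 : α + h < 1) {M : ℕ}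
    (hM : M ≠ 0) :
    |Real.pi * legendreSum α p / √p -
      jacobiLinearForm (Ioc 0 M) (fun n ↦ Real.pi * smoothedCoeff u v α h n) p| ≤
      Real.pi * (2 * (h * p + 1) / √p) + Real.pi * (2 / (h * Real.pi ^ 2) / M) := by
  set a : ℕ → ℝ := smoothedCoeff u v α h
  have hsqrt : 0 < √(p : ℝ) := Real.sqrt_pos.2 (Nat.cast_pos.2 (Fact.out : p.Prime).pos)
  have hform : jacobiLinearForm (Ioc 0 M) (fun n ↦ Real.pi * a n) p =
      Real.pi * ∑ n ∈ Ioc 0 M, (legendreSym p n : ℝ) * a n := by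
    rw [jacobiLinearForm, mul_sum]
    refine sum_congr rfl fun n _ ↦ ?_
    rw [jacobiSym.legendreSym.to_jacobiSym]
    ring
  have hsmooth := abs_legendreSum_sub_tsum_le (hG.ne_two hp) h0 hh h1
  rw [hG.gaussSign_re hp, hG.gaussSign_im hp] at hsmooth
  have htail := abs_tsum_sub_sum_Ioc_le (f := fun n : ℕ ↦ (legendreSym p n : ℝ) * a n)
    (fun n ↦ by
      rw [abs_mul]
      exact (mul_le_of_le_one_left (abs_nonneg _) (abs_legendreSym_le_one n)).trans
        (abs_smoothedCoeff_le_div_sq hG.sq_add_sq hh α n)) hM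
  set S := ∑' n : ℕ, (legendreSym p n : ℝ) * a n
  rw [hform]
  calc _ = |Real.pi * (((legendreSum α p : ℝ) - √p * S) / √p) +
        Real.pi * (S - ∑ n ∈ Ioc 0 M, (legendreSym p n : ℝ) * a n)| := by
        congr 1
        field_simp
        ring
    _ ≤ |Real.pi * (((legendreSum α p : ℝ) - √p * S) / √p)| +
        |Real.pi * (S - ∑ n ∈ Ioc 0 M, (legendreSym p n : ℝ) * a n)| := abs_add_le _ _
    _ ≤ _ := by
        rw [abs_mul, abs_mul, abs_div, abs_of_pos Real.pi_pos, abs_of_pos hsqrt]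
        gcongr

lemma smoothing_error_le {N p : ℕ} (hN : 1 ≤ N) (hp : (N : ℝ) ^ (0.95 : ℝ) < p) (hpN : p ≤ N) :
    Real.pi * (2 * ((N : ℝ) ^ (-0.55 : ℝ) * p + 1) / √p) +
      Real.pi * (2 / ((N : ℝ) ^ (-0.55 : ℝ) * Real.pi ^ 2) / ⌊(N : ℝ) ^ (0.6 : ℝ)⌋₊) ≤
      20 * (N : ℝ) ^ (-0.05 : ℝ) := by
  have hN1 : (1 : ℝ) ≤ N := mod_cast hN
  have hN0 : (0 : ℝ) < N := by linarith
  have hp0 : (0 : ℝ) < p := (Real.rpow_pos_of_pos hN0 _).trans hp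
  have hM := Nat.div_two_lt_floor (Real.one_le_rpow hN1 (show (0 : ℝ) ≤ 0.6 by norm_num))
  have hM0 : (0 : ℝ) < ⌊(N : ℝ) ^ (0.6 : ℝ)⌋₊ := lt_trans (by positivity) hM
  set h := (N : ℝ) ^ (-0.55 : ℝ) with hh
  set M := ⌊(N : ℝ) ^ (0.6 : ℝ)⌋₊
  set z := (N : ℝ) ^ (-0.05 : ℝ) with hz
  have hwindow : h * √p ≤ z := by
    calc h * √p ≤ h * √N := by gcongr
      _ = z := by
          rw [Real.sqrt_eq_rpow, hh, ← Real.rpow_add hN0, hz]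
          norm_num
  have hsqrt : 1 / √p ≤ z := by
    calc 1 / √p ≤ 1 / √((N : ℝ) ^ (0.95 : ℝ)) := by gcongr
      _ = (N : ℝ) ^ (-0.475 : ℝ) := by
          rw [Real.sqrt_eq_rpow, ← Real.rpow_mul hN0.le, one_div, ← Real.rpow_neg hN0.le]
          norm_num
      _ ≤ z := Real.rpow_le_rpow_of_exponent_le hN1 (by norm_num)
  have htail : 1 / (h * M) ≤ 2 * z := by
    calc 1 / (h * M) ≤ 1 / (h * ((N : ℝ) ^ (0.6 : ℝ) / 2)) := by gcongr
      _ = 2 / (N : ℝ) ^ (0.05 : ℝ) := by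
          rw [← mul_div_assoc, hh, ← Real.rpow_add hN0, one_div_div]
          norm_num
      _ = 2 * z := by rw [hz, Real.rpow_neg hN0.le, div_eq_mul_inv]
  have hpi3 := Real.pi_gt_three
  calc _ = Real.pi * (2 * (h * √p + 1 / √p)) + 2 / Real.pi * (1 / (h * M)) := by
        field_simp
        rw [Real.sq_sqrt hp0.le]
        ring
    _ ≤ 4 * (2 * (z + z)) + 2 / 3 * (2 * z) := by
        gcongr
        exact Real.pi_lt_four.le
    _ ≤ 20 * z := by
        have : 0 < z := Real.rpow_pos_of_pos hN0 _
        linarith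

/-- The weights of the linear form in the symbols `(n/p)` that formally equals `π L(α, p) / √p`. -/
noncomputable def numeratorWeight (u v α : ℝ) (n : ℕ) : ℝ :=
  fourierNumerator u v n α / n

/-- The regularisation of `numeratorWeight u v α` used for primes up to `N`: the window of the
smoothing has length `N ^ (-0.55)`. -/
noncomputable def smoothedWeight (u v α : ℝ) (N n : ℕ) : ℝ :=
  Real.pi * smoothedCoeff u v α ((N : ℝ) ^ (-0.55 : ℝ)) n

lemma tendsto_natCast_rpow_neg {a : ℝ} (ha : 0 < a) :
    Tendsto (fun N : ℕ ↦ (N : ℝ) ^ (-a)) atTop (𝓝 0) :=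
  (tendsto_rpow_neg_atTop ha).comp tendsto_natCast_atTop_atTop

lemma tendsto_smoothedWeight (u v α : ℝ) (n : ℕ) :
    Tendsto (fun N ↦ smoothedWeight u v α N n) atTop (𝓝 (numeratorWeight u v α n)) := by
  refine (tendsto_pi_mul_smoothedCoeff u v α n).comp
    (tendsto_nhdsWithin_iff.2 ⟨tendsto_natCast_rpow_neg (by norm_num), ?_⟩)
  filter_upwards [eventually_gt_atTop 0] with N hN
  exact Real.rpow_pos_of_pos (Nat.cast_pos.2 hN) _

lemma abs_smoothedWeight_le (huv : u ^ 2 + v ^ 2 = 1) (α : ℝ) {N : ℕ} (hN : 0 < N) (n : ℕ) :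
    |smoothedWeight u v α N n| ≤ 2 / n := by
  rw [smoothedWeight, abs_mul, abs_of_pos Real.pi_pos]
  calc _ ≤ Real.pi * (2 / Real.pi / n) := by
        gcongr
        exact abs_smoothedCoeff_le_div huv (Real.rpow_pos_of_pos (Nat.cast_pos.2 hN) _) α n
    _ = 2 / n := by field_simp

lemma abs_jacobiLinearForm_sub_le (T : Finset ℕ) (w w' : ℕ → ℝ) (p : ℕ) :
    |jacobiLinearForm T w p - jacobiLinearForm T w' p| ≤ ∑ n ∈ T, |w n - w' n| := by
  rw [jacobiLinearForm, jacobiLinearForm, ← sum_sub_distrib]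
  refine (abs_sum_le_sum_abs _ _).trans (sum_le_sum fun n _ ↦ ?_)
  rw [← sub_mul, abs_mul]
  refine mul_le_of_le_one_right (abs_nonneg _) ?_
  obtain h | h | h := jacobiSym.trichotomy n p <;> simp [h]

theorem eventually_abs_pi_mul_legendreSum_sub_le (hG : IsGaussPhase r u v κ ε) {α : ℝ}
    (h0 : 0 ≤ α) (h1 : α < 1) (K : ℕ) {η : ℝ} (hη : 0 < η) :
    ∀ᶠ N : ℕ in atTop, ∀ p ∈ largePrimes N r,
      |Real.pi * legendreSum α p / √p -
        (jacobiLinearForm (Ioc 0 K) (numeratorWeight u v α) p +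
          jacobiLinearForm (Ioc K ⌊(N : ℝ) ^ (0.6 : ℝ)⌋₊) (smoothedWeight u v α N) p)| ≤ η := by
  have herror : Tendsto (fun N : ℕ ↦ 20 * (N : ℝ) ^ (-0.05 : ℝ)) atTop (𝓝 0) := by
    simpa using (tendsto_natCast_rpow_neg (show (0 : ℝ) < 0.05 by norm_num)).const_mul 20
  have hweights : Tendsto
      (fun N ↦ ∑ n ∈ Ioc 0 K, |smoothedWeight u v α N n - numeratorWeight u v α n|)
      atTop (𝓝 0) := by
    simpa using tendsto_finsetSum (Ioc 0 K) fun n _ ↦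
      ((tendsto_smoothedWeight u v α n).sub_const (numeratorWeight u v α n)).abs
  have hfloor : Tendsto (fun N : ℕ ↦ ⌊(N : ℝ) ^ (0.6 : ℝ)⌋₊) atTop atTop :=
    tendsto_nat_floor_atTop.comp
      ((tendsto_rpow_atTop (by norm_num)).comp tendsto_natCast_atTop_atTop)
  filter_upwards [herror.eventually_le_const (half_pos hη),
    hweights.eventually_le_const (half_pos hη), hfloor.eventually_ge_atTop K,
    hfloor.eventually_gt_atTop 0, eventually_ge_atTop 1,
    (tendsto_natCast_rpow_neg (show (0 : ℝ) < 0.55 by norm_num)).eventually_lt_const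
      (sub_pos.2 h1)] with N herror hweights hKM hM hN hh p hp
  obtain ⟨hpN, hprime, hpr, hlarge⟩ := mem_largePrimes.1 hp
  have : Fact p.Prime := ⟨hprime⟩
  have hsplit : jacobiLinearForm (Ioc 0 ⌊(N : ℝ) ^ (0.6 : ℝ)⌋₊) (smoothedWeight u v α N) p =
      jacobiLinearForm (Ioc 0 K) (smoothedWeight u v α N) p +
        jacobiLinearForm (Ioc K ⌊(N : ℝ) ^ (0.6 : ℝ)⌋₊) (smoothedWeight u v α N) p :=
    (sum_Ioc_consecutive _ K.zero_le hKM).symm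
  have hsmoothed := (abs_pi_mul_legendreSum_sub_jacobiLinearForm_le hG hpr h0
    (Real.rpow_pos_of_pos (Nat.cast_pos.2 hN) _) (by linarith) hM.ne').trans
    ((smoothing_error_le hN hlarge hpN).trans herror)
  have hlimit := (abs_jacobiLinearForm_sub_le (Ioc 0 K) _ _ p).trans hweights
  rw [← add_sub_add_right_eq_sub] at hlimit
  change |_ - jacobiLinearForm _ (smoothedWeight u v α N) p| ≤ _ at hsmoothed
  rw [hsplit] at hsmoothed
  exact ((abs_sub_le _ _ _).trans (add_le_add hsmoothed hlimit)).trans_eq (add_halves η)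

end Approximation

/-! ### Primes with a negative sum -/

section EulerFactor

open Finset
open scoped NumberTheorySymbols

lemma sum_Ioc_two_mul_even {M : Type*} [AddCommMonoid M] (f : ℕ → M) (K : ℕ) :
    ∑ n ∈ Ioc 0 (2 * K) with Even n, f n = ∑ n ∈ Ioc 0 K, f (2 * n) := by
  have himage : {n ∈ Ioc 0 (2 * K) | Even n} = (Ioc 0 K).image (2 * ·) := by
    ext m
    simp only [mem_filter, mem_Ioc, mem_image, even_iff_exists_two_mul]
    constructor
    · rintro ⟨hm, n, rfl⟩
      exact ⟨n, by omega, rfl⟩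
    · rintro ⟨n, hn, rfl⟩
      exact ⟨by omega, n, rfl⟩
  rw [himage, sum_image (mul_right_injective₀ two_ne_zero).injOn]

lemma one_sub_mul_sum_Ioc {R : Type*} [CommRing R] {f : ℕ → R} {c : R}
    (h2 : ∀ n, f (2 * n) = c * f n) (h3 : ∀ n, 3 ∣ n → f n = 0) (K : ℕ) :
    (1 - c) * ∑ n ∈ Ioc 0 K, f n =
      ∑ n ∈ Ioc 0 K with n.Coprime 6, f n - ∑ n ∈ Ioc K (2 * K) with Even n, f n := by
  have heven : c * ∑ n ∈ Ioc 0 K, f n =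
      ∑ n ∈ Ioc 0 K with Even n, f n + ∑ n ∈ Ioc K (2 * K) with Even n, f n := by
    simp_rw [mul_sum, ← h2, ← sum_Ioc_two_mul_even, sum_filter]
    exact (sum_Ioc_consecutive _ K.zero_le (by omega)).symm
  have hodd : ∑ n ∈ Ioc 0 K with ¬ Even n, f n = ∑ n ∈ Ioc 0 K with n.Coprime 6, f n := by
    refine (sum_subset (fun n hn ↦ ?_) fun n hn hn' ↦ h3 n ?_).symm
    · obtain ⟨hn, h6⟩ := mem_filter.1 hn
      have := mod_six_eq_one_or_five_of_coprime h6
      exact mem_filter.2 ⟨hn, fun heven ↦ by rw [Nat.even_iff] at heven; omega⟩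
    · obtain ⟨hn, hodd⟩ := mem_filter.1 hn
      by_contra hdvd
      refine hn' (mem_filter.2 ⟨hn, show n.Coprime (2 * 3) from .mul_right ?_ ?_⟩)
      · exact Nat.coprime_two_right.2 (Nat.not_even_iff_odd.1 hodd)
      · exact ((Nat.Prime.coprime_iff_not_dvd Nat.prime_three).2 hdvd).symm
  rw [sub_mul, one_mul, heven, ← hodd, ← sum_filter_add_sum_filter_not (Ioc 0 K) Even]
  ring

variable {u v κ ε : ℝ} {r : ℕ}

lemma jacobiLinearForm_filter_coprime_six (hG : IsGaussPhase r u v κ ε) {K p : ℕ} (hp : p.Prime)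
    (hKp : K < p) :
    jacobiLinearForm {n ∈ Ioc 0 K | n.Coprime 6} (numeratorWeight u v (1 / 3)) p =
      κ * ∑ n ∈ squaresCoprimeSix K, 1 / (n : ℝ) +
        jacobiLinearForm (nonsquaresCoprimeSix K) (numeratorWeight u v (1 / 3)) p := by
  rw [jacobiLinearForm, ← sum_filter_add_sum_filter_not _ IsSquare, filter_filter, filter_filter,
    mul_sum]
  refine congrArg₂ _ (sum_congr rfl fun n hn ↦ ?_) rfl
  obtain ⟨hnK, h6, hsq⟩ := mem_filter.1 hn
  have h3 : ¬ 3 ∣ n := by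
    have := mod_six_eq_one_or_five_of_coprime h6
    omega
  obtain ⟨m, rfl⟩ := hsq
  have hcoprime : (m * m).Coprime p :=
    (Nat.coprime_of_lt_prime (mem_Ioc.1 hnK).1.ne' ((mem_Ioc.1 hnK).2.trans_lt hKp) hp).symm
  have hsymbol : J((m * m : ℕ) | p) = 1 := by
    rw [Nat.cast_mul, ← sq]
    exact jacobiSym.sq_one' (by simpa using hcoprime.coprime_mul_left)
  rw [numeratorWeight, hG.fourierNumerator_eq_of_isSquare ⟨m, rfl⟩ h3, hsymbol, Int.cast_one,
    mul_one, div_eq_mul_one_div]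

-- The Euler factor at `2` trades the even `n` up to `K` for those in `(K, 2 K]`; the squares then
-- give the positive main term, and a prime with negative sum must make another form large.
lemma one_sub_mul_jacobiLinearForm (hG : IsGaussPhase r u v κ ε) {K p : ℕ} (hp : p.Prime)
    (hKp : K < p) :
    (1 - ε * J(2 | p) / 2) * jacobiLinearForm (Ioc 0 K) (numeratorWeight u v (1 / 3)) p =
      κ * ∑ n ∈ squaresCoprimeSix K, 1 / (n : ℝ) +
        jacobiLinearForm (nonsquaresCoprimeSix K) (numeratorWeight u v (1 / 3)) p -
        jacobiLinearForm {n ∈ Ioc K (2 * K) | Even n} (numeratorWeight u v (1 / 3)) p := by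
  rw [← jacobiLinearForm_filter_coprime_six hG hp hKp]
  refine one_sub_mul_sum_Ioc (fun n ↦ ?_) (fun n hn ↦ ?_) K
  · rw [numeratorWeight, numeratorWeight, hG.fourierNumerator_two_mul, Nat.cast_mul, Nat.cast_mul,
      jacobiSym.mul_left]
    push_cast
    ring
  · rw [numeratorWeight, fourierNumerator_one_third, if_pos (Nat.mod_eq_zero_of_dvd hn), zero_div,
      zero_mul]

end EulerFactor

section NegativeSums

open Finset Filter
open scoped NumberTheorySymbols

variable {u v κ ε α : ℝ} {r : ℕ}

lemma add_add_add_sq_le (a b c d : ℝ) :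
    (a + b + c + d) ^ 2 ≤ a ^ 2 / 0.78 + b ^ 2 / 0.2 + c ^ 2 / 0.01 + d ^ 2 / 0.01 := by
  have h := sq_sum_div_le_sum_sq_div univ ![a, b, c, d] (g := ![0.78, 0.2, 0.01, 0.01]) fun i _ ↦ by
    fin_cases i <;> norm_num
  simp only [Fin.sum_univ_four, Matrix.cons_val] at h
  rwa [show (0.78 + 0.2 + 0.01 + 0.01 : ℝ) = 1 by norm_num, div_one] at h

lemma sq_le_of_mul_eq_of_add_neg {κ c P A X L Y R e : ℝ} (hκ : 0 < κ) (hc : 1.06 * κ ≤ c)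
    (hP : 1 / 2 ≤ P) (hP' : P ≤ 3 / 2) (hX : P * X = c + A - L) (hneg : X + Y + R + e < 0)
    (he : |e| ≤ κ / 300) :
    0.98 * c ^ 2 ≤ A ^ 2 / 0.78 + 11.25 * Y ^ 2 + 100 * L ^ 2 + 225 * R ^ 2 := by
  have hmul (z : ℝ) : -(P * z) ≤ 3 / 2 * |z| := by
    calc -(P * z) = P * -z := by ring
      _ ≤ P * |z| := by gcongr; exact neg_le_abs z
      _ ≤ 3 / 2 * |z| := by gcongr
  have hsum : 105 / 106 * c ≤ |A| + 3 / 2 * |Y| + |L| + 3 / 2 * |R| := by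
    have hnonpos : P * (X + Y + R + e) ≤ 0 :=
      mul_nonpos_of_nonneg_of_nonpos (by linarith) hneg.le
    linarith [hmul Y, hmul R, hmul e, neg_abs_le A, le_abs_self L]
  have hc0 : 0 ≤ c := by linarith
  calc 0.98 * c ^ 2 ≤ (105 / 106 * c) ^ 2 := by nlinarith [sq_nonneg c]
    _ ≤ (|A| + 3 / 2 * |Y| + |L| + 3 / 2 * |R|) ^ 2 := by gcongr
    _ ≤ _ := add_add_add_sq_le _ _ _ _
    _ = _ := by
      simp only [mul_pow, sq_abs]
      ring

lemma IsGaussPhase.le_mul_sum_squaresCoprimeSix (hG : IsGaussPhase r u v κ ε) {K : ℕ}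
    (hK : 49 ≤ K) : 1.06 * κ ≤ κ * ∑ n ∈ squaresCoprimeSix K, 1 / (n : ℝ) := by
  rw [mul_comm]
  exact mul_le_mul_of_nonneg_left (one_point_zero_six_le_sum_squaresCoprimeSix hK) hG.pos.le

lemma IsGaussPhase.le_sq_mul_sum_squaresCoprimeSix (hG : IsGaussPhase r u v κ ε) {K : ℕ}
    (hK : 49 ≤ K) : 0.8427 ≤ (κ * ∑ n ∈ squaresCoprimeSix K, 1 / (n : ℝ)) ^ 2 := by
  have hκ := hG.pos
  calc (0.8427 : ℝ) ≤ 1.06 ^ 2 * κ ^ 2 := by linarith [hG.le_sq]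
    _ = (1.06 * κ) ^ 2 := (mul_pow _ _ _).symm
    _ ≤ _ := pow_le_pow_left₀ (by positivity) (hG.le_mul_sum_squaresCoprimeSix hK) 2

lemma sq_le_of_legendreSum_neg (hG : IsGaussPhase r u v κ ε) {K p : ℕ} (hK : 49 ≤ K)
    (hp : p.Prime) (hKp : K < p) (hneg : legendreSum α p < 0) {R : ℝ}
    (hR : |Real.pi * legendreSum α p / √p -
      (jacobiLinearForm (Ioc 0 K) (numeratorWeight u v α) p + R)| ≤ κ / 300) :
    0.98 * (κ * ∑ n ∈ squaresCoprimeSix K, 1 / (n : ℝ)) ^ 2 ≤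
      jacobiLinearForm (nonsquaresCoprimeSix K) (numeratorWeight u v (1 / 3)) p ^ 2 / 0.78 +
      11.25 * jacobiLinearForm (Ioc 0 K)
        (numeratorWeight u v α - numeratorWeight u v (1 / 3)) p ^ 2 +
      100 * jacobiLinearForm {n ∈ Ioc K (2 * K) | Even n} (numeratorWeight u v (1 / 3)) p ^ 2 +
      225 * R ^ 2 := by
  have hfactor : |ε * J(2 | p)| ≤ 1 := by
    rw [abs_mul, hG.abs_eq_one, one_mul]
    obtain h | h | h := jacobiSym.trichotomy 2 p <;> simp [h]
  have hscaled : Real.pi * legendreSum α p / √p < 0 :=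
    div_neg_of_neg_of_pos (mul_neg_of_pos_of_neg Real.pi_pos (mod_cast hneg))
      (Real.sqrt_pos.2 (Nat.cast_pos.2 hp.pos))
  have hperturb : jacobiLinearForm (Ioc 0 K) (numeratorWeight u v α) p =
      jacobiLinearForm (Ioc 0 K) (numeratorWeight u v (1 / 3)) p +
      jacobiLinearForm (Ioc 0 K) (numeratorWeight u v α - numeratorWeight u v (1 / 3)) p := by
    simp only [jacobiLinearForm, ← sum_add_distrib, ← add_mul, Pi.sub_apply, add_sub_cancel]
  rw [hperturb] at hR
  obtain ⟨hlower, hupper⟩ := abs_le.1 hfactor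
  exact sq_le_of_mul_eq_of_add_neg hG.pos (hG.le_mul_sum_squaresCoprimeSix hK) (by linarith)
    (by linarith) (one_sub_mul_jacobiLinearForm hG hp hKp) (by linarith) hR

lemma card_legendreSum_neg_mul_le (hG : IsGaussPhase r u v κ ε) {K N : ℕ} (hK : 49 ≤ K)
    (hKN : (K : ℝ) ≤ (N : ℝ) ^ (0.95 : ℝ)) {R : ℕ → ℝ}
    (hR : ∀ p ∈ largePrimes N r, |Real.pi * legendreSum α p / √p -
      (jacobiLinearForm (Ioc 0 K) (numeratorWeight u v α) p + R p)| ≤ κ / 300) :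
    #{p ∈ largePrimes N r | legendreSum α p < 0} *
        (0.98 * (κ * ∑ n ∈ squaresCoprimeSix K, 1 / (n : ℝ)) ^ 2) ≤
      (∑ p ∈ largePrimes N r, jacobiLinearForm (nonsquaresCoprimeSix K)
        (numeratorWeight u v (1 / 3)) p ^ 2) / 0.78 +
      11.25 * ∑ p ∈ largePrimes N r, jacobiLinearForm (Ioc 0 K)
        (numeratorWeight u v α - numeratorWeight u v (1 / 3)) p ^ 2 +
      100 * ∑ p ∈ largePrimes N r, jacobiLinearForm {n ∈ Ioc K (2 * K) | Even n}
        (numeratorWeight u v (1 / 3)) p ^ 2 +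
      225 * ∑ p ∈ largePrimes N r, R p ^ 2 := by
  set c := κ * ∑ n ∈ squaresCoprimeSix K, 1 / (n : ℝ)
  rw [← nsmul_eq_mul, ← sum_const, sum_div, mul_sum, mul_sum, mul_sum, ← sum_add_distrib,
    ← sum_add_distrib, ← sum_add_distrib]
  refine (sum_le_sum fun p hp ↦ ?_).trans
    (sum_le_sum_of_subset_of_nonneg (filter_subset _ _) fun _ _ _ ↦ by positivity)
  obtain ⟨hp, hneg⟩ := mem_filter.1 hp
  obtain ⟨-, hprime, -, hlarge⟩ := mem_largePrimes.1 hp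
  exact sq_le_of_legendreSum_neg hG hK hprime (mod_cast hKN.trans_lt hlarge) hneg (hR p hp)

theorem eventually_sum_largePrimes_jacobiLinearForm_sq_le {T : Finset ℕ} (hT : ∀ n ∈ T, 0 < n)
    {w : ℕ → ℝ} {V : ℝ} (hV : coreVariance T w ≤ V) (hr : r = 1 ∨ r = 3) {A δ : ℝ} (hA : 1 < A)
    (hδ : 0 < δ) :
    ∀ᶠ N : ℕ in atTop, ∑ p ∈ largePrimes N r, jacobiLinearForm T w p ^ 2 ≤
      (A * V + δ) * (N / Real.log N) := by
  have : 0 < A := zero_lt_one.trans hA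
  have hC : ∀ n ∈ T, |w n| ≤ (∑ m ∈ T, |w m| * m) / n := fun n hn ↦ by
    rw [le_div_iff₀ (Nat.cast_pos.2 (hT n hn))]
    exact single_le_sum (f := fun m : ℕ ↦ |w m| * m) (fun _ _ ↦ by positivity) hn
  have hτ : 0 < (A - 1) / (4 * A) := div_pos (by linarith) (by positivity)
  have hlevel : 2 * ((A + 1) / (4 * A)) + (A - 1) / (4 * A) < 1 := by
    rw [← mul_div_assoc, ← add_div, div_lt_one (by positivity)]
    linarith
  have hτ' : (A - 1) / (4 * A) ≤ 0.95 := by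
    rw [div_le_iff₀ (by positivity)]
    linarith
  have hθ : 1 < 2 * A * ((A + 1) / (4 * A)) := by
    field_simp
    linarith
  filter_upwards [eventually_sum_jacobiLinearForm_sq_le_coreVariance (by positivity) hτ hlevel hτ'
      hθ (C := ∑ m ∈ T, |w m| * m) (sum_nonneg fun _ _ ↦ by positivity) hδ,
    ((tendsto_rpow_atTop hτ).comp tendsto_natCast_atTop_atTop).eventually_ge_atTop
      ((T.sup id : ℕ) : ℝ), eventually_ge_atTop 1] with N hmean hNT hN
  have hT' : ∀ n ∈ T, 0 < n ∧ (n : ℝ) ≤ (N : ℝ) ^ ((A - 1) / (4 * A)) := fun n hn ↦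
    ⟨hT n hn, (Nat.cast_le.2 (le_sup (f := id) hn)).trans hNT⟩
  have : 0 ≤ Real.log N := Real.log_nonneg (mod_cast hN)
  calc _ ≤ (A * coreVariance T w + δ) * N / Real.log N := hmean T w r hr hT' hC
    _ ≤ (A * V + δ) * N / Real.log N := by gcongr
    _ = _ := mul_div_assoc _ _ _

lemma exists_forall_eventually_sum_smoothedWeight_sq_le (huv : u ^ 2 + v ^ 2 = 1) (α : ℝ)
    (hr : r = 1 ∨ r = 3) {η : ℝ} (hη : 0 < η) :
    ∃ K₀, ∀ K ≥ K₀, ∀ᶠ N : ℕ in atTop,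
      ∑ p ∈ largePrimes N r,
        jacobiLinearForm (Ioc K ⌊(N : ℝ) ^ (0.6 : ℝ)⌋₊) (smoothedWeight u v α N) p ^ 2 ≤
      η * (N / Real.log N) := by
  obtain ⟨K₀, hvar⟩ := exists_forall_coreVariance_le zero_le_two (show 0 < η / 12 by positivity)
  refine ⟨K₀, fun K hK ↦ ?_⟩
  filter_upwards [eventually_sum_jacobiLinearForm_sq_le_coreVariance (θ := 0.1) (τ := 0.6) (A := 6)
    (by norm_num) (by norm_num) (by norm_num) (by norm_num) (by norm_num) zero_le_two (half_pos hη),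
    eventually_gt_atTop 0] with N hmean hN
  have hw : ∀ n ∈ Ioc K ⌊(N : ℝ) ^ (0.6 : ℝ)⌋₊, |smoothedWeight u v α N n| ≤ 2 / n :=
    fun n _ ↦ abs_smoothedWeight_le huv α hN n
  have hN1 : (1 : ℝ) ≤ N := mod_cast hN
  calc _ ≤ (6 * coreVariance _ (smoothedWeight u v α N) + η / 2) * N / Real.log N := by
        refine hmean _ _ r hr (fun n hn ↦ ?_) hw
        obtain ⟨hKn, hn⟩ := mem_Ioc.1 hn
        exact ⟨K.zero_le.trans_lt hKn, (Nat.le_floor_iff (by positivity)).1 hn⟩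
    _ ≤ (6 * (η / 12) + η / 2) * N / Real.log N := by
        have := Real.log_nonneg hN1
        gcongr
        exact hvar _ _ (fun n hn ↦ hK.trans_lt (mem_Ioc.1 hn).1) hw
    _ = η * (N / Real.log N) := by ring

lemma le_mul_of_mul_sq_le {B c G A Y L R : ℝ} (hc : 0.8427 ≤ c ^ 2) (hG : 0 ≤ G)
    (hA : A ≤ (1.05 * (0.0975 * c ^ 2) + 0.00001) * G) (hY : Y ≤ (1.05 * 0.00142 + 0.00001) * G)
    (hL : L ≤ (1.05 * 0.00001 + 0.00001) * G) (hR : R ≤ 0.00001 * G)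
    (h : B * (0.98 * c ^ 2) ≤ A / 0.78 + 11.25 * Y + 100 * L + 225 * R) : B ≤ 0.17 * G := by
  have hcG : 0.8427 * G ≤ c ^ 2 * G := by gcongr
  refine le_of_mul_le_mul_right (h.trans ?_) (show 0 < 0.98 * c ^ 2 by linarith)
  norm_num at hA hY hL hR hcG ⊢
  linarith

lemma IsGaussPhase.abs_numeratorWeight_le (hG : IsGaussPhase r u v κ ε) (n : ℕ) :
    |numeratorWeight u v (1 / 3) n| ≤ κ / n := by
  rw [numeratorWeight, abs_div, Nat.abs_cast]
  gcongr
  exact hG.abs_fourierNumerator_le n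

lemma abs_numeratorWeight_sub_le (huv : u ^ 2 + v ^ 2 = 1) (α β : ℝ) (n : ℕ) :
    |numeratorWeight u v α n - numeratorWeight u v β n| ≤
      min (2 * Real.pi * |α - β| * n) 2 / n := by
  rw [numeratorWeight, numeratorWeight, ← sub_div, abs_div, Nat.abs_cast]
  gcongr
  exact abs_fourierNumerator_sub_le huv n α β

lemma coreVariance_numeratorWeight_sub_le (huv : u ^ 2 + v ^ 2 = 1)
    (hα : |α - 1 / 3| ≤ 2 / 10 ^ 6) {T : Finset ℕ} (hT : ∀ n ∈ T, 0 < n) :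
    coreVariance T (numeratorWeight u v α - numeratorWeight u v (1 / 3)) ≤ 0.00142 := by
  refine coreVariance_le_of_abs_le_min_two hT fun n _ ↦ ?_
  refine (abs_numeratorWeight_sub_le huv α (1 / 3) n).trans ?_
  gcongr
  calc 2 * Real.pi * |α - 1 / 3| ≤ 2 * 3.141593 * (2 / 10 ^ 6) := by
        gcongr
        exact Real.pi_lt_d6.le
    _ ≤ 0.000012567 := by norm_num

theorem eventually_card_largePrimes_legendreSum_neg_le (hG : IsGaussPhase r u v κ ε)
    (hα : |α - 1 / 3| ≤ 2 / 10 ^ 6) :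
    ∀ᶠ N : ℕ in atTop,
      #{p ∈ largePrimes N r | legendreSum α p < 0} ≤ 0.17 * (N / Real.log N) := by
  obtain ⟨hα0, hα1⟩ : 0 ≤ α ∧ α < 1 := by
    constructor <;> norm_num [abs_le] at hα <;> linarith
  have hr := hG.eq_one_or_eq_three
  have hκ := hG.pos
  obtain ⟨K₁, htail⟩ := exists_forall_eventually_sum_smoothedWeight_sq_le hG.sq_add_sq α hr
    (show (0 : ℝ) < 0.00001 by norm_num)
  obtain ⟨K₂, heven⟩ := exists_forall_coreVariance_le hκ.le (show (0 : ℝ) < 0.00001 by norm_num)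
  obtain ⟨K, hK, hK₁, hK₂⟩ : ∃ K, 49 ≤ K ∧ K₁ ≤ K ∧ K₂ ≤ K := ⟨49 + K₁ + K₂, by omega⟩
  have hmean {T : Finset ℕ} {w : ℕ → ℝ} {V : ℝ} (hT : ∀ n ∈ T, 0 < n) (hV : coreVariance T w ≤ V) :=
    eventually_sum_largePrimes_jacobiLinearForm_sq_le hT hV hr (show (1 : ℝ) < 1.05 by norm_num)
      (show (0 : ℝ) < 0.00001 by norm_num)
  have hIoc : ∀ n ∈ Ioc 0 K, 0 < n := fun n hn ↦ (mem_Ioc.1 hn).1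
  have hevenIoc : ∀ n ∈ {n ∈ Ioc K (2 * K) | Even n}, K < n := fun n hn ↦
    (mem_Ioc.1 (mem_filter.1 hn).1).1
  filter_upwards [
    hmean (fun n hn ↦ hIoc n (mem_filter.1 hn).1)
      (coreVariance_nonsquaresCoprimeSix_le hκ.le fun n _ ↦ hG.abs_numeratorWeight_le n),
    hmean hIoc (coreVariance_numeratorWeight_sub_le hG.sq_add_sq hα hIoc),
    hmean (fun n hn ↦ K.zero_le.trans_lt (hevenIoc n hn))
      (heven _ _ (fun n hn ↦ hK₂.trans_lt (hevenIoc n hn)) fun n _ ↦ hG.abs_numeratorWeight_le n),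
    htail K hK₁,
    eventually_abs_pi_mul_legendreSum_sub_le hG hα0 hα1 K (show 0 < κ / 300 by positivity),
    ((tendsto_rpow_atTop (show (0 : ℝ) < 0.95 by norm_num)).comp
      tendsto_natCast_atTop_atTop).eventually_ge_atTop (K : ℝ),
    eventually_ge_atTop 1] with N hA hY hL hR happrox hKN hN
  exact le_mul_of_mul_sq_le (hG.le_sq_mul_sum_squaresCoprimeSix hK)
    (div_nonneg N.cast_nonneg (Real.log_nonneg (mod_cast hN))) hA hY hL hR
    (card_legendreSum_neg_mul_le hG hK hKN happrox)

end NegativeSums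

section Density

open Finset Filter

variable {α : ℝ}

lemma eventually_rpow_le_mul_div_log {a δ : ℝ} (ha : a < 1) (hδ : 0 < δ) :
    ∀ᶠ N : ℕ in atTop, (N : ℝ) ^ a ≤ δ * (N / Real.log N) := by
  filter_upwards [tendsto_natCast_atTop_atTop.eventually
    ((isLittleO_log_rpow_atTop (sub_pos.2 ha)).def hδ), eventually_gt_atTop 1] with N hlog hN
  have hN0 : (0 : ℝ) < N := by positivity
  have hlog0 : 0 < Real.log N := Real.log_pos (mod_cast hN)
  rw [Real.norm_of_nonneg hlog0.le, Real.norm_of_nonneg (by positivity)] at hlog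
  rw [← mul_div_assoc, le_div_iff₀ hlog0]
  calc (N : ℝ) ^ a * Real.log N ≤ (N : ℝ) ^ a * (δ * (N : ℝ) ^ (1 - a)) := by gcongr
    _ = δ * ((N : ℝ) ^ a * (N : ℝ) ^ (1 - a)) := by ring
    _ = δ * N := by rw [← Real.rpow_add hN0, add_sub_cancel, Real.rpow_one]

lemma mul_log_two_div_log_sub_two_le_card_primes {N : ℕ} (hN : 2 ≤ N) :
    N / Real.log N * Real.log 2 - 2 ≤ #{p ∈ range (N + 1) | p.Prime} := by
  have hN2 : (2 : ℝ) ≤ N := mod_cast hN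
  have hlog : 0 < Real.log N := Real.log_pos (by linarith)
  have hlog_succ : Real.log (N + 1) ≤ 2 * Real.log N := by
    calc Real.log (N + 1) ≤ Real.log ((N : ℝ) ^ 2) := Real.log_le_log (by linarith) (by nlinarith)
      _ = 2 * Real.log N := by rw [Real.log_pow, Nat.cast_two]
  calc N / Real.log N * Real.log 2 - 2 = (N * Real.log 2 - 2 * Real.log N) / Real.log N := by
        field_simp
    _ ≤ (N * Real.log 2 - Real.log (N + 1)) / Real.log N := by gcongr
    _ ≤ Nat.primeCounting N := Chebyshev.pi_ge N
    _ = #{p ∈ range (N + 1) | p.Prime} := by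
        rw [Nat.primeCounting, Nat.primeCounting', Nat.count_eq_card_filter_range]

lemma card_primes_legendreSum_neg_le (α : ℝ) (N : ℕ) :
    (#{p ∈ range (N + 1) | p.Prime ∧ ¬ 0 ≤ legendreSum α p} : ℝ) ≤
      #{p ∈ largePrimes N 1 | legendreSum α p < 0} +
      #{p ∈ largePrimes N 3 | legendreSum α p < 0} + ((N : ℝ) ^ (0.95 : ℝ) + 2) := by
  have hsub : {p ∈ range (N + 1) | p.Prime ∧ ¬ 0 ≤ legendreSum α p} ⊆
      {p ∈ largePrimes N 1 | legendreSum α p < 0} ∪ {p ∈ largePrimes N 3 | legendreSum α p < 0} ∪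
        (range (⌊(N : ℝ) ^ (0.95 : ℝ)⌋₊ + 1) ∪ {2}) := by
    intro p hp
    simp only [mem_filter, mem_range_succ_iff, not_le] at hp
    obtain ⟨hpN, hprime, hneg⟩ := hp
    simp only [mem_union, mem_filter, mem_largePrimes, mem_range_succ_iff, mem_singleton]
    obtain hlarge | hsmall := lt_or_ge ((N : ℝ) ^ (0.95 : ℝ)) p
    · have := hprime.eq_two_or_odd
      obtain h | h | h : p = 2 ∨ p % 4 = 1 ∨ p % 4 = 3 := by omega
      · exact .inr (.inr h)
      · exact .inl (.inl ⟨⟨hpN, hprime, h, hlarge⟩, hneg⟩)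
      · exact .inl (.inr ⟨⟨hpN, hprime, h, hlarge⟩, hneg⟩)
    · exact .inr (.inl (Nat.le_floor hsmall))
  have hcard := (card_le_card hsub).trans ((card_union_le _ _).trans
    (add_le_add (card_union_le _ _) (card_union_le _ _)))
  rw [card_range, card_singleton] at hcard
  have hcardReal := Nat.cast_le (α := ℝ).2 hcard
  simp only [Nat.cast_add, Nat.cast_one] at hcardReal
  linarith [Nat.floor_le (show 0 ≤ (N : ℝ) ^ (0.95 : ℝ) by positivity)]

theorem eventually_card_primes_legendreSum_neg_le (hα : |α - 1 / 3| ≤ 2 / 10 ^ 6) :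
    ∀ᶠ N : ℕ in atTop, (#{p ∈ range (N + 1) | p.Prime ∧ ¬ 0 ≤ legendreSum α p} : ℝ) ≤
      1 / 2 * #{p ∈ range (N + 1) | p.Prime} := by
  filter_upwards [eventually_card_largePrimes_legendreSum_neg_le .one_mod_four hα,
    eventually_card_largePrimes_legendreSum_neg_le .three_mod_four hα,
    eventually_rpow_le_mul_div_log (show (0.95 : ℝ) < 1 by norm_num)
      (show (0 : ℝ) < 0.001 by norm_num),
    eventually_ge_atTop 2] with N hone hthree hsmall hN
  have hprimes := mul_log_two_div_log_sub_two_le_card_primes hN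
  have hone_le : 1 ≤ (N : ℝ) ^ (0.95 : ℝ) :=
    Real.one_le_rpow (mod_cast one_le_two.trans hN) (by norm_num)
  have hlog_two : N / Real.log N * 0.693 ≤ N / Real.log N * Real.log 2 := by
    have := Real.log_nonneg (show (1 : ℝ) ≤ N from mod_cast one_le_two.trans hN)
    gcongr
    linarith [Real.log_two_gt_d9]
  linarith [card_primes_legendreSum_neg_le α N]

end Density

end LegendreSum

/-- For every real `α` with `|α - 1/3| ≤ 2·10⁻⁶`, the inequality `L(α,p) ≥ 0`
holds for a set of primes of lower density at least `1/2`. -/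
theorem stmt_3 (α : ℝ) (hα : |α - 1 / 3| ≤ 2 / 10 ^ 6) :
    (1 : ℝ) / 2 ≤
      Filter.liminf (fun N : ℕ =>
        (((Finset.range (N + 1)).filter
            (fun p => p.Prime ∧ 0 ≤ legendreSum α p)).card : ℝ) /
          (((Finset.range (N + 1)).filter Nat.Prime).card : ℝ))
        Filter.atTop := by
  have hsplit (N : ℕ) := Finset.card_filter_add_card_filter_not
    (s := (Finset.range (N + 1)).filter Nat.Prime) (fun p ↦ 0 ≤ legendreSum α p)
  simp only [Finset.filter_filter] at hsplit
  refine Filter.le_liminf_of_le (Filter.IsBoundedUnder.isCoboundedUnder_ge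
    (Filter.isBoundedUnder_of ⟨1, fun N ↦ ?_⟩)) ?_
  · refine div_le_one_of_le₀ ?_ (Nat.cast_nonneg _)
    exact_mod_cast (Nat.le_add_right _ _).trans_eq (hsplit N)
  · filter_upwards [LegendreSum.eventually_card_primes_legendreSum_neg_le hα,
      Filter.eventually_ge_atTop 2] with N hneg hN
    have hprimes : 0 < ((Finset.range (N + 1)).filter Nat.Prime).card :=
      Finset.card_pos.2 ⟨2, by simp [Nat.prime_two]; omega⟩
    rw [le_div_iff₀ (mod_cast hprimes)]
    have hsplitReal := congrArg (Nat.cast (R := ℝ)) (hsplit N)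
    rw [Nat.cast_add] at hsplitReal
    linarith
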